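/- arXiv:1902.04054 — 5 statements merged into one kernel-verified Lean document; each statement's English description precedes it below -/
import Mathlib

section
/- Let U be a nonnegative real-valued random variable, and let C > 0 and p > 0. Then lim_{t→∞} t^p · P(U > t) = C if and only if lim_{λ→∞} λ^p · E[exp(-λ/U)] = C·Γ(1+p), where Γ is the Gamma function. -/
open MeasureTheory ProbabilityTheory Filter

/-!
Write `Z_λ = exp(-λ/U)`, read as `0` on `{U = 0}`, and `a(t) = t^p · P(U > t)`.

*Abelian direction.* By Fubini, `E[Z_λ] = ∫_{y>0} exp(-y) P(U > λ/y) dy`, hence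
`λ^p E[Z_λ] = ∫_{y>0} exp(-y) y^p a(λ/y) dy`. The function `a` is bounded on `(0, ∞)`, and
dominated convergence gives the limit `C Γ(1+p)`.

*Tauberian direction* (Karamata's method). Since `Z_λ^(k+1) = Z_{(k+1)λ}`, the hypothesis gives
`λ^p E[q(Z_λ) Z_λ] → C p ∫_{y>0} q(exp(-y)) exp(-y) y^(p-1) dy` first for monomials `q`, then for
polynomials, and then, by Weierstrass approximation, for every continuous `q`. For `ε > 0` choose
`q` such that `x q(x)` is a continuous ramp, equal to `0` for `x ≤ exp(-(1+ε))` and to `1` for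
`x ≥ exp(-1)`. Then `1_{U > λ} ≤ q(Z_λ) Z_λ ≤ 1_{U > λ/(1+ε)}`, while the limit lies between `C` and
`C (1+ε)^p`. This yields `a(λ) ≤ C (1+ε)^p + o(1)` and `a(λ) ≥ C (1+ε)^(-p) - o(1)`; let `ε → 0`.
-/

namespace ExpInvTauberian

open Set

variable {Ω : Type*}

/-- The random variable `exp(-lam/U)`, set to `0` where `U = 0`. -/
noncomputable def expInv (U : Ω → ℝ) (lam : ℝ) (ω : Ω) : ℝ :=
  if U ω = 0 then 0 else Real.exp (-(lam / U ω))

lemma expInv_nonneg (U : Ω → ℝ) (lam : ℝ) (ω : Ω) : 0 ≤ expInv U lam ω := by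
  unfold expInv; split_ifs <;> positivity

lemma expInv_le_one {U : Ω → ℝ} (hnn : ∀ ω, 0 ≤ U ω) {lam : ℝ} (hl : 0 ≤ lam) (ω : Ω) :
    expInv U lam ω ≤ 1 := by
  unfold expInv
  split_ifs
  · exact zero_le_one
  · exact Real.exp_le_one_iff.2 (neg_nonpos.2 (div_nonneg hl (hnn ω)))

lemma expInv_mem_Icc {U : Ω → ℝ} (hnn : ∀ ω, 0 ≤ U ω) {lam : ℝ} (hl : 0 ≤ lam) (ω : Ω) :
    expInv U lam ω ∈ Icc (0 : ℝ) 1 :=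
  ⟨expInv_nonneg U lam ω, expInv_le_one hnn hl ω⟩

lemma expInv_pow (U : Ω → ℝ) (lam : ℝ) (k : ℕ) (ω : Ω) :
    expInv U lam ω ^ k * expInv U lam ω = expInv U ((k + 1 : ℝ) * lam) ω := by
  unfold expInv
  split_ifs
  · simp
  · rw [← pow_succ, ← Real.exp_nat_mul]
    congr 1
    push_cast
    ring

/-- `exp(-c) < exp(-lam/U)` means `U > lam/c`; on `{U = 0}` both sides fail. -/
lemma exp_neg_lt_expInv {U : Ω → ℝ} (hnn : ∀ ω, 0 ≤ U ω) {lam c : ℝ} (hl : 0 < lam)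
    (hc : 0 < c) (ω : Ω) : Real.exp (-c) < expInv U lam ω ↔ lam / c < U ω := by
  unfold expInv
  split_ifs with h
  · rw [h]
    exact iff_of_false (not_lt.2 (Real.exp_pos _).le) (not_lt.2 (by positivity))
  · have hpos : 0 < U ω := lt_of_le_of_ne (hnn ω) (Ne.symm h)
    rw [Real.exp_lt_exp, neg_lt_neg_iff, div_lt_iff₀ hpos, div_lt_iff₀ hc, mul_comm]

lemma expInv_eq_integral {U : Ω → ℝ} (hnn : ∀ ω, 0 ≤ U ω) {lam : ℝ} (hl : 0 < lam) (ω : Ω) :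
    expInv U lam ω = ∫ y in Ioi (0 : ℝ), {ω | lam / y < U ω}.indicator 1 ω * Real.exp (-y) := by
  unfold expInv
  split_ifs with h
  · symm
    refine setIntegral_eq_zero_of_forall_eq_zero fun y hy => ?_
    have : 0 < lam / y := div_pos hl hy
    rw [indicator_of_notMem, zero_mul]
    simp only [mem_ofPred_eq, h, not_lt]
    exact this.le
  · have hpos : 0 < U ω := lt_of_le_of_ne (hnn ω) (Ne.symm h)
    rw [← integral_exp_neg_Ioi (lam / U ω), ← integral_indicator measurableSet_Ioi,
      ← integral_indicator measurableSet_Ioi]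
    congr 1
    ext y
    by_cases hy : 0 < y
    · have : lam / y < U ω ↔ lam / U ω < y := by
        rw [div_lt_iff₀ hpos, div_lt_iff₀ hy, mul_comm]
      simp [indicator, hy, this]
    · have : ¬ lam / U ω < y := fun h' => hy ((div_pos hl hpos).trans h')
      simp [indicator, hy, this]

variable [MeasurableSpace Ω]

lemma measurable_expInv {U : Ω → ℝ} (hU : Measurable U) (lam : ℝ) :
    Measurable (expInv U lam) := by
  unfold expInv
  exact Measurable.ite (hU (measurableSet_singleton 0)) measurable_const
    (Real.measurable_exp.comp (measurable_const.div hU).neg)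

lemma integrable_expInv {μ : Measure Ω} [IsProbabilityMeasure μ] {U : Ω → ℝ}
    (hU : Measurable U) (hnn : ∀ ω, 0 ≤ U ω) {lam : ℝ} (hl : 0 ≤ lam) :
    Integrable (expInv U lam) μ := by
  refine Integrable.of_bound (measurable_expInv hU lam).aestronglyMeasurable 1
    (Eventually.of_forall fun ω => ?_)
  rw [Real.norm_of_nonneg (expInv_nonneg U lam ω)]
  exact expInv_le_one hnn hl ω

/-! ### The Abelian direction -/

lemma integral_expInv {μ : Measure Ω} [IsProbabilityMeasure μ] {U : Ω → ℝ}
    (hU : Measurable U) (hnn : ∀ ω, 0 ≤ U ω) {lam : ℝ} (hl : 0 < lam) :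
    ∫ ω, expInv U lam ω ∂μ = ∫ y in Ioi (0 : ℝ), μ.real {ω | lam / y < U ω} * Real.exp (-y) := by
  simp_rw [expInv_eq_integral hnn hl]
  rw [integral_integral_swap]
  · refine setIntegral_congr_fun measurableSet_Ioi fun y _ => ?_
    rw [integral_mul_const, integral_indicator_one (measurableSet_lt measurable_const hU)]
  · have hexp : Integrable (fun y : ℝ => Real.exp (-y)) (volume.restrict (Ioi 0)) :=
      integrableOn_exp_neg_Ioi 0
    have hm : MeasurableSet {q : Ω × ℝ | lam / q.2 < U q.1} :=
      measurableSet_lt (measurable_const.div measurable_snd) (hU.comp measurable_fst)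
    have := (hexp.comp_snd μ).indicator hm
    refine this.congr (Eventually.of_forall fun q => ?_)
    by_cases h : lam / q.2 < U q.1 <;> simp [Function.uncurry, indicator, h]

lemma measurable_tail {μ : Measure Ω} [IsProbabilityMeasure μ] (U : Ω → ℝ) :
    Measurable fun t : ℝ => μ.real {ω | t < U ω} := by
  refine Antitone.measurable fun s t hst => measureReal_mono fun ω hω => ?_
  exact lt_of_le_of_lt hst hω

theorem abelian {μ : Measure Ω} [IsProbabilityMeasure μ] {U : Ω → ℝ}
    (hU : Measurable U) (hnn : ∀ ω, 0 ≤ U ω) {C p : ℝ} (hp : 0 < p)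
    (h : Tendsto (fun t : ℝ => t ^ p * μ.real {ω | t < U ω}) atTop (nhds C)) :
    Tendsto (fun lam : ℝ => lam ^ p * ∫ ω, expInv U lam ω ∂μ) atTop
      (nhds (C * Real.Gamma (1 + p))) := by
  set a : ℝ → ℝ := fun t => t ^ p * μ.real {ω | t < U ω} with ha
  have ha0 : ∀ t, 0 < t → 0 ≤ a t := fun t ht => by simp only [ha]; positivity
  -- Large `t` are controlled by convergence, small `t` by `P(U > t) ≤ 1`.
  obtain ⟨M, hM⟩ : ∃ M, ∀ t, 0 < t → a t ≤ M := by
    obtain ⟨T, hT⟩ := eventually_atTop.1 (h.eventually (gt_mem_nhds (lt_add_one C)))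
    refine ⟨max (C + 1) (T ^ p), fun t ht => ?_⟩
    rcases le_total T t with hTt | hTt
    · exact le_max_of_le_left (hT t hTt).le
    · refine le_max_of_le_right ?_
      calc a t ≤ t ^ p * 1 := by simp only [ha]; gcongr; exact measureReal_le_one
        _ ≤ T ^ p := by rw [mul_one]; gcongr
  have key : ∀ lam : ℝ, 0 < lam → lam ^ p * ∫ ω, expInv U lam ω ∂μ =
      ∫ y in Ioi (0 : ℝ), a (lam / y) * (Real.exp (-y) * y ^ (1 + p - 1)) := by
    intro lam hl
    rw [integral_expInv hU hnn hl, ← integral_const_mul]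
    refine setIntegral_congr_fun measurableSet_Ioi fun y hy => ?_
    have hy' : (0 : ℝ) < y := hy
    have : (0 : ℝ) < y ^ p := by positivity
    simp only [ha]
    rw [Real.div_rpow hl.le hy'.le, add_sub_cancel_left]
    field_simp
  have hG : IntegrableOn (fun y : ℝ => Real.exp (-y) * y ^ (1 + p - 1)) (Ioi 0) :=
    Real.GammaIntegral_convergent (by linarith)
  rw [Real.Gamma_eq_integral (by linarith), ← integral_const_mul]
  refine Tendsto.congr' ((eventually_gt_atTop 0).mono fun lam hl => (key lam hl).symm) ?_
  refine tendsto_integral_filter_of_dominated_convergence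
    (fun y => M * (Real.exp (-y) * y ^ (1 + p - 1))) ?_ ?_ (hG.const_mul M) ?_
  · refine Eventually.of_forall fun lam => ?_
    refine AEStronglyMeasurable.mul ?_ hG.aestronglyMeasurable
    have : Measurable a := (measurable_id.pow_const p).mul (measurable_tail U)
    exact (this.comp (measurable_const.div measurable_id)).aestronglyMeasurable
  · filter_upwards [eventually_gt_atTop 0] with lam hl
    refine (ae_restrict_iff' measurableSet_Ioi).2 (Eventually.of_forall fun y hy => ?_)
    have hy' : (0 : ℝ) < y := hy
    rw [Real.norm_of_nonneg (mul_nonneg (ha0 _ (div_pos hl hy')) (by positivity))]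
    gcongr
    exact hM _ (div_pos hl hy')
  · refine (ae_restrict_iff' measurableSet_Ioi).2 (Eventually.of_forall fun y hy => ?_)
    exact (h.comp (tendsto_id.atTop_div_const hy)).mul_const _

/-! ### Karamata's convergence for continuous test functions -/

/-- The density `exp(-y) y^(p-1)` of the Gamma integral. -/
noncomputable def gammaWeight (p y : ℝ) : ℝ := Real.exp (-y) * y ^ (p - 1)

lemma integrableOn_gammaWeight {p : ℝ} (hp : 0 < p) : IntegrableOn (gammaWeight p) (Ioi 0) :=
  Real.GammaIntegral_convergent hp

lemma gammaWeight_nonneg (p : ℝ) {y : ℝ} (hy : 0 < y) : 0 ≤ gammaWeight p y := by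
  unfold gammaWeight; positivity

lemma exp_neg_mem_Icc {y : ℝ} (hy : 0 < y) : Real.exp (-y) ∈ Icc (0 : ℝ) 1 :=
  ⟨(Real.exp_pos _).le, Real.exp_le_one_iff.2 (by linarith)⟩

lemma integrableOn_mul_gammaWeight {p : ℝ} (hp : 0 < p) {g : ℝ → ℝ} (hg : Continuous g) :
    IntegrableOn (fun y => g (Real.exp (-y)) * gammaWeight p y) (Ioi 0) := by
  obtain ⟨B, hB⟩ := isCompact_Icc.exists_bound_of_continuousOn (hg.continuousOn (s := Icc 0 1))
  refine Integrable.bdd_mul (c := B) (integrableOn_gammaWeight hp) ?_ ?_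
  · exact (hg.comp (Real.continuous_exp.comp continuous_neg)).aestronglyMeasurable
  · exact (ae_restrict_iff' measurableSet_Ioi).2
      (Eventually.of_forall fun y hy => hB _ (exp_neg_mem_Icc hy))

lemma integrable_mul_expInv {μ : Measure Ω} [IsProbabilityMeasure μ] {U : Ω → ℝ}
    (hU : Measurable U) (hnn : ∀ ω, 0 ≤ U ω) {lam : ℝ} (hl : 0 ≤ lam) {g : ℝ → ℝ}
    (hg : Continuous g) : Integrable (fun ω => g (expInv U lam ω) * expInv U lam ω) μ := by
  obtain ⟨B, hB⟩ := isCompact_Icc.exists_bound_of_continuousOn (hg.continuousOn (s := Icc 0 1))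
  refine Integrable.bdd_mul (c := B) (integrable_expInv hU hnn hl) ?_ ?_
  · exact (hg.measurable.comp (measurable_expInv hU lam)).aestronglyMeasurable
  · exact Eventually.of_forall fun ω => hB _ (expInv_mem_Icc hnn hl ω)

/-- The limit is `C p n^(-p) Γ(p)` with `n = k + 1`, because `Z_λ^n = Z_{nλ}`. -/
lemma tendsto_monomial {μ : Measure Ω} {U : Ω → ℝ} {C p : ℝ} (hp : 0 < p)
    (h : Tendsto (fun lam : ℝ => lam ^ p * ∫ ω, expInv U lam ω ∂μ) atTop
      (nhds (C * Real.Gamma (1 + p)))) (k : ℕ) :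
    Tendsto (fun lam : ℝ => lam ^ p * ∫ ω, expInv U lam ω ^ k * expInv U lam ω ∂μ) atTop
      (nhds (C * p * ∫ y in Ioi (0 : ℝ), Real.exp (-y) ^ k * gammaWeight p y)) := by
  have hk : (0 : ℝ) < k + 1 := by positivity
  have hlim : C * p * ∫ y in Ioi (0 : ℝ), Real.exp (-y) ^ k * gammaWeight p y =
      (1 / (k + 1 : ℝ)) ^ p * (C * Real.Gamma (1 + p)) := by
    have : ∫ y in Ioi (0 : ℝ), Real.exp (-y) ^ k * gammaWeight p y =
        ∫ y in Ioi (0 : ℝ), y ^ (p - 1) * Real.exp (-((k + 1 : ℝ) * y)) := by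
      congr 1
      ext y
      rw [gammaWeight, ← mul_assoc, ← pow_succ, ← Real.exp_nat_mul, mul_comm]
      congr 2
      push_cast
      ring
    rw [this, Real.integral_rpow_mul_exp_neg_mul_Ioi hp hk, add_comm 1 p,
      Real.Gamma_add_one hp.ne']
    ring
  rw [hlim]
  have h1 := (h.comp (tendsto_id.const_mul_atTop hk)).const_mul ((1 / (k + 1 : ℝ)) ^ p)
  refine h1.congr' ?_
  filter_upwards [eventually_gt_atTop 0] with lam hl
  simp only [Function.comp, id, expInv_pow]
  rw [Real.mul_rpow hk.le hl.le, Real.div_rpow zero_le_one hk.le, Real.one_rpow]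
  have : (0 : ℝ) < (k + 1 : ℝ) ^ p := by positivity
  field_simp

lemma tendsto_polynomial {μ : Measure Ω} [IsProbabilityMeasure μ] {U : Ω → ℝ}
    (hU : Measurable U) (hnn : ∀ ω, 0 ≤ U ω) {C p : ℝ} (hp : 0 < p)
    (h : Tendsto (fun lam : ℝ => lam ^ p * ∫ ω, expInv U lam ω ∂μ) atTop
      (nhds (C * Real.Gamma (1 + p)))) (q : Polynomial ℝ) :
    Tendsto (fun lam : ℝ => lam ^ p * ∫ ω, q.eval (expInv U lam ω) * expInv U lam ω ∂μ) atTop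
      (nhds (C * p * ∫ y in Ioi (0 : ℝ), q.eval (Real.exp (-y)) * gammaWeight p y)) := by
  induction q using Polynomial.induction_on' with
  | add q r hq hr =>
    have e := hq.add hr
    rw [← mul_add, ← integral_add (integrableOn_mul_gammaWeight hp q.continuous)
      (integrableOn_mul_gammaWeight hp r.continuous)] at e
    simp only [Polynomial.eval_add, add_mul]
    refine e.congr' ?_
    filter_upwards [eventually_ge_atTop 0] with lam hl
    rw [← mul_add, ← integral_add (integrable_mul_expInv hU hnn hl q.continuous)
      (integrable_mul_expInv hU hnn hl r.continuous)]
  | monomial k c =>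
    simp only [Polynomial.eval_monomial, mul_assoc c, integral_const_mul]
    have e := (tendsto_monomial hp h k).const_mul c
    rw [mul_left_comm] at e
    exact e.congr fun lam => by ring

lemma tendsto_continuous {μ : Measure Ω} [IsProbabilityMeasure μ] {U : Ω → ℝ}
    (hU : Measurable U) (hnn : ∀ ω, 0 ≤ U ω) {C p : ℝ} (hC : 0 < C) (hp : 0 < p)
    (h : Tendsto (fun lam : ℝ => lam ^ p * ∫ ω, expInv U lam ω ∂μ) atTop
      (nhds (C * Real.Gamma (1 + p)))) {g : ℝ → ℝ} (hg : Continuous g) :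
    Tendsto (fun lam : ℝ => lam ^ p * ∫ ω, g (expInv U lam ω) * expInv U lam ω ∂μ) atTop
      (nhds (C * p * ∫ y in Ioi (0 : ℝ), g (Real.exp (-y)) * gammaWeight p y)) := by
  set K : ℝ := C * Real.Gamma (1 + p) with hK
  have hKpos : 0 < K := mul_pos hC (Real.Gamma_pos_of_pos (by linarith))
  have hW : C * p * ∫ y in Ioi (0 : ℝ), gammaWeight p y = K := by
    unfold gammaWeight
    rw [← Real.Gamma_eq_integral hp, hK, add_comm 1 p, Real.Gamma_add_one hp.ne', mul_assoc]
  rw [Metric.tendsto_nhds]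
  intro ε hε
  -- Replacing `g` by `q` costs at most `δ (K + 1)` before the limit and `δ K` in the limit.
  set δ : ℝ := ε / (2 * K + 2) with hδ
  have hδpos : 0 < δ := by positivity
  have hδε : δ * (K + 1) + δ * K < ε := by
    have : δ * (2 * K + 2) = ε := by rw [hδ]; field_simp
    nlinarith
  obtain ⟨q, hq⟩ := exists_polynomial_near_of_continuousOn 0 1 g hg.continuousOn δ hδpos
  have hJ : |C * p * (∫ y in Ioi (0 : ℝ), q.eval (Real.exp (-y)) * gammaWeight p y) -
      C * p * ∫ y in Ioi (0 : ℝ), g (Real.exp (-y)) * gammaWeight p y| ≤ δ * K := by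
    rw [← mul_sub, ← integral_sub (integrableOn_mul_gammaWeight hp q.continuous)
      (integrableOn_mul_gammaWeight hp hg), abs_mul, abs_of_pos (mul_pos hC hp), ← hW,
      mul_left_comm δ, ← integral_const_mul δ]
    gcongr
    rw [← Real.norm_eq_abs]
    refine norm_integral_le_of_norm_le ((integrableOn_gammaWeight hp).const_mul δ)
      ((ae_restrict_iff' measurableSet_Ioi).2 (Eventually.of_forall fun y hy => ?_))
    rw [← sub_mul, norm_mul, Real.norm_of_nonneg (gammaWeight_nonneg p hy)]
    exact mul_le_mul_of_nonneg_right (hq _ (exp_neg_mem_Icc hy)).le (gammaWeight_nonneg p hy)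
  have hN : ∀ lam : ℝ, 0 ≤ lam →
      |lam ^ p * (∫ ω, q.eval (expInv U lam ω) * expInv U lam ω ∂μ) -
        lam ^ p * ∫ ω, g (expInv U lam ω) * expInv U lam ω ∂μ| ≤
      δ * (lam ^ p * ∫ ω, expInv U lam ω ∂μ) := by
    intro lam hl
    rw [← mul_sub, ← integral_sub (integrable_mul_expInv hU hnn hl q.continuous)
      (integrable_mul_expInv hU hnn hl hg), abs_mul, abs_of_nonneg (Real.rpow_nonneg hl p),
      mul_left_comm δ, ← integral_const_mul δ]
    gcongr
    rw [← Real.norm_eq_abs]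
    refine norm_integral_le_of_norm_le ((integrable_expInv hU hnn hl).const_mul δ)
      (Eventually.of_forall fun ω => ?_)
    rw [← sub_mul, norm_mul, Real.norm_of_nonneg (expInv_nonneg U lam ω)]
    exact mul_le_mul_of_nonneg_right (hq _ (expInv_mem_Icc hnn hl ω)).le (expInv_nonneg U lam ω)
  have hpoly := Metric.tendsto_nhds.1 (tendsto_polynomial hU hnn hp h q) _ (sub_pos.2 hδε)
  filter_upwards [hpoly, h.eventually (gt_mem_nhds (lt_add_one K)), eventually_ge_atTop 0]
    with lam h1 h2 hl
  have h3 := (hN lam hl).trans (mul_le_mul_of_nonneg_left h2.le hδpos.le)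
  rw [Real.dist_eq] at h1 ⊢
  rw [abs_le] at hJ h3
  rw [abs_lt] at h1 ⊢
  constructor <;> linarith [h1.1, h1.2, h3.1, h3.2, hJ.1, hJ.2]

/-! ### The Tauberian direction -/

/-- The continuous ramp, equal to `0` for `x ≤ exp(-(1+ε))` and to `1` for `x ≥ exp(-1)`. -/
noncomputable def ramp (ε x : ℝ) : ℝ :=
  max 0 (min 1 ((x - Real.exp (-(1 + ε))) / (Real.exp (-1) - Real.exp (-(1 + ε)))))

/-- The continuous function `ramp ε x / x`; the denominator is truncated below where the ramp
vanishes. -/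
noncomputable def rampDiv (ε x : ℝ) : ℝ := ramp ε x / max x (Real.exp (-(1 + ε)))

lemma ramp_nonneg (ε x : ℝ) : 0 ≤ ramp ε x := le_max_left _ _

lemma ramp_le_one (ε x : ℝ) : ramp ε x ≤ 1 := max_le zero_le_one (min_le_left _ _)

lemma exp_gap_pos {ε : ℝ} (hε : 0 < ε) : 0 < Real.exp (-1) - Real.exp (-(1 + ε)) :=
  sub_pos.2 (Real.exp_lt_exp.2 (by linarith))

lemma ramp_eq_zero {ε x : ℝ} (hε : 0 < ε) (hx : x ≤ Real.exp (-(1 + ε))) : ramp ε x = 0 :=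
  max_eq_left ((min_le_right _ _).trans
    (div_nonpos_of_nonpos_of_nonneg (by linarith) (exp_gap_pos hε).le))

lemma ramp_eq_one {ε x : ℝ} (hε : 0 < ε) (hx : Real.exp (-1) ≤ x) : ramp ε x = 1 := by
  unfold ramp
  rw [min_eq_left, max_eq_right zero_le_one]
  rw [le_div_iff₀ (exp_gap_pos hε)]
  linarith

lemma continuous_rampDiv (ε : ℝ) : Continuous (rampDiv ε) := by
  unfold rampDiv ramp
  refine Continuous.div (by fun_prop) (by fun_prop) fun x => ?_
  exact ((Real.exp_pos _).trans_le (le_max_right _ _)).ne'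

lemma rampDiv_mul {ε : ℝ} (hε : 0 < ε) (x : ℝ) : rampDiv ε x * x = ramp ε x := by
  unfold rampDiv
  rcases le_total x (Real.exp (-(1 + ε))) with h | h
  · simp [ramp_eq_zero hε h]
  · rw [max_eq_left h, div_mul_cancel₀ _ ((Real.exp_pos _).trans_le h).ne']

lemma setIntegral_rpow {p c : ℝ} (hp : 0 < p) (hc : 0 ≤ c) :
    IntegrableOn (fun y : ℝ => y ^ (p - 1)) (Ioc 0 c) ∧
      ∫ y in Ioc (0 : ℝ) c, y ^ (p - 1) = c ^ p / p := by
  refine ⟨(intervalIntegrable_iff_integrableOn_Ioc_of_le hc).1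
    (intervalIntegral.intervalIntegrable_rpow' (by linarith)), ?_⟩
  rw [← intervalIntegral.integral_of_le hc, integral_rpow (Or.inl (by linarith)), sub_add_cancel,
    Real.zero_rpow hp.ne', sub_zero]

/-- The limit functional at the ramp is squeezed between its values at `1_{y ≤ 1}` and
`1_{y ≤ 1 + ε}`. -/
lemma rampDiv_limit_bounds {C p ε : ℝ} (hC : 0 < C) (hp : 0 < p) (hε : 0 < ε) :
    C ≤ C * p * (∫ y in Ioi (0 : ℝ), rampDiv ε (Real.exp (-y)) * gammaWeight p y) ∧
    C * p * (∫ y in Ioi (0 : ℝ), rampDiv ε (Real.exp (-y)) * gammaWeight p y)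
      ≤ C * (1 + ε) ^ p := by
  have hint := integrableOn_mul_gammaWeight hp (continuous_rampDiv ε)
  have heq : ∀ y, rampDiv ε (Real.exp (-y)) * gammaWeight p y =
      ramp ε (Real.exp (-y)) * y ^ (p - 1) := fun y => by
    rw [gammaWeight, ← mul_assoc, rampDiv_mul hε]
  simp only [heq] at hint ⊢
  set I := ∫ y in Ioi (0 : ℝ), ramp ε (Real.exp (-y)) * y ^ (p - 1) with hI
  obtain ⟨hi1, hv1⟩ := setIntegral_rpow hp zero_le_one
  obtain ⟨hi2, hv2⟩ := setIntegral_rpow hp (by linarith : 0 ≤ 1 + ε)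
  have hlow : 1 / p ≤ I := by
    rw [← Real.one_rpow p, ← hv1, hI]
    calc ∫ y in Ioc (0 : ℝ) 1, y ^ (p - 1)
        = ∫ y in Ioc (0 : ℝ) 1, ramp ε (Real.exp (-y)) * y ^ (p - 1) := by
          refine setIntegral_congr_fun measurableSet_Ioc fun y hy => ?_
          rw [ramp_eq_one hε (Real.exp_le_exp.2 (by linarith [hy.2])), one_mul]
      _ ≤ _ := by
          refine setIntegral_mono_set hint ?_ (Eventually.of_forall fun y hy => hy.1)
          refine (ae_restrict_iff' measurableSet_Ioi).2 (Eventually.of_forall fun y hy => ?_)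
          exact mul_nonneg (ramp_nonneg _ _) (Real.rpow_nonneg (le_of_lt hy) _)
  have hupp : I ≤ (1 + ε) ^ p / p := by
    rw [← hv2, hI]
    calc ∫ y in Ioi (0 : ℝ), ramp ε (Real.exp (-y)) * y ^ (p - 1)
        = ∫ y in Ioc (0 : ℝ) (1 + ε), ramp ε (Real.exp (-y)) * y ^ (p - 1) := by
          refine setIntegral_eq_of_subset_of_forall_sdiff_eq_zero measurableSet_Ioi
            (fun y hy => hy.1) fun y hy => ?_
          have : 1 + ε < y := by
            by_contra hcon
            exact hy.2 ⟨hy.1, not_lt.1 hcon⟩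
          rw [ramp_eq_zero hε (Real.exp_le_exp.2 (by linarith)), zero_mul]
      _ ≤ _ := by
          refine setIntegral_mono_on (hint.mono_set fun y hy => hy.1) hi2 measurableSet_Ioc
            fun y hy => ?_
          exact mul_le_of_le_one_left (Real.rpow_nonneg hy.1.le _) (ramp_le_one _ _)
  constructor
  · calc C = C * p * (1 / p) := by field_simp
      _ ≤ _ := by gcongr
  · calc C * p * I ≤ C * p * ((1 + ε) ^ p / p) := by gcongr
      _ = _ := by field_simp

lemma tail_le_integral_ramp {μ : Measure Ω} [IsProbabilityMeasure μ] {U : Ω → ℝ}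
    (hU : Measurable U) (hnn : ∀ ω, 0 ≤ U ω) {lam ε : ℝ} (hl : 0 < lam) (hε : 0 < ε) :
    μ.real {ω | lam < U ω} ≤ ∫ ω, rampDiv ε (expInv U lam ω) * expInv U lam ω ∂μ ∧
    ∫ ω, rampDiv ε (expInv U lam ω) * expInv U lam ω ∂μ ≤ μ.real {ω | lam / (1 + ε) < U ω} := by
  have hint := integrable_mul_expInv (μ := μ) hU hnn hl.le (continuous_rampDiv ε)
  simp only [rampDiv_mul hε] at hint ⊢
  have hm : ∀ t : ℝ, MeasurableSet {ω | t < U ω} := fun t => measurableSet_lt measurable_const hU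
  have hi : ∀ t : ℝ, Integrable ({ω | t < U ω}.indicator (1 : Ω → ℝ)) μ := fun t =>
    (integrable_const (1 : ℝ)).indicator (hm t)
  rw [← integral_indicator_one (hm lam), ← integral_indicator_one (hm (lam / (1 + ε)))]
  constructor
  · refine integral_mono (hi _) hint fun ω => ?_
    refine indicator_le' (fun ω hω => ?_) (fun ω _ => ramp_nonneg _ _) ω
    have := (exp_neg_lt_expInv hnn hl one_pos ω).2 (by rw [div_one]; exact hω)
    exact (ramp_eq_one hε this.le).ge
  · refine integral_mono hint (hi _) fun ω => ?_
    by_cases hω : lam / (1 + ε) < U ω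
    · rw [indicator_of_mem (by exact hω)]
      exact ramp_le_one _ _
    · rw [indicator_of_notMem (by exact hω)]
      refine (ramp_eq_zero hε (not_lt.1 fun hcon => hω ?_)).le
      exact (exp_neg_lt_expInv hnn hl (by linarith) ω).1 hcon

theorem tauberian {μ : Measure Ω} [IsProbabilityMeasure μ] {U : Ω → ℝ}
    (hU : Measurable U) (hnn : ∀ ω, 0 ≤ U ω) {C p : ℝ} (hC : 0 < C) (hp : 0 < p)
    (h : Tendsto (fun lam : ℝ => lam ^ p * ∫ ω, expInv U lam ω ∂μ) atTop
      (nhds (C * Real.Gamma (1 + p)))) :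
    Tendsto (fun t : ℝ => t ^ p * μ.real {ω | t < U ω}) atTop (nhds C) := by
  have hcont : Tendsto (fun ε : ℝ => (1 + ε) ^ p) (nhdsWithin 0 (Ioi 0)) (nhds 1) := by
    have : ContinuousAt (fun ε : ℝ => (1 + ε) ^ p) 0 :=
      ContinuousAt.rpow_const (by fun_prop) (Or.inl (by norm_num))
    have h2 := this.tendsto
    simp only [add_zero, Real.one_rpow] at h2
    exact h2.mono_left nhdsWithin_le_nhds
  refine tendsto_order.2 ⟨fun c hc => ?_, fun c hc => ?_⟩
  · have h1 : Tendsto (fun ε : ℝ => c * (1 + ε) ^ p) (nhdsWithin 0 (Ioi 0)) (nhds (c * 1)) :=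
      hcont.const_mul c
    obtain ⟨ε, hεC, hε⟩ := ((h1.eventually (gt_mem_nhds (by linarith : c * 1 < C))).and
      self_mem_nhdsWithin).exists
    have hε' : 0 < ε := hε
    have h1ε : 0 < 1 + ε := by linarith
    have hlt := hεC.trans_le (rampDiv_limit_bounds hC hp hε').1
    have hev := (tendsto_continuous hU hnn hC hp h (continuous_rampDiv ε)).eventually
      (lt_mem_nhds hlt)
    -- The upper bound of the ramp at `(1 + ε) t` involves exactly the tail at `t`.
    filter_upwards [(tendsto_id.const_mul_atTop h1ε).eventually hev, eventually_gt_atTop 0]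
      with t ht ht0
    simp only [id] at ht
    have hb := (tail_le_integral_ramp (μ := μ) hU hnn (mul_pos h1ε ht0) hε').2
    rw [mul_div_cancel_left₀ _ h1ε.ne'] at hb
    have hlt2 := ht.trans_le (mul_le_mul_of_nonneg_left hb (by positivity))
    rw [Real.mul_rpow h1ε.le ht0.le, mul_assoc, mul_comm c] at hlt2
    exact lt_of_mul_lt_mul_left hlt2 (by positivity)
  · have h1 : Tendsto (fun ε : ℝ => C * (1 + ε) ^ p) (nhdsWithin 0 (Ioi 0)) (nhds (C * 1)) :=
      hcont.const_mul C
    obtain ⟨ε, hεC, hε⟩ := ((h1.eventually (gt_mem_nhds (by linarith : C * 1 < c))).and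
      self_mem_nhdsWithin).exists
    have hε' : 0 < ε := hε
    have hlt := (rampDiv_limit_bounds hC hp hε').2.trans_lt hεC
    filter_upwards [(tendsto_continuous hU hnn hC hp h (continuous_rampDiv ε)).eventually
      (gt_mem_nhds hlt), eventually_gt_atTop 0] with t ht ht0
    exact (mul_le_mul_of_nonneg_left (tail_le_integral_ramp (μ := μ) hU hnn ht0 hε').1
      (by positivity)).trans_lt ht

end ExpInvTauberian

/-- For a nonnegative random variable `U`, `C > 0` and `p > 0`,
`t^p · P(U > t) → C` as `t → ∞` iff `λ^p · E[exp(-λ/U)] → C·Γ(1+p)` as `λ → ∞`,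
where `exp(-λ/U) := 0` on `{U = 0}`. -/
theorem stmt_0 {Ω : Type*} [MeasureSpace Ω] [IsProbabilityMeasure (ℙ : Measure Ω)]
    (U : Ω → ℝ) (hUmeas : Measurable U) (hUnn : ∀ ω, 0 ≤ U ω)
    (C p : ℝ) (hC : 0 < C) (hp : 0 < p) :
    Tendsto (fun t : ℝ => t ^ p * (ℙ {ω | U ω > t}).toReal) atTop (nhds C) ↔
      Tendsto
        (fun lam : ℝ =>
          lam ^ p * ∫ ω, (if U ω = 0 then 0 else Real.exp (-(lam / U ω))))
        atTop (nhds (C * Real.Gamma (1 + p))) :=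
  ⟨fun h => ExpInvTauberian.abelian hUmeas hUnn hp h,
    fun h => ExpInvTauberian.tauberian hUmeas hUnn hC hp h⟩
end

section
/- Let U be a nonnegative real-valued random variable and C > 0, q > 0. If lim_{t→∞} t^q · P(U > t) = C, then lim_{λ→0+} E[U^q exp(-λU)] / (-log λ) = C·q. -/
/-!
Write `G t = ℙ(U > t)`. For `λ > 0` the function `φ t = t ^ q * exp (-λ t)` vanishes at `0` and has
an integrable derivative on `(0, ∞)`, so Fubini gives `E[φ(U)] = ∫₀^∞ φ'(t) G(t) dt`
(`integral_eq_integral_deriv_mul_tail`).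

With `h t = t ^ q * G t → C` one has `φ'(t) G(t) = q h(t) e^{-λt} / t - λ e^{-λt} h(t)`. For
`1 < t ≤ 1/λ` the main part is `C q / t`, whose integral is exactly `C q (-log λ)`. The error
is controlled by an explicit function (`abs_deriv_mul_sub_le`) whose integral is at most
`q ε (-log λ) + K` with `K` not depending on `λ` (`exists_abs_integral_sub_le`), for any `ε > 0`.
Dividing by `-log λ → ∞` gives the limit.
-/

open MeasureTheory ProbabilityTheory Filter

section
open Set Topology

/-- The derivative of `t ↦ t ^ q * exp (-(l * t))` at `t > 0`. -/
noncomputable def derivRpowExp (q l t : ℝ) : ℝ :=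
  q * t ^ (q - 1) * Real.exp (-(l * t)) - l * (t ^ q * Real.exp (-(l * t)))

lemma hasDerivAt_rpow_mul_exp (q l : ℝ) {t : ℝ} (ht : 0 < t) :
    HasDerivAt (fun t : ℝ => t ^ q * Real.exp (-(l * t))) (derivRpowExp q l t) t := by
  have h1 : HasDerivAt (fun t : ℝ => t ^ q) (q * t ^ (q - 1)) t :=
    Real.hasDerivAt_rpow_const (Or.inl ht.ne')
  have h2 : HasDerivAt (fun t : ℝ => Real.exp (-(l * t))) (Real.exp (-(l * t)) * (-(l * 1))) t :=
    ((hasDerivAt_id t).const_mul l).neg.exp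
  refine (h1.mul h2).congr_deriv ?_
  unfold derivRpowExp
  ring

lemma integrableOn_derivRpowExp {q l : ℝ} (hq : 0 < q) (hl : 0 < l) :
    IntegrableOn (derivRpowExp q l) (Ioi 0) := by
  have key : ∀ s : ℝ, -1 < s →
      IntegrableOn (fun t : ℝ => t ^ s * Real.exp (-(l * t))) (Ioi 0) := by
    intro s hs
    have := integrableOn_rpow_mul_exp_neg_mul_rpow hs (zero_lt_one' ℝ) hl
    simpa [Real.rpow_one, neg_mul] using this
  have h1 := (key (q - 1) (by linarith)).const_mul q
  have h2 := (key q (by linarith)).const_mul l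
  refine (h1.sub h2).congr (Eventually.of_forall fun t => ?_)
  simp only [derivRpowExp, Pi.sub_apply]
  ring

lemma integral_derivRpowExp {q l u : ℝ} (hq : 0 < q) (hl : 0 < l) (hu : 0 ≤ u) :
    ∫ t in Ioi 0, (if t < u then derivRpowExp q l t else 0) = u ^ q * Real.exp (-(l * u)) := by
  have hI := integrableOn_derivRpowExp hq hl
  have h1 : ∫ t in (0 : ℝ)..u, derivRpowExp q l t = u ^ q * Real.exp (-(l * u)) := by
    rw [intervalIntegral.integral_eq_sub_of_hasDerivAt_of_le
      (f := fun t : ℝ => t ^ q * Real.exp (-(l * t))) hu]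
    · simp [Real.zero_rpow hq.ne']
    · exact ((Real.continuous_rpow_const hq.le).mul (by fun_prop)).continuousOn
    · intro t ht
      exact hasDerivAt_rpow_mul_exp q l ht.1
    · rw [intervalIntegrable_iff_integrableOn_Ioc_of_le hu]
      exact hI.mono_set Ioc_subset_Ioi_self
  rw [← h1, intervalIntegral.integral_of_le hu, integral_Ioc_eq_integral_Ioo]
  have : (fun t => if t < u then derivRpowExp q l t else 0)
      = (Iio u).indicator (derivRpowExp q l) := by
    ext t; simp [indicator]
  rw [this, setIntegral_indicator measurableSet_Iio, Ioi_inter_Iio]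

/-- Layer cake formula for `t ↦ t ^ q * exp (-(l * t))`, which is not monotone: the usual
nonnegativity of the derivative is replaced by its integrability. -/
lemma integral_eq_integral_deriv_mul_tail {Ω : Type*} [MeasurableSpace Ω] (μ : Measure Ω)
    [IsProbabilityMeasure μ] {U : Ω → ℝ} (hU : Measurable U) (hU0 : ∀ ω, 0 ≤ U ω)
    {q l : ℝ} (hq : 0 < q) (hl : 0 < l) :
    IntegrableOn (fun t => derivRpowExp q l t * (μ {ω | U ω > t}).toReal) (Ioi 0) ∧
    ∫ ω, U ω ^ q * Real.exp (-(l * U ω)) ∂μ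
      = ∫ t in Ioi 0, derivRpowExp q l t * (μ {ω | U ω > t}).toReal := by
  have hI := integrableOn_derivRpowExp hq hl
  have hms : MeasurableSet {p : ℝ × Ω | p.1 < U p.2} :=
    measurableSet_lt measurable_fst (hU.comp measurable_snd)
  have hprod : Integrable (Function.uncurry fun (t : ℝ) (ω : Ω) =>
      if t < U ω then derivRpowExp q l t else 0) ((volume.restrict (Ioi 0)).prod μ) := by
    have h := (Integrable.comp_fst hI μ).indicator hms
    refine h.congr (Eventually.of_forall fun p => ?_)
    simp [indicator, Function.uncurry]
  have hin : ∀ t : ℝ, ∫ ω, (if t < U ω then derivRpowExp q l t else 0) ∂μ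
      = derivRpowExp q l t * (μ {ω | U ω > t}).toReal := by
    intro t
    have : (fun ω => if t < U ω then derivRpowExp q l t else 0)
        = {ω | U ω > t}.indicator (fun _ => derivRpowExp q l t) := by
      ext ω; simp [indicator]
    rw [this, integral_indicator_const _ (measurableSet_lt measurable_const hU), smul_eq_mul,
      mul_comm]
    rfl
  constructor
  · have := hprod.integral_prod_left
    simp only [Function.uncurry, hin] at this
    exact this
  · calc ∫ ω, U ω ^ q * Real.exp (-(l * U ω)) ∂μ
        = ∫ ω, (∫ t in Ioi 0, (if t < U ω then derivRpowExp q l t else 0)) ∂μ := by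
          simp_rw [fun ω => integral_derivRpowExp hq hl (hU0 ω)]
      _ = ∫ t in Ioi 0, ∫ ω, (if t < U ω then derivRpowExp q l t else 0) ∂μ :=
          (integral_integral_swap hprod).symm
      _ = _ := by simp_rw [hin]

lemma exists_rpow_mul_le {G : ℝ → ℝ} {C q : ℝ} (hq : 0 < q) (hG1 : ∀ t, G t ≤ 1)
    (hlim : Tendsto (fun t : ℝ => t ^ q * G t) atTop (𝓝 C)) :
    ∃ M, 0 ≤ M ∧ ∀ t, 0 < t → t ^ q * G t ≤ M := by
  obtain ⟨T, hT⟩ := eventually_atTop.1 (hlim.eventually_lt_const (lt_add_one C))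
  refine ⟨max (max T 0 ^ q) (C + 1), le_max_of_le_left (by positivity), fun t ht => ?_⟩
  rcases le_total T t with h | h
  · exact le_max_of_le_right (hT t h).le
  · apply le_max_of_le_left
    calc t ^ q * G t ≤ t ^ q * 1 := by gcongr; exact hG1 t
      _ = t ^ q := mul_one _
      _ ≤ _ := Real.rpow_le_rpow ht.le (h.trans (le_max_left _ _)) hq.le

/-- Pointwise error when `φ' * G` is replaced by `C q / t` on `(1, 1 / l]` and by `0` elsewhere. -/
lemma abs_deriv_mul_sub_le {G : ℝ → ℝ} {C q l M T ε t : ℝ} (hC : 0 ≤ C) (hq : 0 < q)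
    (hG0 : 0 ≤ G t) (hG1 : G t ≤ 1) (hM0 : 0 ≤ M) (hM : t ^ q * G t ≤ M) (hε : 0 < ε)
    (hT : T < t → |t ^ q * G t - C| ≤ ε) (hl : 0 < l) (ht : 0 < t) :
    |derivRpowExp q l t * G t - (Ioc 1 (1 / l)).indicator (fun t => C * q * t⁻¹) t| ≤
      (Ioc 0 1).indicator (fun t => q * t ^ (q - 1)) t
        + (M + q * M) * (l * Real.exp (-(l * t)))
        + (Ioc 1 (1 / l)).indicator (fun t => q * ε * t⁻¹ + q * M * l) t
        + (Ioc 0 T).indicator (fun _ => q * (M + C)) t := by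
  have hE0 := Real.exp_pos (-(l * t))
  have hE1 : Real.exp (-(l * t)) ≤ 1 := by
    rw [Real.exp_le_one_iff]; nlinarith [mul_pos hl ht]
  have hE2 : 1 - l * t ≤ Real.exp (-(l * t)) := by
    linarith [Real.add_one_le_exp (-(l * t))]
  have hrp : t ^ (q - 1) = t ^ q * t⁻¹ := by
    rw [Real.rpow_sub_one ht.ne', div_eq_mul_inv]
  have hr0 : 0 ≤ t ^ (q - 1) := by positivity
  have htq : 0 ≤ t ^ q := by positivity
  have hi : 0 < t⁻¹ := inv_pos.2 ht
  have hh0 : 0 ≤ t ^ q * G t := by positivity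
  have hsplit : derivRpowExp q l t * G t
      = q * t ^ (q - 1) * G t * Real.exp (-(l * t))
        - (t ^ q * G t) * (l * Real.exp (-(l * t))) := by
    unfold derivRpowExp; ring
  rw [hsplit]
  set E := Real.exp (-(l * t)) with hE
  set h := t ^ q * G t with hh
  have hlE : 0 < l * E := by positivity
  have hsec : h * (l * E) ≤ M * (l * E) := by gcongr
  have hsec0 : 0 ≤ h * (l * E) := by positivity
  have hqM : 0 ≤ q * M * (l * E) := by positivity
  have hqME : 0 ≤ q * M * l := by positivity
  have hlast : 0 ≤ (Ioc 0 T).indicator (fun _ => q * (M + C)) t :=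
    indicator_nonneg (fun _ _ => by positivity) _
  have hmain : q * t ^ (q - 1) * G t * E = q * h * E * t⁻¹ := by rw [hrp, hh]; ring
  have hmain0 : 0 ≤ q * t ^ (q - 1) * G t * E := by positivity
  rcases le_or_gt t 1 with h1 | h1
  · -- near `0`, only `G ≤ 1` is used
    have m1 : t ∈ Ioc (0 : ℝ) 1 := ⟨ht, h1⟩
    have m2 : t ∉ Ioc (1 : ℝ) (1 / l) := fun hm => absurd hm.1 (not_lt.2 h1)
    rw [indicator_of_mem m1, indicator_of_notMem m2, indicator_of_notMem m2]
    have : q * t ^ (q - 1) * G t * E ≤ q * t ^ (q - 1) := by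
      calc q * t ^ (q - 1) * G t * E ≤ q * t ^ (q - 1) * 1 * 1 := by gcongr
        _ = _ := by ring
    rw [abs_le]
    constructor <;> nlinarith [mul_nonneg hq.le hr0]
  · have m1 : t ∉ Ioc (0 : ℝ) 1 := fun hm => absurd hm.2 (not_le.2 h1)
    rw [indicator_of_notMem m1, hmain]
    rcases le_or_gt t (1 / l) with h2 | h2
    · have m2 : t ∈ Ioc (1 : ℝ) (1 / l) := ⟨h1, h2⟩
      rw [indicator_of_mem m2, indicator_of_mem m2]
      have hdiff : q * |h - C| * t⁻¹ ≤
          q * ε * t⁻¹ + (Ioc 0 T).indicator (fun _ => q * (M + C)) t := by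
        rcases le_or_gt t T with h3 | h3
        · rw [indicator_of_mem (show t ∈ Ioc 0 T from ⟨ht, h3⟩)]
          have ha : |h - C| ≤ M + C := by
            rw [abs_le]; constructor <;> linarith
          have hi1 : t⁻¹ ≤ 1 := inv_le_one_of_one_le₀ h1.le
          have : q * |h - C| * t⁻¹ ≤ q * (M + C) * 1 := by gcongr
          have : 0 < q * ε * t⁻¹ := by positivity
          linarith
        · have : q * |h - C| * t⁻¹ ≤ q * ε * t⁻¹ := by gcongr; exact hT h3
          linarith
      have hexp : q * h * (1 - E) * t⁻¹ ≤ q * M * l := by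
        calc q * h * (1 - E) * t⁻¹ ≤ q * M * (l * t) * t⁻¹ := by
              gcongr
              linarith
          _ = q * M * l := by field_simp
      have hexp0 : 0 ≤ q * h * (1 - E) * t⁻¹ := by
        have : 0 ≤ 1 - E := by linarith
        positivity
      have e : q * h * E * t⁻¹ - h * (l * E) - C * q * t⁻¹
          = q * (h - C) * t⁻¹ - q * h * (1 - E) * t⁻¹ - h * (l * E) := by ring
      have hc : |q * (h - C) * t⁻¹| = q * |h - C| * t⁻¹ := by
        rw [abs_mul, abs_mul, abs_of_pos hq, abs_of_pos hi]
      have hc' := abs_le.1 (hc.le.trans hdiff)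
      rw [e, abs_le]
      constructor <;> linarith [hc'.1, hc'.2]
    · -- beyond `1 / l` one has `1 / t < l`, so the exponential bounds everything
      have m2 : t ∉ Ioc (1 : ℝ) (1 / l) := fun hm => absurd hm.2 (not_le.2 h2)
      rw [indicator_of_notMem m2, indicator_of_notMem m2]
      have hil : t⁻¹ ≤ l := by
        rw [inv_le_comm₀ ht hl, ← one_div]; exact h2.le
      have : q * h * E * t⁻¹ ≤ q * M * E * l := by gcongr
      rw [hmain] at hmain0
      rw [abs_le]
      constructor <;> linarith

lemma integral_Ioc_inv {l : ℝ} (hl : 0 < l) (hl1 : l < 1) :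
    IntegrableOn (fun t : ℝ => t⁻¹) (Ioc 1 (1 / l)) ∧
      ∫ t in Ioc 1 (1 / l), t⁻¹ = -Real.log l := by
  have h1 : 1 ≤ 1 / l := by rw [le_div_iff₀ hl]; linarith
  have h0 : (0 : ℝ) ∉ uIcc 1 (1 / l) := by
    rw [uIcc_of_le h1]; intro h; linarith [h.1]
  constructor
  · rw [← intervalIntegrable_iff_integrableOn_Ioc_of_le h1]
    exact intervalIntegral.intervalIntegrable_inv (fun x hx h => h0 (h ▸ hx)) continuousOn_id
  · rw [← intervalIntegral.integral_of_le h1, integral_inv h0]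
    simp [Real.log_inv]

lemma exists_abs_integral_sub_le {G : ℝ → ℝ} {C q ε : ℝ} (hC : 0 ≤ C) (hq : 0 < q)
    (hG0 : ∀ t, 0 ≤ G t) (hG1 : ∀ t, G t ≤ 1)
    (hlim : Tendsto (fun t : ℝ => t ^ q * G t) atTop (𝓝 C)) (hε : 0 < ε)
    (hGi : ∀ l, 0 < l → IntegrableOn (fun t => derivRpowExp q l t * G t) (Ioi 0)) :
    ∃ K, ∀ l, 0 < l → l < 1 →
      |(∫ t in Ioi 0, derivRpowExp q l t * G t) - C * q * (-Real.log l)|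
        ≤ q * ε * (-Real.log l) + K := by
  obtain ⟨M, hM0, hM⟩ := exists_rpow_mul_le hq hG1 hlim
  obtain ⟨T, hT⟩ := eventually_atTop.1 (hlim.eventually (Metric.closedBall_mem_nhds C hε))
  refine ⟨1 + (M + q * M) + q * M + q * (M + C) * max T 0, fun l hl hl1 => ?_⟩
  have h1l : 1 ≤ 1 / l := by rw [le_div_iff₀ hl]; linarith
  obtain ⟨hinv, hinvI⟩ := integral_Ioc_inv hl hl1
  -- over subsets of `(0, ∞)`, integrals of indicators are set integrals
  have hres : ∀ (a b : ℝ) (f : ℝ → ℝ), 0 ≤ a →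
      ∫ t in Ioi 0, (Ioc a b).indicator f t = ∫ t in Ioc a b, f t := by
    intro a b f ha
    rw [setIntegral_indicator measurableSet_Ioc,
      inter_eq_right.2 (show Ioc a b ⊆ Ioi 0 from fun x hx => ha.trans_lt hx.1)]
  have hind : ∀ (a b : ℝ) (f : ℝ → ℝ), IntegrableOn f (Ioc a b) →
      Integrable ((Ioc a b).indicator f) (volume.restrict (Ioi 0)) := by
    intro a b f hf
    exact ((integrable_indicator_iff measurableSet_Ioc).2 hf).restrict
  have i0 := hind _ _ _ (hinv.const_mul (C * q))
  have hrpow : IntegrableOn (fun t : ℝ => q * t ^ (q - 1)) (Ioc 0 1) := by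
    rw [← intervalIntegrable_iff_integrableOn_Ioc_of_le zero_le_one]
    exact (intervalIntegral.intervalIntegrable_rpow' (by linarith)).const_mul q
  have i1 := hind _ _ _ hrpow
  have hexp : IntegrableOn (fun t : ℝ => Real.exp (-(l * t))) (Ioi 0) := by
    simpa [neg_mul] using exp_neg_integrableOn_Ioi 0 hl
  have i2 : IntegrableOn (fun t : ℝ => (M + q * M) * (l * Real.exp (-(l * t)))) (Ioi 0) :=
    (hexp.const_mul l).const_mul _
  have hcst : ∀ a b c : ℝ, IntegrableOn (fun _ : ℝ => c) (Ioc a b) := fun a b c =>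
    integrableOn_const (by simp)
  have i3 := hind _ _ (fun t => q * ε * t⁻¹ + q * M * l) ((hinv.const_mul (q * ε)).add (hcst 1 (1 / l) (q * M * l)))
  have i4 := hind _ _ _ (hcst 0 T (q * (M + C)))
  have I1 : ∫ t in Ioc (0 : ℝ) 1, q * t ^ (q - 1) = 1 := by
    rw [← intervalIntegral.integral_of_le zero_le_one, intervalIntegral.integral_const_mul,
      integral_rpow (Or.inl (by linarith))]
    simp [Real.zero_rpow hq.ne', hq.ne']
  have I2 : ∫ t in Ioi (0 : ℝ), (M + q * M) * (l * Real.exp (-(l * t))) = M + q * M := by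
    rw [integral_const_mul, integral_const_mul]
    have := integral_exp_mul_Ioi (neg_lt_zero.2 hl) 0
    simp only [neg_mul] at this
    rw [this]
    simp [hl.ne']
  have I3 : ∫ t in Ioc (1 : ℝ) (1 / l), (q * ε * t⁻¹ + q * M * l)
      ≤ q * ε * (-Real.log l) + q * M := by
    rw [integral_add (hinv.const_mul (q * ε)) (hcst 1 (1 / l) (q * M * l)), integral_const_mul,
      hinvI]
    have : ∫ _ in Ioc (1 : ℝ) (1 / l), q * M * l = (1 / l - 1) * (q * M * l) := by
      rw [setIntegral_const, Real.volume_real_Ioc_of_le h1l, smul_eq_mul]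
    rw [this]
    have e : (1 / l - 1) * (q * M * l) = q * M - q * M * l := by field_simp
    have : 0 ≤ q * M * l := by positivity
    linarith
  have I4 : ∫ _ in Ioc (0 : ℝ) T, q * (M + C) = q * (M + C) * max T 0 := by
    rw [setIntegral_const, Real.volume_real_Ioc, smul_eq_mul, sub_zero, mul_comm]
  have hmain : C * q * (-Real.log l)
      = ∫ t in Ioi 0, (Ioc 1 (1 / l)).indicator (fun t => C * q * t⁻¹) t := by
    rw [hres _ _ _ zero_le_one, integral_const_mul, hinvI]
  rw [hmain, ← integral_sub (hGi l hl) i0, ← Real.norm_eq_abs]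
  refine (norm_integral_le_of_norm_le (((i1.add i2).add i3).add i4) ?_).trans ?_
  · filter_upwards [ae_restrict_mem measurableSet_Ioi] with t ht
    rw [Real.norm_eq_abs]
    refine abs_deriv_mul_sub_le hC hq (hG0 t) (hG1 t) hM0 (hM t ht) hε (fun h => ?_) hl ht
    simpa [Real.dist_eq] using hT t h.le
  · rw [integral_add' ((i1.add i2).add i3) i4, integral_add' (i1.add i2) i3, integral_add' i1 i2,
      hres _ _ _ le_rfl, hres _ _ _ zero_le_one, hres _ _ _ le_rfl, I1, I2, I4]
    linarith

end

/-- If `t^q · P(U > t) → C` as `t → ∞`, then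
`E[U^q exp(-λU)] / (-log λ) → C·q` as `λ → 0⁺`. -/
theorem stmt_3 {Ω : Type*} [MeasureSpace Ω] [IsProbabilityMeasure (ℙ : Measure Ω)]
    (U : Ω → ℝ) (hUmeas : Measurable U) (hUnn : ∀ ω, 0 ≤ U ω)
    (C q : ℝ) (hC : 0 < C) (hq : 0 < q)
    (htail : Tendsto (fun t : ℝ => t ^ q * (ℙ {ω | U ω > t}).toReal) atTop (nhds C)) :
    Tendsto
      (fun lam : ℝ => (∫ ω, U ω ^ q * Real.exp (-(lam * U ω))) / (-Real.log lam))
      (nhdsWithin 0 (Set.Ioi 0)) (nhds (C * q)) := by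
  have key := fun l (hl : 0 < l) => integral_eq_integral_deriv_mul_tail ℙ hUmeas hUnn hq hl
  rw [Metric.tendsto_nhds]
  intro δ hδ
  -- `q * ε = δ / 2`
  obtain ⟨K, hK⟩ := exists_abs_integral_sub_le (ε := δ / (2 * q))
    (G := fun t => (ℙ {ω | U ω > t}).toReal) hC.le hq
    (fun t => ENNReal.toReal_nonneg) (fun t => measureReal_le_one) htail (by positivity)
    (fun l hl => (key l hl).1)
  have hlog : Tendsto (fun l : ℝ => -Real.log l) (nhdsWithin 0 (Set.Ioi 0)) atTop :=
    tendsto_neg_atBot_atTop.comp Real.tendsto_log_nhdsGT_zero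
  have hlt : ∀ᶠ l : ℝ in nhdsWithin 0 (Set.Ioi 0), l < 1 :=
    (eventually_lt_nhds zero_lt_one).filter_mono nhdsWithin_le_nhds
  filter_upwards [self_mem_nhdsWithin, hlt, hlog.eventually_gt_atTop 0,
    hlog.eventually_gt_atTop (2 * K / δ)] with l hl hl1 hL hLK
  have hb := hK l hl hl1
  rw [← (key l hl).2] at hb
  rw [div_lt_iff₀ hδ] at hLK
  have e : q * (δ / (2 * q)) = δ / 2 := by field_simp
  rw [e] at hb
  rw [Real.dist_eq, div_sub' hL.ne', abs_div, abs_of_pos hL, div_lt_iff₀ hL,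
    mul_comm (-Real.log l) (C * q)]
  linarith
end

section
/- Fix a dimension d ≥ 1. (1) For every L ∈ ℝ there exists r > 0 such that the kernel K_L(x,y) = −log|x−y| + L is positive definite on the ball B(0,r) ⊂ ℝ^d, in the sense that for every continuous function h : ℝ^d → ℝ with compact support contained in B(0,r), the double integral ∫∫ (−log|x−y| + L)·h(x)·h(y) dx dy is nonnegative. (2) Consequently, for every R > 0 there exists L > 0 such that K_L is positive definite on B(0,R) in the same sense. -/
/-!
The logarithmic kernel is written as a positive mixture of visibly positive definite kernels.

On the line, the triangle function `tri s u = max (1 - |s| / u) 0` gives a positive definite kernel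
`tri (s - t) u`, because it is `u⁻¹` times the length of `[s - u, s) ∩ [t - u, t)`
(`tri_quad_nonneg`). For `0 < |s| < 1`,
`∫ u in (0, 1], tri s u / u du + tri s 1 = -log |s|` (`integral_tri_width`), so `-log |s - t|` is
positive definite on intervals of length less than one.

In `ℝ^d`, put `s = ⟨z, θ⟩` and integrate over `θ` in the unit ball. By homogeneity and rotation
invariance, `∫ θ, log |⟨z, θ⟩| = V * log ‖z‖ + C`, where `V` is the volume of the ball and `C` does
not depend on `z` (`integral_log_inner`). Hence `-(V * log ‖z‖ + C)` with `z = x - y` is positive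
definite on the ball of radius `1 / 2` (`quad_nonneg_of_mixture` carries out the exchange of
integrals). Replacing `z` by `z / (2 * R)` and adding a nonnegative constant, whose quadratic form
is a multiple of `(∫ h) ^ 2`, shows that `-log ‖x - y‖ + L` is positive definite on the ball of
radius `R` as soon as `L ≥ L₀ + log (2 * R)` with `L₀ = -C / V` (`exists_threshold`). Both claims
follow by choosing `R` in terms of `L`, or `L` in terms of `R`.
-/

open MeasureTheory

/-! ### Mixtures of positive definite kernels -/

/-- If `K` is a mixture over `ω` of nonnegative kernels `k · ω` whose integrals against `g` are
nonnegative, then so is the integral of `K` against `g`. The mixture formula is needed only where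
`g ≠ 0`; integrability of `K * g` together with `0 ≤ k` justifies Fubini. -/
theorem quad_nonneg_of_mixture {X Ω : Type*} [MeasurableSpace X] [MeasurableSpace Ω]
    {P : Measure X} {μ : Measure Ω} [SFinite P] [SFinite μ]
    {k : X → Ω → ℝ} {K g : X → ℝ} (hk : Measurable (Function.uncurry k)) (hg : Measurable g)
    (hk0 : ∀ p, ∀ᵐ ω ∂μ, 0 ≤ k p ω)
    (hK : ∀ᵐ p ∂P, g p ≠ 0 → Integrable (k p) μ ∧ ∫ ω, k p ω ∂μ = K p)
    (hKg : Integrable (fun p => K p * g p) P)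
    (hpos : ∀ᵐ ω ∂μ, 0 ≤ ∫ p, k p ω * g p ∂P) :
    0 ≤ ∫ p, K p * g p ∂P := by
  have hint : Integrable (Function.uncurry fun p ω => k p ω * g p) (P.prod μ) := by
    have hm : Measurable (Function.uncurry fun p ω => k p ω * g p) :=
      hk.mul (hg.comp measurable_fst)
    rw [integrable_prod_iff hm.aestronglyMeasurable]
    refine ⟨hK.mono fun p hp => ?_, hKg.norm.congr (hK.mono fun p hp => ?_)⟩
    · by_cases h0 : g p = 0
      · simp [Function.uncurry, h0]
      · exact (hp h0).1.mul_const (g p)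
    · by_cases h0 : g p = 0
      · simp [Function.uncurry, h0]
      · have h1 : 0 ≤ K p := (hp h0).2 ▸ integral_nonneg_of_ae (hk0 p)
        simp only [Function.uncurry, norm_mul, integral_mul_const]
        rw [Real.norm_of_nonneg h1, ← (hp h0).2]
        congr 1
        exact integral_congr_ae ((hk0 p).mono fun ω hω => (Real.norm_of_nonneg hω).symm)
  have h1 : ∫ p, K p * g p ∂P = ∫ p, ∫ ω, k p ω * g p ∂μ ∂P := by
    refine integral_congr_ae (hK.mono fun p hp => ?_)
    by_cases h0 : g p = 0
    · simp [h0]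
    · simp only [integral_mul_const, (hp h0).2]
  rw [h1, integral_integral_swap hint]
  exact integral_nonneg_of_ae hpos

/-! ### Triangle kernels and the logarithm on the line -/

/-- The triangle function of half-width `u`, of height one, evaluated at `s`. It is used only for
`u > 0`. -/
noncomputable def tri (s u : ℝ) : ℝ := max (1 - |s| / u) 0

theorem tri_nonneg (s u : ℝ) : 0 ≤ tri s u := le_max_right _ _

theorem measurable_tri : Measurable (Function.uncurry tri) := by
  unfold tri Function.uncurry
  fun_prop

/-- The kernel `tri (a x - a y) u` is positive definite, being an average over `w` of products
`1[w ∈ I x] * 1[w ∈ I y]` with `I x = [a x - u, a x)`. -/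
theorem tri_quad_nonneg {X : Type*} [MeasurableSpace X] {P : Measure X} [SFinite P]
    {a h : X → ℝ} (ha : Measurable a) (hm : Measurable h) (hh : Integrable h P)
    {u : ℝ} (hu : 0 < u) :
    0 ≤ ∫ p, tri (a p.1 - a p.2) u * (h p.1 * h p.2) ∂(P.prod P) := by
  have hA : Measurable fun q : X × ℝ => (Set.Ico (a q.1 - u) (a q.1)).indicator (fun _ => (1:ℝ)) q.2 := by
    have : MeasurableSet {q : X × ℝ | q.2 ∈ Set.Ico (a q.1 - u) (a q.1)} := by
      simp only [Set.mem_Ico, Set.ofPred_and]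
      exact (measurableSet_le (by fun_prop) (by fun_prop)).inter
        (measurableSet_lt (by fun_prop) (by fun_prop))
    exact (measurable_const (a := (1:ℝ))).indicator this
  refine quad_nonneg_of_mixture (μ := (volume : Measure ℝ))
    (k := fun p w => u⁻¹ * ((Set.Ico (a p.1 - u) (a p.1)).indicator (fun _ => (1:ℝ)) w *
      (Set.Ico (a p.2 - u) (a p.2)).indicator (fun _ => (1:ℝ)) w)) ?_ (by fun_prop) ?_ ?_ ?_ ?_
  · have h1 := hA.comp (f := fun q : (X × X) × ℝ => (q.1.1, q.2)) (by fun_prop)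
    have h2 := hA.comp (f := fun q : (X × X) × ℝ => (q.1.2, q.2)) (by fun_prop)
    exact (h1.mul h2).const_mul _
  · refine fun p => Filter.Eventually.of_forall fun w => ?_
    exact mul_nonneg (by positivity) (mul_nonneg (Set.indicator_nonneg (by simp) _)
      (Set.indicator_nonneg (by simp) _))
  · refine Filter.Eventually.of_forall fun p _ => ?_
    have e : (fun w => u⁻¹ * ((Set.Ico (a p.1 - u) (a p.1)).indicator (fun _ => (1:ℝ)) w *
        (Set.Ico (a p.2 - u) (a p.2)).indicator (fun _ => (1:ℝ)) w)) =
        fun w => u⁻¹ * (Set.Ico (max (a p.1) (a p.2) - u) (min (a p.1) (a p.2))).indicator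
          (fun _ => (1:ℝ)) w := by
      funext w
      rw [← Set.inter_indicator_mul, Set.Ico_inter_Ico, max_sub_sub_right]
      simp
    rw [e]
    refine ⟨((integrable_indicator_iff measurableSet_Ico).2 (by simp)).const_mul _, ?_⟩
    rw [integral_const_mul, integral_indicator measurableSet_Ico]
    simp only [integral_const, MeasurableSet.univ, measureReal_restrict_apply, Set.univ_inter,
      Real.volume_real_Ico, smul_eq_mul, mul_one, tri]
    rw [mul_max_of_nonneg _ _ (by positivity), mul_zero, ← max_sub_min_eq_abs]
    congr 1
    rw [max_comm (a p.2), min_comm (a p.2)]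
    field_simp
    ring
  · refine (hh.mul_prod hh).bdd_mul (c := 1) ?_ ?_
    · exact (measurable_tri.comp (f := fun p : X × X => (a p.1 - a p.2, u))
        (by fun_prop)).aestronglyMeasurable
    · refine Filter.Eventually.of_forall fun p => ?_
      rw [Real.norm_eq_abs, abs_of_nonneg (tri_nonneg _ _)]
      exact max_le (by have : 0 ≤ |a p.1 - a p.2| / u := by positivity
                       linarith) zero_le_one
  · refine Filter.Eventually.of_forall fun w => ?_
    have : ∀ p : X × X, u⁻¹ * ((Set.Ico (a p.1 - u) (a p.1)).indicator (fun _ => (1:ℝ)) w *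
        (Set.Ico (a p.2 - u) (a p.2)).indicator (fun _ => (1:ℝ)) w) * (h p.1 * h p.2) =
        u⁻¹ * (((Set.Ico (a p.1 - u) (a p.1)).indicator (fun _ => (1:ℝ)) w * h p.1) *
        ((Set.Ico (a p.2 - u) (a p.2)).indicator (fun _ => (1:ℝ)) w * h p.2)) := fun p => by ring
    simp_rw [this]
    rw [integral_const_mul, integral_prod_mul
      (fun x => (Set.Ico (a x - u) (a x)).indicator (fun _ => (1:ℝ)) w * h x)
      (fun x => (Set.Ico (a x - u) (a x)).indicator (fun _ => (1:ℝ)) w * h x)]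
    exact mul_nonneg (by positivity) (mul_self_nonneg _)

/-- The measure on triangle widths: Lebesgue measure on `(0, 1]` plus a unit atom at `1`. The density
`u⁻¹` is kept in the integrand `tri s u / u`; the atom contributes `tri s 1 = 1 - |s|`, which
cancels the non-logarithmic part of the integral over `(0, 1]`. -/
noncomputable def widthMeasure : Measure ℝ := volume.restrict (Set.Ioc 0 1) + Measure.dirac 1

instance : SFinite widthMeasure := by unfold widthMeasure; infer_instance

theorem ae_widthMeasure_pos : ∀ᵐ u ∂widthMeasure, 0 < u := by
  rw [widthMeasure, ae_add_measure_iff]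
  refine ⟨?_, ?_⟩
  · filter_upwards [ae_restrict_mem measurableSet_Ioc] with u hu using hu.1
  · rw [ae_dirac_iff measurableSet_Ioi]
    exact one_pos

/-- On `0 < |s| < 1`, the function `-log |s|` is a positive mixture of triangle functions. -/
theorem integral_tri_width {s : ℝ} (hs : s ≠ 0) (hs1 : |s| < 1) :
    Integrable (fun u => tri s u / u) widthMeasure ∧
      ∫ u, tri s u / u ∂widthMeasure = -Real.log s := by
  have hs0 : 0 < |s| := abs_pos.2 hs
  have hind : Set.EqOn (fun u => tri s u / u)
      ((Set.Ioc |s| 1).indicator fun u => u⁻¹ - |s| * (u ^ 2)⁻¹) (Set.Ioc 0 1) := by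
    intro u hu
    have hu0 : 0 < u := hu.1
    by_cases h : |s| < u
    · rw [Set.indicator_of_mem (Set.mem_Ioc.2 ⟨h, hu.2⟩)]
      have : |s| / u ≤ 1 := (div_le_one hu0).2 h.le
      simp only [tri]
      rw [max_eq_left (by linarith)]
      field_simp
    · rw [Set.indicator_of_notMem (fun hh => h hh.1)]
      have : 1 ≤ |s| / u := (one_le_div hu0).2 (not_lt.1 h)
      simp only [tri]
      rw [max_eq_right (by linarith), zero_div]
  have hcont : ContinuousOn (fun u : ℝ => u⁻¹ - |s| * (u ^ 2)⁻¹) (Set.uIcc |s| 1) := by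
    rw [Set.uIcc_of_le hs1.le]
    intro u hu
    have : u ≠ 0 := (hs0.trans_le hu.1).ne'
    have h2 : u ^ 2 ≠ 0 := by positivity
    exact ((continuousAt_inv₀ this).sub (continuousAt_const.mul
      ((continuousAt_inv₀ h2).comp (f := fun u : ℝ => u ^ 2) (by fun_prop)))).continuousWithinAt
  have hii := hcont.intervalIntegrable (μ := volume)
  have hval : ∫ u in |s|..1, (u⁻¹ - |s| * (u ^ 2)⁻¹) = -Real.log s - 1 + |s| := by
    rw [intervalIntegral.integral_eq_sub_of_hasDerivAt (f := fun u => Real.log u + |s| * u⁻¹) _ hii]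
    · have := hs0.ne'
      rw [Real.log_abs]
      field_simp
      simp
      ring
    · intro u hu
      rw [Set.uIcc_of_le hs1.le] at hu
      have hu0 : u ≠ 0 := (hs0.trans_le hu.1).ne'
      have := (Real.hasDerivAt_log hu0).add ((hasDerivAt_inv hu0).const_mul |s|)
      exact this.congr_deriv (by ring)
  have hsub : Set.Ioc |s| 1 ⊆ Set.Ioc 0 1 := Set.Ioc_subset_Ioc_left hs0.le
  have hI1 : IntegrableOn (fun u => tri s u / u) (Set.Ioc 0 1) := by
    refine IntegrableOn.congr_fun ?_ hind.symm measurableSet_Ioc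
    refine ((integrable_indicator_iff measurableSet_Ioc).2 ?_).integrableOn
    exact (intervalIntegrable_iff_integrableOn_Ioc_of_le hs1.le).1 hii
  have hI2 : Integrable (fun u => tri s u / u) (Measure.dirac 1) := by
    refine (integrable_const (tri s 1 / 1)).congr ?_
    rw [Filter.EventuallyEq, ae_dirac_eq]
    simp
  refine ⟨Integrable.add_measure hI1 hI2, ?_⟩
  rw [widthMeasure, integral_add_measure hI1 hI2, integral_dirac,
    setIntegral_congr_fun measurableSet_Ioc hind, setIntegral_indicator measurableSet_Ioc,
    Set.inter_eq_self_of_subset_right hsub, ← intervalIntegral.integral_of_le hs1.le, hval, tri,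
    max_eq_left (by simp only [div_one]; linarith)]
  simp

/-! ### Averaging over directions -/

section
variable {d : ℕ}

theorem integrableOn_log_coord (i : Fin d) :
    IntegrableOn (fun θ : EuclideanSpace ℝ (Fin d) => Real.log (θ i)) (Metric.ball 0 1) := by
  -- The unit ball lies in the cube `[-1, 1]^d`, on which the function is a product of functions of
  -- one coordinate.
  have h1 : ∀ j : Fin d, Integrable ((Set.Icc (-1:ℝ) 1).indicator
      (if j = i then Real.log else fun _ => 1)) := by
    intro j
    rw [integrable_indicator_iff measurableSet_Icc]
    split_ifs
    · exact (intervalIntegrable_iff_integrableOn_Icc_of_le (by norm_num)).1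
        intervalIntegral.intervalIntegrable_log'
    · simp
  have h2 := (PiLp.volume_preserving_ofLp (Fin d)).integrable_comp_of_integrable
    (Integrable.fintype_prod h1)
  refine (h2.integrableOn (s := Metric.ball 0 1)).congr_fun ?_ measurableSet_ball
  intro θ hθ
  have hc : ∀ j, θ j ∈ Set.Icc (-1:ℝ) 1 := fun j => by
    have := (PiLp.norm_apply_le θ j).trans (mem_ball_zero_iff.1 hθ).le
    exact abs_le.1 this
  simp only [Function.comp]
  rw [Finset.prod_eq_single i]
  · rw [Set.indicator_of_mem (hc i)]; simp
  · intro j _ hj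
    rw [Set.indicator_of_mem (hc j)]; simp [hj]
  · simp

theorem ae_coord_ne_zero (i : Fin d) : ∀ᵐ θ : EuclideanSpace ℝ (Fin d), θ i ≠ 0 :=
  (PiLp.volume_preserving_ofLp (Fin d)).quasiMeasurePreserving.ae
    (Measure.ae_eval_ne (fun _ => (volume : Measure ℝ)) i 0)

theorem integrableOn_log_norm (hd : 1 ≤ d) :
    IntegrableOn (fun z : EuclideanSpace ℝ (Fin d) => Real.log ‖z‖) (Metric.ball 0 1) := by
  have i : Fin d := ⟨0, hd⟩
  refine Integrable.mono (integrableOn_log_coord i)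
    (Real.measurable_log.comp measurable_norm).aestronglyMeasurable ?_
  filter_upwards [ae_restrict_mem measurableSet_ball, ae_restrict_of_ae (ae_coord_ne_zero i)]
    with z hz hz0
  -- Inside the unit ball both logarithms are nonpositive, and `|z i| ≤ ‖z‖`.
  have h1 : ‖z i‖ ≤ ‖z‖ := PiLp.norm_apply_le z i
  have h2 : 0 < ‖z i‖ := norm_pos_iff.2 hz0
  have h3 : ‖z‖ < 1 := mem_ball_zero_iff.1 hz
  rw [← Real.log_abs (z i), ← Real.norm_eq_abs (z i), Real.norm_eq_abs, Real.norm_eq_abs,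
    abs_of_nonpos (Real.log_nonpos (norm_nonneg _) h3.le),
    abs_of_nonpos (Real.log_nonpos (norm_nonneg _) (h1.trans h3.le))]
  exact neg_le_neg (Real.log_le_log h2 h1)

/-- Up to an additive constant, `log ‖z‖` is an average of the one-dimensional logarithms
`log |⟨z, θ⟩|` over the unit ball: a reflection takes `z` to a multiple of the `i`-th basis vector.
(`Real.log` ignores signs, so no absolute value is written.) -/
theorem integral_log_inner (i : Fin d) {z : EuclideanSpace ℝ (Fin d)} (hz : z ≠ 0) :
    IntegrableOn (fun θ => Real.log (inner ℝ z θ)) (Metric.ball 0 1) ∧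
      ∫ θ in Metric.ball 0 1, Real.log (inner ℝ z θ) =
        volume.real (Metric.ball (0 : EuclideanSpace ℝ (Fin d)) 1) * Real.log ‖z‖ +
          ∫ θ : EuclideanSpace ℝ (Fin d) in Metric.ball 0 1, Real.log (θ i) := by
  obtain ⟨U, hU⟩ : ∃ U : EuclideanSpace ℝ (Fin d) ≃ₗᵢ[ℝ] EuclideanSpace ℝ (Fin d),
      U z = ‖z‖ • EuclideanSpace.single i (1:ℝ) :=
    ⟨_, Submodule.reflection_sub (by simp [norm_smul])⟩
  have hz0 : ‖z‖ ≠ 0 := norm_ne_zero_iff.2 hz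
  have hmp := U.measurePreserving
  have hemb : MeasurableEmbedding U := U.toHomeomorph.measurableEmbedding
  have hpre : U ⁻¹' Metric.ball 0 1 = Metric.ball 0 1 := by
    ext θ; simp
  have hfun : (fun θ => Real.log (inner ℝ z θ)) = (fun θ => Real.log (‖z‖ * θ i)) ∘ U := by
    funext θ
    rw [← U.inner_map_map, hU, inner_smul_left, EuclideanSpace.inner_single_left]
    simp
  have hsplit : (fun θ : EuclideanSpace ℝ (Fin d) => Real.log ‖z‖ + Real.log (θ i))
      =ᵐ[volume.restrict (Metric.ball 0 1)] fun θ => Real.log (‖z‖ * θ i) := by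
    filter_upwards [ae_restrict_of_ae (ae_coord_ne_zero i)] with θ hθ
    rw [Real.log_mul hz0 hθ]
  have hlog := integrableOn_log_coord i
  have hconst : IntegrableOn (fun _ : EuclideanSpace ℝ (Fin d) => Real.log ‖z‖)
      (Metric.ball 0 1) := integrableOn_const measure_ball_lt_top.ne
  rw [hfun]
  constructor
  · rw [← hpre, hmp.integrableOn_comp_preimage hemb]
    exact (hconst.add hlog).congr hsplit
  · have h := hmp.setIntegral_preimage_emb hemb (fun θ => Real.log (‖z‖ * θ i)) (Metric.ball 0 1)
    rw [hpre] at h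
    change ∫ θ in Metric.ball 0 1, Real.log (‖z‖ * (U θ) i) = _
    rw [h, ← integral_congr_ae hsplit, integral_add hconst hlog]
    simp

theorem ae_inner_ne_zero (i : Fin d) {z : EuclideanSpace ℝ (Fin d)} (hz : z ≠ 0) :
    ∀ᵐ θ : EuclideanSpace ℝ (Fin d), inner ℝ z θ ≠ 0 := by
  obtain ⟨U, hU⟩ : ∃ U : EuclideanSpace ℝ (Fin d) ≃ₗᵢ[ℝ] EuclideanSpace ℝ (Fin d),
      U z = ‖z‖ • EuclideanSpace.single i (1:ℝ) :=
    ⟨_, Submodule.reflection_sub (by simp [norm_smul])⟩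
  filter_upwards [U.measurePreserving.quasiMeasurePreserving.ae (ae_coord_ne_zero i)] with θ hθ
  rw [← U.inner_map_map, hU, inner_smul_left, EuclideanSpace.inner_single_left]
  simpa [hz] using hθ

/-- In the unit ball of `ℝ^d`, an affine image of `-log ‖z‖` is a positive mixture of the ridge
functions `tri ⟨z, θ⟩ u`. -/
theorem integral_tri_inner (i : Fin d) {z : EuclideanSpace ℝ (Fin d)} (hz : z ≠ 0)
    (hz1 : ‖z‖ < 1) :
    Integrable (fun ω : EuclideanSpace ℝ (Fin d) × ℝ => tri (inner ℝ z ω.1) ω.2 / ω.2)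
        ((volume.restrict (Metric.ball 0 1)).prod widthMeasure) ∧
      ∫ ω : EuclideanSpace ℝ (Fin d) × ℝ, tri (inner ℝ z ω.1) ω.2 / ω.2
          ∂((volume.restrict (Metric.ball 0 1)).prod widthMeasure) =
        -(volume.real (Metric.ball (0 : EuclideanSpace ℝ (Fin d)) 1) * Real.log ‖z‖ +
          ∫ θ : EuclideanSpace ℝ (Fin d) in Metric.ball 0 1, Real.log (θ i)) := by
  obtain ⟨hli, hlv⟩ := integral_log_inner i hz
  have hae : ∀ᵐ θ : EuclideanSpace ℝ (Fin d) ∂(volume.restrict (Metric.ball 0 1)),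
      Integrable (fun u => tri (inner ℝ z θ) u / u) widthMeasure ∧
      ∫ u, tri (inner ℝ z θ) u / u ∂widthMeasure = -Real.log (inner ℝ z θ) := by
    filter_upwards [ae_restrict_mem measurableSet_ball, ae_restrict_of_ae (ae_inner_ne_zero i hz)]
      with θ hθ hθ0
    refine integral_tri_width hθ0 ?_
    have h3 : ‖θ‖ < 1 := mem_ball_zero_iff.1 hθ
    calc |inner ℝ z θ| ≤ ‖z‖ * ‖θ‖ := abs_real_inner_le_norm z θ
      _ < 1 := by nlinarith [norm_nonneg z, norm_nonneg θ]
  have hm : Measurable fun ω : EuclideanSpace ℝ (Fin d) × ℝ => tri (inner ℝ z ω.1) ω.2 / ω.2 :=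
    (measurable_tri.comp (f := fun ω : EuclideanSpace ℝ (Fin d) × ℝ => (inner ℝ z ω.1, ω.2))
      (by fun_prop)).div measurable_snd
  have hint : Integrable (fun ω : EuclideanSpace ℝ (Fin d) × ℝ => tri (inner ℝ z ω.1) ω.2 / ω.2)
      ((volume.restrict (Metric.ball 0 1)).prod widthMeasure) := by
    rw [integrable_prod_iff hm.aestronglyMeasurable]
    refine ⟨hae.mono fun θ h => h.1, hli.neg.congr (hae.mono fun θ h => ?_)⟩
    simp only [Pi.neg_apply]
    rw [← h.2]
    refine integral_congr_ae (ae_widthMeasure_pos.mono fun u hu => ?_)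
    exact (Real.norm_of_nonneg (div_nonneg (tri_nonneg _ _) hu.le)).symm
  refine ⟨hint, ?_⟩
  rw [integral_prod _ hint, integral_congr_ae (hae.mono fun θ h => h.2), integral_neg, hlv]

/-! ### The logarithmic energy on a ball -/

/-- Integrability of the logarithmic energy. On the support of `h p.1 * h p.2` the rescaled
difference lies in the unit ball, so the integrand is a bounded multiple of a convolution integrand
of two integrable functions. -/
theorem integrable_log_mul_mul (hd : 1 ≤ d) {h : EuclideanSpace ℝ (Fin d) → ℝ} (hc : Continuous h)
    (hs : HasCompactSupport h) {R : ℝ} (hR : 0 < R) (hsub : tsupport h ⊆ Metric.ball 0 R) :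
    Integrable (fun p : EuclideanSpace ℝ (Fin d) × EuclideanSpace ℝ (Fin d) =>
      Real.log ((2 * R)⁻¹ * dist p.1 p.2) * (h p.1 * h p.2)) (volume.prod volume) := by
  have hρ : 0 < (2 * R)⁻¹ := by positivity
  have hg : Integrable ((Metric.ball (0 : EuclideanSpace ℝ (Fin d)) 1).indicator
      (fun z => Real.log ‖z‖)) :=
    (integrable_indicator_iff measurableSet_ball).2 (integrableOn_log_norm hd)
  have hg' := hg.comp_smul hρ.ne'
  have hi : Integrable h := hc.integrable_of_hasCompactSupport hs
  obtain ⟨M, hM⟩ := hs.exists_bound_of_continuous hc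
  have h1 := Integrable.convolution_integrand (ContinuousLinearMap.mul ℝ ℝ) hi hg'
  have h2 := h1.mul_bdd (g := fun p => h p.1) (c := M)
    (by fun_prop) (Filter.Eventually.of_forall fun p => hM p.1)
  refine h2.congr (Filter.Eventually.of_forall fun p => ?_)
  simp only [ContinuousLinearMap.mul_apply']
  by_cases hp : p.1 ∈ Metric.ball 0 R ∧ p.2 ∈ Metric.ball 0 R
  · rw [Set.indicator_of_mem, norm_smul, Real.norm_of_nonneg hρ.le, dist_eq_norm]
    · ring
    · rw [mem_ball_zero_iff, norm_smul, Real.norm_of_nonneg hρ.le, inv_mul_lt_one₀ (by positivity)]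
      have := norm_sub_le p.1 p.2
      have a := mem_ball_zero_iff.1 hp.1
      have b := mem_ball_zero_iff.1 hp.2
      linarith
  · have : h p.1 = 0 ∨ h p.2 = 0 := by
      by_contra! hh
      exact hp ⟨hsub (subset_tsupport _ hh.1), hsub (subset_tsupport _ hh.2)⟩
    rcases this with h0 | h0 <;> simp [h0]

theorem ae_fst_ne_snd (hd : 1 ≤ d) :
    ∀ᵐ p : EuclideanSpace ℝ (Fin d) × EuclideanSpace ℝ (Fin d) ∂(volume.prod volume),
      p.1 ≠ p.2 := by
  have : Nonempty (Fin d) := ⟨⟨0, hd⟩⟩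
  have hm : MeasurableSet {p : EuclideanSpace ℝ (Fin d) × EuclideanSpace ℝ (Fin d) |
      p.1 = p.2} := measurableSet_eq_fun measurable_fst measurable_snd
  have : (volume.prod volume) {p : EuclideanSpace ℝ (Fin d) × EuclideanSpace ℝ (Fin d) |
      p.1 = p.2} = 0 := by
    rw [Measure.measure_prod_null hm]
    refine Filter.Eventually.of_forall fun x => ?_
    have : Prod.mk x ⁻¹' {p : EuclideanSpace ℝ (Fin d) × EuclideanSpace ℝ (Fin d) |
      p.1 = p.2} = {x} := by ext y; simp [eq_comm]
    simp [this]
  simpa [ae_iff] using this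

/-- The kernel `-log ‖x - y‖ + L` is positive definite on the ball of radius `R` once `L` is at least
`log (2 * R)` plus a constant depending only on the dimension. -/
theorem exists_threshold (hd : 1 ≤ d) : ∃ L₀ : ℝ, ∀ R : ℝ, 0 < R →
    ∀ L, L₀ + Real.log (2 * R) ≤ L → ∀ h : EuclideanSpace ℝ (Fin d) → ℝ,
      Continuous h → HasCompactSupport h → tsupport h ⊆ Metric.ball 0 R →
      0 ≤ ∫ x, ∫ y, (-Real.log (dist x y) + L) * h x * h y := by
  set i : Fin d := ⟨0, hd⟩
  set V := volume.real (Metric.ball (0 : EuclideanSpace ℝ (Fin d)) 1) with hV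
  set C := ∫ θ : EuclideanSpace ℝ (Fin d) in Metric.ball 0 1, Real.log (θ i) with hC
  have hV0 : 0 < V := ENNReal.toReal_pos (Metric.measure_ball_pos _ _ one_pos).ne'
    measure_ball_lt_top.ne
  refine ⟨-C / V, fun R hR L hL h hc hs hsub => ?_⟩
  have hρ : 0 < (2 * R)⁻¹ := by positivity
  have hi : Integrable h := hc.integrable_of_hasCompactSupport hs
  have hhh := hi.mul_prod hi
  have hlog := integrable_log_mul_mul hd hc hs hR hsub
  have hne := ae_fst_ne_snd hd
  have hK : Integrable (fun p : EuclideanSpace ℝ (Fin d) × EuclideanSpace ℝ (Fin d) =>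
      -(V * Real.log ((2 * R)⁻¹ * dist p.1 p.2) + C) * (h p.1 * h p.2))
      (volume.prod volume) := by
    refine ((hlog.const_mul (-V)).sub (hhh.const_mul C)).congr
      (Filter.Eventually.of_forall fun p => ?_)
    simp only [Pi.sub_apply]
    ring
  have hpos : 0 ≤ ∫ p : EuclideanSpace ℝ (Fin d) × EuclideanSpace ℝ (Fin d),
      -(V * Real.log ((2 * R)⁻¹ * dist p.1 p.2) + C) * (h p.1 * h p.2)
      ∂(volume.prod volume) := by
    refine quad_nonneg_of_mixture
      (μ := (volume.restrict (Metric.ball (0 : EuclideanSpace ℝ (Fin d)) 1)).prod widthMeasure)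
      (k := fun p ω => tri (inner ℝ ((2 * R)⁻¹ • (p.1 - p.2)) ω.1) ω.2 / ω.2)
      ?_ (by fun_prop) ?_ ?_ hK ?_
    · exact (measurable_tri.comp (f := fun q : (EuclideanSpace ℝ (Fin d) ×
        EuclideanSpace ℝ (Fin d)) × EuclideanSpace ℝ (Fin d) × ℝ =>
        (inner ℝ ((2 * R)⁻¹ • (q.1.1 - q.1.2)) q.2.1, q.2.2)) (by fun_prop)).div (by fun_prop)
    · intro p
      filter_upwards [Measure.quasiMeasurePreserving_snd.ae ae_widthMeasure_pos] with ω hω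
      exact div_nonneg (tri_nonneg _ _) hω.le
    · filter_upwards [hne] with p hp hp0
      have a := mem_ball_zero_iff.1 (hsub (subset_tsupport _ (left_ne_zero_of_mul hp0)))
      have b := mem_ball_zero_iff.1 (hsub (subset_tsupport _ (right_ne_zero_of_mul hp0)))
      have hnorm : ‖(2 * R)⁻¹ • (p.1 - p.2)‖ = (2 * R)⁻¹ * dist p.1 p.2 := by
        rw [norm_smul, Real.norm_of_nonneg hρ.le, dist_eq_norm]
      rw [← hnorm]
      refine integral_tri_inner i (smul_ne_zero hρ.ne' (sub_ne_zero.2 hp)) ?_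
      rw [hnorm, inv_mul_lt_one₀ (by positivity), dist_eq_norm]
      linarith [norm_sub_le p.1 p.2]
    · filter_upwards [Measure.quasiMeasurePreserving_snd.ae ae_widthMeasure_pos] with ω hω
      have := tri_quad_nonneg (a := fun x => inner ℝ ((2 * R)⁻¹ • x) ω.1)
        (by fun_prop) hc.measurable hi hω
      simp_rw [← inner_sub_left, ← smul_sub] at this
      have e : ∀ p : EuclideanSpace ℝ (Fin d) × EuclideanSpace ℝ (Fin d),
          tri (inner ℝ ((2 * R)⁻¹ • (p.1 - p.2)) ω.1) ω.2 / ω.2 * (h p.1 * h p.2) =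
          ω.2⁻¹ * (tri (inner ℝ ((2 * R)⁻¹ • (p.1 - p.2)) ω.1) ω.2 * (h p.1 * h p.2)) :=
        fun p => by ring
      simp_rw [e]
      rw [integral_const_mul]
      exact mul_nonneg (inv_nonneg.2 hω.le) this
  have hsq : 0 ≤ ∫ p : EuclideanSpace ℝ (Fin d) × EuclideanSpace ℝ (Fin d),
      h p.1 * h p.2 ∂(volume.prod volume) := by
    rw [integral_prod_mul h h]
    exact mul_self_nonneg _
  set D := L - (-C / V + Real.log (2 * R)) with hD
  -- The diagonal, where `log 0 = 0` breaks the additivity of the logarithm, is a null set.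
  have heq : (fun p : EuclideanSpace ℝ (Fin d) × EuclideanSpace ℝ (Fin d) =>
      V⁻¹ * (-(V * Real.log ((2 * R)⁻¹ * dist p.1 p.2) + C) * (h p.1 * h p.2)) +
        D * (h p.1 * h p.2)) =ᵐ[volume.prod volume]
      fun p => (-Real.log (dist p.1 p.2) + L) * h p.1 * h p.2 := by
    filter_upwards [hne] with p hp
    rw [Real.log_mul hρ.ne' (dist_ne_zero.2 hp), Real.log_inv, hD]
    field_simp
    ring
  have hint := ((hK.const_mul V⁻¹).add (hhh.const_mul D)).congr heq
  rw [← integral_prod (fun p : EuclideanSpace ℝ (Fin d) × EuclideanSpace ℝ (Fin d) =>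
    (-Real.log (dist p.1 p.2) + L) * h p.1 * h p.2) hint, ← integral_congr_ae heq,
    integral_add (hK.const_mul _) (hhh.const_mul _), integral_const_mul, integral_const_mul]
  have hD0 : 0 ≤ D := sub_nonneg.2 hL
  positivity

end

/-- (1) For every `L ∈ ℝ` there is `r > 0` such that the kernel
`K_L(x,y) = −log|x−y| + L` is positive definite on the ball `B(0,r) ⊂ ℝ^d`, tested
against continuous compactly supported functions with support in `B(0,r)`.
(2) Consequently, for every `R > 0` there is `L > 0` such that `K_L` is positive
definite on `B(0,R)` in the same sense. -/
theorem stmt_9 (d : ℕ) (hd : 1 ≤ d) :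
    (∀ L : ℝ, ∃ r > (0:ℝ),
      ∀ h : EuclideanSpace ℝ (Fin d) → ℝ,
        Continuous h → HasCompactSupport h → tsupport h ⊆ Metric.ball 0 r →
        0 ≤ ∫ x, ∫ y, (-Real.log (dist x y) + L) * h x * h y) ∧
    (∀ R : ℝ, 0 < R → ∃ L > (0:ℝ),
      ∀ h : EuclideanSpace ℝ (Fin d) → ℝ,
        Continuous h → HasCompactSupport h → tsupport h ⊆ Metric.ball 0 R →
        0 ≤ ∫ x, ∫ y, (-Real.log (dist x y) + L) * h x * h y) := by
  obtain ⟨L₀, hL₀⟩ := exists_threshold hd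
  refine ⟨fun L => ⟨Real.exp (L - L₀) / 2, by positivity, hL₀ _ (by positivity) L ?_⟩,
    fun R hR => ⟨max 1 (L₀ + Real.log (2 * R)), by positivity, hL₀ R hR _ (le_max_right _ _)⟩⟩
  rw [mul_div_cancel₀ _ two_ne_zero, Real.log_exp]
  linarith
end

section
/- Let G be a centered continuous Gaussian field on a compact set K ⊂ ℝ^d. Then there exists c > 0 such that P( sup_{x ∈ K} |G(x)| > t ) ≤ (1/c)·exp(−c·t²) for all t ≥ 0. -/
open MeasureTheory ProbabilityTheory Filter

/-!
This is Fernique's theorem, obtained by a finite-dimensional reduction that avoids viewing the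
field as a Gaussian measure on `C(K, ℝ)`.

Fix a sequence `x₀, x₁, …` dense in `K`. For each `n`, the law of `(G x₀, …, G xₙ₋₁)` on `ℝⁿ` with
the sup norm is a centered Gaussian measure `μ`, so `μ ⊗ μ` is invariant under rotations
(`law_prod_map_rotation`). Fernique's argument for rotation-invariant measures bounds
`∫ exp (C ‖x‖²) dμ` by a constant as soon as `μ {‖x‖ ≤ a} ≥ 3/4`, where `C` and the constant depend
only on `a` and on the level `3/4`. By compactness of `K` the paths are almost surely bounded, so
a single `a` serves for all `n`, and Markov's inequality yields a Gaussian tail bound uniform in `n`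
(`finite_tail`). Letting `n → ∞` along the increasing events `{∃ i < n, |G xᵢ| > t}` gives the
bound for the supremum over `K`, by density and path continuity.
-/

/-- The law of finitely many values of the field is a centered Gaussian measure, so its product with itself
is invariant under rotations. -/
lemma law_prod_map_rotation {Ω : Type*} [MeasureSpace Ω] [IsProbabilityMeasure (ℙ : Measure Ω)]
    {n : ℕ} (X : Fin n → Ω → ℝ) (hX : ∀ i, Measurable (X i))
    (hgauss : ∀ a : Fin n → ℝ, ∃ v : NNReal,
      Measure.map (fun ω => ∑ i, a i * X i ω) ℙ = gaussianReal 0 v) (θ : ℝ) :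
    (((ℙ : Measure Ω).map (fun ω i => X i ω)).prod ((ℙ : Measure Ω).map (fun ω i => X i ω))).map
      (ContinuousLinearMap.rotation θ) =
    ((ℙ : Measure Ω).map (fun ω i => X i ω)).prod ((ℙ : Measure Ω).map (fun ω i => X i ω)) := by
  have hY : Measurable (fun ω i => X i ω) := measurable_pi_lambda _ hX
  have key : ∀ L : StrongDual ℝ (Fin n → ℝ), ∃ v : NNReal,
      ((ℙ : Measure Ω).map (fun ω i => X i ω)).map L = gaussianReal 0 v := by
    intro L
    obtain ⟨v, hv⟩ := hgauss (fun i => L (Pi.single i 1))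
    refine ⟨v, ?_⟩
    rw [Measure.map_map (by fun_prop) hY, ← hv]
    congr 1
    ext ω
    have := LinearMap.pi_apply_eq_sum_univ (L : (Fin n → ℝ) →ₗ[ℝ] ℝ) (fun i => X i ω)
    simp only [ContinuousLinearMap.coe_coe, smul_eq_mul] at this
    simp only [Function.comp_apply, this]
    refine Finset.sum_congr rfl fun i _ => ?_
    rw [mul_comm]
    congr 2
    ext j
    simp [Pi.single_apply, eq_comm]
  have : IsGaussian ((ℙ : Measure Ω).map (fun ω i => X i ω)) :=
    isGaussian_of_map_eq_gaussianReal fun L => ⟨0, key L⟩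
  refine IsGaussian.map_rotation_eq_self_of_forall_strongDual_eq_zero (fun L => ?_) θ
  obtain ⟨v, hv⟩ := key L
  calc ∫ x, L x ∂((ℙ : Measure Ω).map (fun ω i => X i ω))
      = ∫ y, y ∂(((ℙ : Measure Ω).map (fun ω i => X i ω)).map L) := by
        exact (integral_map (φ := L) (f := fun y => y) (by fun_prop) (by fun_prop)).symm
    _ = 0 := by rw [hv, integral_id_gaussianReal]

/-- The majorant of `∫ exp (C ‖x‖²) dμ` in Fernique's theorem for `μ {‖x‖ ≤ a} ≥ 3/4`, where
`C = logRatio (3/4) / a²`. It depends neither on `a` nor on `μ`. -/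
noncomputable def ferniqueBound : ENNReal :=
  .ofReal (Real.exp (Fernique.logRatio (3 / 4)))
    + ∑' n : ℕ, .ofReal (Real.exp
      (-2⁻¹ * Real.log ((3 / 4 : ENNReal) / (1 - 3 / 4)).toReal * 2 ^ n))

lemma ratio_eq : ((3 / 4 : ENNReal) / (1 - 3 / 4)).toReal = 3 := by
  have h : (3 / 4 : ENNReal) ≤ 1 := by
    rw [ENNReal.div_le_iff (by norm_num) (by norm_num)]; norm_num
  rw [ENNReal.toReal_div, ENNReal.toReal_sub_of_le h (by simp)]
  norm_num

lemma ferniqueBound_ne_top : ferniqueBound ≠ ⊤ := by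
  refine ENNReal.add_ne_top.2 ⟨ENNReal.ofReal_ne_top, ?_⟩
  refine Summable.tsum_ofReal_ne_top ?_
  rw [ratio_eq]
  have hlog : 0 < Real.log 3 := Real.log_pos (by norm_num)
  have hg := summable_geometric_of_lt_one (r := Real.exp (-2⁻¹ * Real.log 3)) (by positivity)
    (by rw [Real.exp_lt_one_iff]; linarith)
  refine hg.of_nonneg_of_le (fun n => by positivity) fun n => ?_
  rw [← Real.exp_nat_mul, Real.exp_le_exp]
  have : (n : ℝ) ≤ 2 ^ n := by exact_mod_cast (Nat.lt_two_pow_self (n := n)).le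
  nlinarith

/-- A Gaussian tail bound for finitely many values of the field whose constants depend only on a
level `a` not exceeded with probability `3/4`, and not on the number of values. -/
lemma finite_tail {Ω : Type*} [MeasureSpace Ω] [IsProbabilityMeasure (ℙ : Measure Ω)]
    {n : ℕ} (X : Fin n → Ω → ℝ) (hX : ∀ i, Measurable (X i))
    (hgauss : ∀ a : Fin n → ℝ, ∃ v : NNReal,
      Measure.map (fun ω => ∑ i, a i * X i ω) ℙ = gaussianReal 0 v)
    {a : ℝ} (ha : 0 < a) (hmed : (3 / 4 : ENNReal) ≤ ℙ {ω | ∀ i, |X i ω| ≤ a})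
    {t : ℝ} (ht : 0 ≤ t) :
    ℙ {ω | ∃ i, t < |X i ω|} ≤
      ferniqueBound * .ofReal (Real.exp (-(Fernique.logRatio (3 / 4) * a⁻¹ ^ 2) * t ^ 2)) := by
  have hY : Measurable (fun ω i => X i ω) := measurable_pi_lambda _ hX
  set μ := (ℙ : Measure Ω).map (fun ω i => X i ω) with hμ
  have : IsProbabilityMeasure μ := Measure.isProbabilityMeasure_map hY.aemeasurable
  set C := Fernique.logRatio (3 / 4) * a⁻¹ ^ 2 with hC
  have h34 : (2⁻¹ : ENNReal) < 3 / 4 := by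
    rw [← ENNReal.toReal_lt_toReal (by simp) (by finiteness)]; norm_num
  have h34' : (3 / 4 : ENNReal) < 1 := by
    rw [← ENNReal.toReal_lt_toReal (by finiteness) (by simp)]; norm_num
  have hC0 : 0 ≤ C := mul_nonneg (Fernique.logRatio_pos h34 h34').le (by positivity)
  have hc : (3 / 4 : ENNReal) ≤ μ {x | ‖x‖ ≤ a} := by
    rw [hμ, Measure.map_apply hY (measurableSet_le (by fun_prop) (by fun_prop))]
    refine hmed.trans (measure_mono fun ω hω => ?_)
    exact (pi_norm_le_iff_of_nonneg ha.le).2 hω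
  have hint := lintegral_exp_mul_sq_norm_le_of_map_rotation_eq_self
    (law_prod_map_rotation X hX hgauss _) hc h34
  change ∫⁻ x, .ofReal (Real.exp (C * ‖x‖ ^ 2)) ∂μ ≤ ferniqueBound at hint
  have hmarkov := meas_ge_le_lintegral_div (μ := μ)
    (f := fun x => .ofReal (Real.exp (C * ‖x‖ ^ 2))) (by fun_prop)
    (ε := .ofReal (Real.exp (C * t ^ 2))) (by simp [Real.exp_pos]) (by simp)
  calc ℙ {ω | ∃ i, t < |X i ω|}
      ≤ ℙ ((fun ω i => X i ω) ⁻¹' {x : Fin n → ℝ |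
          ENNReal.ofReal (Real.exp (C * t ^ 2)) ≤ .ofReal (Real.exp (C * ‖x‖ ^ 2))}) := by
        refine measure_mono ?_
        rintro ω ⟨i, hi⟩
        have : t ≤ ‖fun i => X i ω‖ := hi.le.trans (norm_le_pi_norm (fun i => X i ω) i)
        change ENNReal.ofReal _ ≤ ENNReal.ofReal _
        gcongr
    _ = μ {x : Fin n → ℝ |
          ENNReal.ofReal (Real.exp (C * t ^ 2)) ≤ .ofReal (Real.exp (C * ‖x‖ ^ 2))} := by
        rw [hμ, Measure.map_apply hY (measurableSet_le (by fun_prop) (by fun_prop))]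
    _ ≤ _ := hmarkov
    _ ≤ ferniqueBound / .ofReal (Real.exp (C * t ^ 2)) := by gcongr
    _ = _ := by
        rw [div_eq_mul_inv, ← ENNReal.ofReal_inv_of_pos (Real.exp_pos _), ← Real.exp_neg, neg_mul]

/-- Let `G` be a centered continuous Gaussian field on a compact set
`K ⊂ ℝ^d` (a.s. continuous sample paths on `K`, every finite real linear combination
`∑ aᵢ G(xᵢ)` with `xᵢ ∈ K` is centered Gaussian). Then there exists `c > 0` such that
`P(sup_{x ∈ K} |G(x)| > t) ≤ (1/c)·exp(−c t²)` for all `t ≥ 0`. -/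
theorem stmt_10 {d : ℕ} {Ω : Type*} [MeasureSpace Ω] [IsProbabilityMeasure (ℙ : Measure Ω)]
    (K : Set (EuclideanSpace ℝ (Fin d))) (hK : IsCompact K)
    (G : EuclideanSpace ℝ (Fin d) → Ω → ℝ)
    (hGmeas : ∀ x, Measurable (G x))
    (hGcont : ∀ᵐ ω, ContinuousOn (fun x => G x ω) K)
    (hGgauss : ∀ (n : ℕ) (x : Fin n → EuclideanSpace ℝ (Fin d)), (∀ i, x i ∈ K) →
      ∀ a : Fin n → ℝ, ∃ v : NNReal,
        Measure.map (fun ω => ∑ i, a i * G (x i) ω) ℙ = gaussianReal 0 v) :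
    ∃ c > (0:ℝ), ∀ t : ℝ, 0 ≤ t →
      (ℙ {ω | (⨆ x ∈ K, |G x ω|) > t}).toReal ≤ (1 / c) * Real.exp (-c * t ^ 2) := by
  have hsup : ∀ (ω : Ω) (t : ℝ), 0 ≤ t → (∀ x ∈ K, |G x ω| ≤ t) → (⨆ x ∈ K, |G x ω|) ≤ t :=
    fun ω t ht h => Real.iSup_le (fun x => Real.iSup_le (h x) ht) ht
  rcases K.eq_empty_or_nonempty with rfl | hne
  · refine ⟨1, one_pos, fun t ht => ?_⟩
    have : {ω | (⨆ x ∈ (∅ : Set (EuclideanSpace ℝ (Fin d))), |G x ω|) > t} = ∅ := by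
      ext ω
      simpa using hsup ω t ht (by simp)
    rw [this]
    simpa using (Real.exp_pos _).le
  have : Nonempty K := hne.to_subtype
  let x : ℕ → K := TopologicalSpace.denseSeq K
  have hx : DenseRange x := TopologicalSpace.denseRange_denseSeq K
  -- bounds on the dense sequence propagate to all of `K` along continuous paths
  have hdense : ∀ (ω : Ω), ContinuousOn (fun x => G x ω) K → ∀ t : ℝ,
      (∀ n, |G (x n) ω| ≤ t) → ∀ y ∈ K, |G y ω| ≤ t := by
    intro ω hω t h y hy
    have hcl : IsClosed {z : K | |G z ω| ≤ t} :=
      isClosed_le (continuousOn_iff_continuous_domRestrict.1 hω).abs continuous_const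
    exact hx.induction_on (p := fun z : K => |G z ω| ≤ t) ⟨y, hy⟩ hcl h
  -- compactness makes the field almost surely bounded, hence bounded by some `k` with
  -- probability at least `3/4`
  obtain ⟨k, hk⟩ : ∃ k : ℕ, (3 / 4 : ENNReal) < ℙ {ω | ∀ n, |G (x n) ω| ≤ k} := by
    have hmono : Monotone fun k : ℕ => {ω | ∀ n, |G (x n) ω| ≤ k} :=
      fun i j hij ω hω n => (hω n).trans (mod_cast hij)
    have hlim := tendsto_measure_iUnion_atTop (μ := (ℙ : Measure Ω)) hmono
    have hone : ℙ (⋃ k : ℕ, {ω | ∀ n, |G (x n) ω| ≤ k}) = 1 := by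
      refine le_antisymm prob_le_one ?_
      rw [← measure_univ (μ := (ℙ : Measure Ω))]
      refine measure_mono_ae ?_
      filter_upwards [hGcont] with ω hω _
      obtain ⟨b, hb⟩ := hK.exists_bound_of_continuousOn hω
      obtain ⟨k, hk⟩ := exists_nat_ge b
      exact Set.mem_iUnion.2 ⟨k, fun n => (hb _ (x n).2).trans hk⟩
    rw [hone] at hlim
    have h34' : (3 / 4 : ENNReal) < 1 := by
      rw [← ENNReal.toReal_lt_toReal (by finiteness) (by simp)]; norm_num
    exact (hlim.eventually (lt_mem_nhds h34')).exists
  set a : ℝ := k + 1 with ha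
  have hapos : 0 < a := by positivity
  set C := Fernique.logRatio (3 / 4) * a⁻¹ ^ 2 with hC
  have hCpos : 0 < C := by
    refine mul_pos (Fernique.logRatio_pos ?_ ?_) (by positivity)
    · rw [← ENNReal.toReal_lt_toReal (by simp) (by finiteness)]; norm_num
    · rw [← ENNReal.toReal_lt_toReal (by finiteness) (by simp)]; norm_num
  have htail : ∀ t : ℝ, 0 ≤ t → ℙ {ω | (⨆ x ∈ K, |G x ω|) > t} ≤
      ferniqueBound * .ofReal (Real.exp (-C * t ^ 2)) := by
    intro t ht
    have hmono : Monotone fun n : ℕ => {ω | ∃ i : Fin n, t < |G (x i) ω|} := by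
      rintro m n hmn ω ⟨i, hi⟩
      exact ⟨Fin.castLE hmn i, hi⟩
    calc ℙ {ω | (⨆ x ∈ K, |G x ω|) > t}
        ≤ ℙ (⋃ n : ℕ, {ω | ∃ i : Fin n, t < |G (x i) ω|}) := by
          refine measure_mono_ae ?_
          filter_upwards [hGcont] with ω hω hgt
          by_contra hcon
          refine absurd (hsup ω t ht (hdense ω hω t fun n => ?_)) (not_le.2 hgt)
          by_contra hn
          exact hcon (Set.mem_iUnion.2 ⟨n + 1, Fin.last n, not_le.1 hn⟩)
      _ = ⨆ n : ℕ, ℙ {ω | ∃ i : Fin n, t < |G (x i) ω|} := hmono.measure_iUnion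
      _ ≤ _ := by
          refine iSup_le fun n => finite_tail (fun i : Fin n => G (x i)) (fun i => hGmeas _)
            (hGgauss n (fun i => x i) fun i => (x i).2) hapos ?_ ht
          refine hk.le.trans (measure_mono fun ω hω i => (hω i).trans ?_)
          simp [ha]
  set B := ferniqueBound.toReal with hB
  have hB0 : 0 ≤ B := ENNReal.toReal_nonneg
  refine ⟨min C (1 / (B + 1)), by positivity, fun t ht => ?_⟩
  have hc : 0 < min C (1 / (B + 1)) := by positivity
  calc (ℙ {ω | (⨆ x ∈ K, |G x ω|) > t}).toReal
      ≤ (ferniqueBound * .ofReal (Real.exp (-C * t ^ 2))).toReal :=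
        ENNReal.toReal_mono (ENNReal.mul_ne_top ferniqueBound_ne_top ENNReal.ofReal_ne_top)
          (htail t ht)
    _ = B * Real.exp (-C * t ^ 2) := by
        rw [ENNReal.toReal_mul, ENNReal.toReal_ofReal (Real.exp_pos _).le]
    _ ≤ _ := by
        gcongr
        · rw [le_div_iff₀ hc]
          calc B * min C (1 / (B + 1)) ≤ B * (1 / (B + 1)) := by gcongr; exact min_le_right _ _
            _ ≤ 1 := by rw [mul_one_div, div_le_one (by positivity)]; linarith
        · exact min_le_left _ _
end

section
/- (Goldie's implicit renewal theorem.) Let M and R be independent nonnegative real-valued random variables and let q > 0. Suppose: (i) E[M^q] = 1; (ii) E[M^q · log M] < ∞ (the expectation of the positive part is finite); (iii) the conditional law of log M given {M > 0} is non-arithmetic, i.e. there is no h > 0 such that log M ∈ h·ℤ almost surely on the event {M > 0}; (iv) ∫₀^∞ |P(R > t) − P(M·R > t)| · t^{q−1} dt < ∞. Then E[M^q · log M] ∈ (0, ∞), and P(R > t) = C·t^{-q} + o(t^{-q}) as t → ∞, where C = (1 / E[M^q · log M]) · ∫₀^∞ (P(R > t) − P(M·R > t)) · t^{q−1} dt.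 -/
/-!
In logarithmic scale put `r x = exp (q x) ℙ(R > exp x)` (`scaledTail`) and let `ν` be the law of
`log M` under the tilted probability `M ^ q dℙ` (`tiltedLaw`). By independence, convolving `r` with
`ν` gives `exp (q x) ℙ(M R > exp x)` (`renewalOp_scaledTail`), so `r` solves the renewal equation
`r = g + r * ν` with `g` integrable by assumption. The mean `m` of `ν` is `E[M ^ q log M]`; it is
positive by strict Jensen (`integral_rpow_mul_log_pos`), and `ν` is non-arithmetic. The claim is
that `r x → (∫ g) / m`.

The function `g` need not be directly Riemann integrable, so `r` is first smoothed by a tent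
function `φ`. Let `V = ∑ₖ φ * ν^{*k}` be the potential of `φ`. Then `r * φ = g * V`
(`integral_mul_potential`), and once `V` is bounded with limit `(∫ φ) / m` at `+∞`, dominated
convergence gives the limit of `r * φ`. Since `exp (-q x) r x` is nonincreasing, `r` is squeezed
between its averages over short intervals up to factors `exp (± q δ)` (`tent_sandwich`), and letting
the width `δ` of the tent tend to zero finishes the proof (`tendsto_implicit_renewal`).

The renewal theorem for `V` (`potential_tent`, `tendsto_renewal`) is proved as follows. The Laplace
transform of `ν` at `q / 2` is `E[M ^ (q / 2)] < 1`; together with the maximum principle this makes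
`V` bounded, Lipschitz and vanishing at `-∞`. The equation `V = φ + V * ν` yields the energy bound
`∫∫ (V x - V (x - y))² ν(dy) dx < ∞` (`integrable_energy`). Hence `V (x - y) - V x → 0` as `x → ∞`
for `ν`-almost every `y`; such `y` form a subgroup, which is dense as `ν` is non-arithmetic, so the
increments vanish for all `y` (`tendsto_increment`). Finally the flux
`∫ (∫ V over [x - y, x]) ν(dy)` increases by exactly `∫ φ` over the line (`integral_sub_conv`), and
near `+∞` it is asymptotic to `m V x` (`tendsto_flux`), which identifies the limit.
-/

open MeasureTheory ProbabilityTheory Filter Topology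
open scoped ENNReal

/-! ### Convolution with a measure on the line and its potential -/

/-- Convolution of a nonnegative function with a measure `ν` on the line,
`T f (x) = ∫ f (x - y) ν(dy)`; with values in `[0, ∞]` no integrability is needed. -/
noncomputable def renewalOp (ν : Measure ℝ) (f : ℝ → ℝ≥0∞) (x : ℝ) : ℝ≥0∞ :=
  ∫⁻ y, f (x - y) ∂ν

/-- The potential `∑ₖ Tᵏ f` of a nonnegative function `f`, that is, its convolution with the
renewal measure `∑ₖ ν^{*k}`. -/
noncomputable def potential (ν : Measure ℝ) (f : ℝ → ℝ≥0∞) (x : ℝ) : ℝ≥0∞ :=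
  ∑' k : ℕ, (renewalOp ν)^[k] f x

lemma measurable_renewalOp {ν : Measure ℝ} [SFinite ν] {f : ℝ → ℝ≥0∞} (hf : Measurable f) :
    Measurable (renewalOp ν f) :=
  Measurable.lintegral_prod_right' (f := fun p : ℝ × ℝ => f (p.1 - p.2))
    (hf.comp (measurable_fst.sub measurable_snd))

lemma measurable_iterate {ν : Measure ℝ} [SFinite ν] {f : ℝ → ℝ≥0∞} (hf : Measurable f) (k : ℕ) :
    Measurable ((renewalOp ν)^[k] f) := by
  induction k with
  | zero => exact hf
  | succ k ih => rw [Function.iterate_succ_apply']; exact measurable_renewalOp ih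

lemma measurable_potential {ν : Measure ℝ} [SFinite ν] {f : ℝ → ℝ≥0∞} (hf : Measurable f) :
    Measurable (potential ν f) :=
  Measurable.tsum fun k => measurable_iterate hf k

lemma potential_eq {ν : Measure ℝ} [SFinite ν] {f : ℝ → ℝ≥0∞} (hf : Measurable f) (x : ℝ) :
    potential ν f x = f x + renewalOp ν (potential ν f) x := by
  unfold potential
  rw [tsum_eq_zero_add' ENNReal.summable]
  congr 1
  unfold renewalOp
  rw [lintegral_tsum]
  · refine tsum_congr fun k => ?_
    rw [Function.iterate_succ_apply']
  · intro k
    exact ((measurable_iterate hf k).comp (measurable_const.sub measurable_id)).aemeasurable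

lemma renewalOp_exp (ν : Measure ℝ) (c : ℝ) (x : ℝ) :
    ∫⁻ y, ENNReal.ofReal (Real.exp (c * (x - y))) ∂ν =
      (∫⁻ y, ENNReal.ofReal (Real.exp (-(c * y))) ∂ν) * ENNReal.ofReal (Real.exp (c * x)) := by
  rw [← lintegral_mul_const]
  · refine lintegral_congr fun y => ?_
    rw [← ENNReal.ofReal_mul (Real.exp_pos _).le, ← Real.exp_add]
    ring_nf
  · fun_prop

/-- Exponentials are eigenfunctions of `T`: the rate `s` contributes the factor `ρ` at each step,
while the rate `q`, whose eigenvalue is at most one, is merely not increased. -/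
lemma iterate_le_exp {ν : Measure ℝ} {s q : ℝ} {ρ : ℝ≥0∞}
    (hρ : ∫⁻ y, ENNReal.ofReal (Real.exp (-(s * y))) ∂ν = ρ)
    (hq : ∫⁻ y, ENNReal.ofReal (Real.exp (-(q * y))) ∂ν ≤ 1) {f : ℝ → ℝ≥0∞} {A B : ℝ≥0∞}
    (hf : ∀ x, f x ≤ A * ENNReal.ofReal (Real.exp (s * x)) + B * ENNReal.ofReal (Real.exp (q * x)))
    (k : ℕ) (x : ℝ) :
    (renewalOp ν)^[k] f x ≤ A * ρ ^ k * ENNReal.ofReal (Real.exp (s * x)) +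
      B * ENNReal.ofReal (Real.exp (q * x)) := by
  induction k generalizing x with
  | zero => simpa using hf x
  | succ k ih =>
    rw [Function.iterate_succ_apply']
    refine (lintegral_mono fun y => ih (x - y)).trans ?_
    rw [lintegral_add_left (by fun_prop), lintegral_const_mul _ (by fun_prop),
      lintegral_const_mul _ (by fun_prop), renewalOp_exp, renewalOp_exp, hρ]
    refine add_le_add (le_of_eq (by ring)) ?_
    gcongr
    exact mul_le_of_le_one_left' hq

lemma potential_le_exp {ν : Measure ℝ} {s : ℝ} {ρ : ℝ≥0∞}
    (hρ : ∫⁻ y, ENNReal.ofReal (Real.exp (-(s * y))) ∂ν = ρ) (hρ1 : ρ < 1)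
    {f : ℝ → ℝ≥0∞} {A : ℝ≥0∞}
    (hf : ∀ x, f x ≤ A * ENNReal.ofReal (Real.exp (s * x))) (x : ℝ) :
    potential ν f x ≤ A * (1 - ρ)⁻¹ * ENNReal.ofReal (Real.exp (s * x)) := by
  have h := iterate_le_exp (q := s) (B := 0) hρ (hρ.trans_le hρ1.le) (f := f) (A := A)
    (by simpa using hf)
  calc potential ν f x ≤ ∑' k : ℕ, A * ρ ^ k * ENNReal.ofReal (Real.exp (s * x)) :=
        ENNReal.tsum_le_tsum fun k => by simpa using h k x
    _ = _ := by rw [ENNReal.tsum_mul_right, ENNReal.tsum_mul_left, ENNReal.tsum_geometric]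

/-- Maximum principle: a bound for the potential of `f` on a set off which `f` vanishes is a bound
everywhere. A walk must enter that set before it contributes, which is the induction on the partial
sums below. -/
lemma potential_le_of_le_on {ν : Measure ℝ} [IsProbabilityMeasure ν] {f : ℝ → ℝ≥0∞}
    (hf : Measurable f) {K : Set ℝ} (hK : ∀ x ∉ K, f x = 0) {A : ℝ≥0∞}
    (hA : ∀ x ∈ K, potential ν f x ≤ A) (x : ℝ) : potential ν f x ≤ A := by
  have key : ∀ n : ℕ, ∀ x, ∑ k ∈ Finset.range n, (renewalOp ν)^[k] f x ≤ A := by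
    intro n
    induction n with
    | zero => simp
    | succ n ih =>
      intro x
      by_cases hx : x ∈ K
      · exact (ENNReal.sum_le_tsum _).trans (hA x hx)
      · rw [Finset.sum_range_succ']
        simp only [Function.iterate_zero, id_eq, hK x hx, add_zero]
        calc ∑ k ∈ Finset.range n, (renewalOp ν)^[k + 1] f x
            = ∫⁻ y, ∑ k ∈ Finset.range n, (renewalOp ν)^[k] f (x - y) ∂ν := by
              rw [lintegral_finsetSum]
              · refine Finset.sum_congr rfl fun k _ => ?_
                rw [Function.iterate_succ_apply']
                rfl
              · intro k _
                exact (measurable_iterate hf k).comp (measurable_const.sub measurable_id)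
          _ ≤ ∫⁻ _, A ∂ν := lintegral_mono fun y => ih (x - y)
          _ = A := by simp
  exact ENNReal.summable.tsum_le_of_sum_range_le fun n => key n x

/-- Indicators of compact intervals have bounded potentials: on the interval itself the exponential
bound `potential_le_exp` is uniform, and elsewhere the maximum principle applies. -/
lemma exists_potential_le {ν : Measure ℝ} [IsProbabilityMeasure ν] {s : ℝ} (hs : 0 < s) {ρ : ℝ≥0∞}
    (hρ : ∫⁻ y, ENNReal.ofReal (Real.exp (-(s * y))) ∂ν = ρ) (hρ1 : ρ < 1) (a b : ℝ) :
    ∃ B : ℝ≥0∞, B ≠ ∞ ∧ ∀ x, potential ν ((Set.Icc a b).indicator 1) x ≤ B := by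
  refine ⟨ENNReal.ofReal (Real.exp (-(s * a))) * (1 - ρ)⁻¹ * ENNReal.ofReal (Real.exp (s * b)),
    ?_, ?_⟩
  · refine ENNReal.mul_ne_top (ENNReal.mul_ne_top ENNReal.ofReal_ne_top ?_) ENNReal.ofReal_ne_top
    simpa [tsub_eq_zero_iff_le] using hρ1
  · refine potential_le_of_le_on (measurable_one.indicator measurableSet_Icc) (K := Set.Icc a b)
      (fun x hx => Set.indicator_of_notMem hx _) fun x hx => ?_
    refine (potential_le_exp hρ hρ1 (A := ENNReal.ofReal (Real.exp (-(s * a)))) ?_ x).trans ?_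
    · intro x
      by_cases hx : x ∈ Set.Icc a b
      · rw [Set.indicator_of_mem hx, ← ENNReal.ofReal_mul (Real.exp_pos _).le, ← Real.exp_add,
          Pi.one_apply, ENNReal.one_le_ofReal]
        exact Real.one_le_exp (by nlinarith [hx.1])
      · rw [Set.indicator_of_notMem hx]; exact zero_le
    · gcongr
      exact hx.2

lemma iterate_add_le {ν : Measure ℝ} [SFinite ν] {f χ : ℝ → ℝ≥0∞} (hf : Measurable f)
    (hχ : Measurable χ) {u : ℝ} {c : ℝ≥0∞} (h : ∀ x, f (x + u) ≤ f x + c * χ x) (k : ℕ) (x : ℝ) :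
    (renewalOp ν)^[k] f (x + u) ≤ (renewalOp ν)^[k] f x + c * (renewalOp ν)^[k] χ x := by
  induction k generalizing x with
  | zero => exact h x
  | succ k ih =>
    simp only [Function.iterate_succ_apply']
    have hfk := measurable_iterate (ν := ν) hf k
    have hχk := measurable_iterate (ν := ν) hχ k
    change ∫⁻ y, (renewalOp ν)^[k] f (x + u - y) ∂ν ≤
      (∫⁻ y, (renewalOp ν)^[k] f (x - y) ∂ν) + c * ∫⁻ y, (renewalOp ν)^[k] χ (x - y) ∂ν
    rw [← lintegral_const_mul _ (by fun_prop), ← lintegral_add_left (by fun_prop)]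
    refine lintegral_mono fun y => ?_
    have := ih (x - y)
    rwa [sub_add_eq_add_sub] at this

lemma potential_add_le {ν : Measure ℝ} [SFinite ν] {f χ : ℝ → ℝ≥0∞} (hf : Measurable f)
    (hχ : Measurable χ) {u : ℝ} {c : ℝ≥0∞} (h : ∀ x, f (x + u) ≤ f x + c * χ x) (x : ℝ) :
    potential ν f (x + u) ≤ potential ν f x + c * potential ν χ x := by
  unfold potential
  rw [← ENNReal.tsum_mul_left, ← ENNReal.tsum_add]
  exact ENNReal.tsum_le_tsum fun k => iterate_add_le hf hχ h k x

/-- The convolution operator is its own adjoint with respect to the pairing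
`⟨f, h⟩ = ∫ f u * h (x - u) du`. -/
lemma lintegral_renewalOp_mul {ν : Measure ℝ} [SFinite ν] {f h : ℝ → ℝ≥0∞} (hf : Measurable f)
    (hh : Measurable h) (x : ℝ) :
    ∫⁻ u, renewalOp ν f u * h (x - u) = ∫⁻ u, f u * renewalOp ν h (x - u) := by
  unfold renewalOp
  calc ∫⁻ u, (∫⁻ y, f (u - y) ∂ν) * h (x - u)
      = ∫⁻ u, ∫⁻ y, f (u - y) * h (x - u) ∂ν := by
        refine lintegral_congr fun u => ?_
        rw [lintegral_mul_const _ (by fun_prop)]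
    _ = ∫⁻ y, ∫⁻ u, f (u - y) * h (x - u) ∂volume ∂ν := by
        rw [lintegral_lintegral_swap]
        exact Measurable.aemeasurable (by fun_prop)
    _ = ∫⁻ y, ∫⁻ u, f u * h (x - u - y) ∂volume ∂ν := by
        refine lintegral_congr fun y => ?_
        rw [← lintegral_sub_right_eq_self (fun u => f u * h (x - u - y)) y]
        refine lintegral_congr fun u => ?_
        congr 2
        ring
    _ = ∫⁻ u, ∫⁻ y, f u * h (x - u - y) ∂ν := by
        rw [lintegral_lintegral_swap]
        exact Measurable.aemeasurable (by fun_prop)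
    _ = _ := by
        refine lintegral_congr fun u => ?_
        rw [lintegral_const_mul _ (by fun_prop)]

lemma lintegral_iterate_mul {ν : Measure ℝ} [SFinite ν] {f h : ℝ → ℝ≥0∞} (hf : Measurable f)
    (hh : Measurable h) (k : ℕ) (x : ℝ) :
    ∫⁻ u, (renewalOp ν)^[k] f u * h (x - u) = ∫⁻ u, f u * (renewalOp ν)^[k] h (x - u) := by
  induction k generalizing f with
  | zero => rfl
  | succ k ih =>
    rw [Function.iterate_succ_apply, ih (measurable_renewalOp hf),
      lintegral_renewalOp_mul hf (measurable_iterate hh k), Function.iterate_succ_apply']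

/-! ### Flux and the conservation law -/

/-- The flux of `F` across the point `x`: the average over `y` of the integral of `F` between
`x - y` and `x`. -/
noncomputable def flux (ν : Measure ℝ) (F : ℝ → ℝ) (x : ℝ) : ℝ :=
  ∫ y, (∫ t in (x - y)..x, F t) ∂ν

lemma norm_integral_sub_le {F : ℝ → ℝ} {B : ℝ} (hB : ∀ x, |F x| ≤ B) (x y : ℝ) :
    ‖∫ t in (x - y)..x, F t‖ ≤ B * |y| := by
  have := intervalIntegral.norm_integral_le_of_norm_le_const (a := x - y) (b := x) (f := F) (C := B)
    (fun t _ => hB t)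
  simpa using this

lemma continuous_integral_sub {F : ℝ → ℝ} (hF : Continuous F) (x : ℝ) :
    Continuous fun y => ∫ t in (x - y)..x, F t := by
  have h : (fun y => ∫ t in (x - y)..x, F t) = fun y => -∫ t in x..(x - y), F t := by
    funext y; rw [intervalIntegral.integral_symm]
  rw [h]
  exact ((intervalIntegral.continuous_primitive (fun a b => hF.intervalIntegrable a b) x).comp
    (continuous_const.sub continuous_id)).neg

lemma integrable_integral_sub {ν : Measure ℝ} (hν : Integrable (fun y => y) ν) {F : ℝ → ℝ}
    (hF : Continuous F) {B : ℝ} (hB : ∀ x, |F x| ≤ B) (x : ℝ) :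
    Integrable (fun y => ∫ t in (x - y)..x, F t) ν :=
  (hν.abs.const_mul B).mono' (continuous_integral_sub hF x).aestronglyMeasurable
    (Eventually.of_forall fun y => norm_integral_sub_le hB x y)

lemma abs_flux_le {ν : Measure ℝ} (hν : Integrable (fun y => y) ν) {F : ℝ → ℝ}
    {B : ℝ} (hB : ∀ x, |F x| ≤ B) (x : ℝ) :
    |flux ν F x| ≤ B * ∫ y, |y| ∂ν := by
  rw [← integral_const_mul]
  exact norm_integral_le_of_norm_le (hν.abs.const_mul B)
    (Eventually.of_forall fun y => norm_integral_sub_le hB x y)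

lemma integrable_comp_sub {ν : Measure ℝ} [IsFiniteMeasure ν] {F : ℝ → ℝ}
    (hF : Continuous F) {B : ℝ} (hB : ∀ x, |F x| ≤ B) (x : ℝ) :
    Integrable (fun y => F (x - y)) ν :=
  Integrable.of_bound (by fun_prop) B (Eventually.of_forall fun y => hB _)

/-- Conservation law: what `F` loses on `[a, b]` under convolution with `ν` is the difference of
the fluxes through the endpoints. -/
lemma integral_sub_conv {ν : Measure ℝ} [IsProbabilityMeasure ν] (hν : Integrable (fun y => y) ν)
    {F : ℝ → ℝ} (hF : Continuous F) {B : ℝ} (hB : ∀ x, |F x| ≤ B) (a b : ℝ) :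
    ∫ x in a..b, (F x - ∫ y, F (x - y) ∂ν) = flux ν F b - flux ν F a := by
  have hint : ∀ a b, IntervalIntegrable F volume a b := fun a b => hF.intervalIntegrable a b
  calc ∫ x in a..b, (F x - ∫ y, F (x - y) ∂ν)
      = ∫ x in a..b, ∫ y, (F x - F (x - y)) ∂ν := by
        refine intervalIntegral.integral_congr fun x _ => ?_
        rw [integral_sub (integrable_const _) (integrable_comp_sub hF hB x)]
        simp
    _ = ∫ y, (∫ x in a..b, (F x - F (x - y))) ∂ν := by
        have : IsFiniteMeasure (volume.restrict (Set.uIoc a b)) := by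
          unfold Set.uIoc; infer_instance
        apply intervalIntegral_integral_swap
        refine Integrable.of_bound (C := B + B) ?_ (Eventually.of_forall fun p => ?_)
        · exact Continuous.aestronglyMeasurable (by unfold Function.uncurry; fun_prop)
        · exact (abs_sub _ _).trans (add_le_add (hB _) (hB _))
    _ = ∫ y, ((∫ t in (b - y)..b, F t) - ∫ t in (a - y)..a, F t) ∂ν := by
        refine integral_congr_ae (Eventually.of_forall fun y => ?_)
        simp only
        rw [intervalIntegral.integral_sub (hint _ _)
          (Continuous.intervalIntegrable (by fun_prop) _ _),
          intervalIntegral.integral_comp_sub_right,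
          intervalIntegral.integral_interval_sub_interval_comm' (hint _ _) (hint _ _) (hint _ _)]
    _ = _ := integral_sub (integrable_integral_sub hν hF hB b) (integrable_integral_sub hν hF hB a)

/-- Where `F` is asymptotically constant, its flux is asymptotically the mean of `ν` times `F`. -/
lemma tendsto_flux {ν : Measure ℝ} (hν : Integrable (fun y => y) ν) {F : ℝ → ℝ}
    (hF : Continuous F) {B : ℝ} (hB : ∀ x, |F x| ≤ B) {l : Filter ℝ} [l.IsCountablyGenerated]
    (hl : ∀ y, Tendsto (fun x => F (x - y) - F x) l (𝓝 0)) :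
    Tendsto (fun x => flux ν F x - (∫ y, y ∂ν) * F x) l (𝓝 0) := by
  have hB0 : 0 ≤ B := (abs_nonneg _).trans (hB 0)
  have h1 : ∀ x, flux ν F x - (∫ y, y ∂ν) * F x =
      ∫ y, ((∫ t in (x - y)..x, F t) - y * F x) ∂ν := by
    intro x
    rw [integral_sub (integrable_integral_sub hν hF hB x) (hν.mul_const _), integral_mul_const]
    rfl
  simp only [h1]
  have h0 : (0 : ℝ) = ∫ _, (0 : ℝ) ∂ν := by simp
  rw [h0]
  refine tendsto_integral_filter_of_dominated_convergence (fun y => B * |y| + |y| * B) ?_ ?_ ?_ ?_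
  · exact Eventually.of_forall fun x =>
      ((integrable_integral_sub hν hF hB x).sub (hν.mul_const _)).aestronglyMeasurable
  · refine Eventually.of_forall fun x => Eventually.of_forall fun y => ?_
    refine (norm_sub_le _ _).trans (add_le_add (norm_integral_sub_le hB x y) ?_)
    rw [norm_mul]
    exact mul_le_mul_of_nonneg_left (hB x) (abs_nonneg _)
  · exact (hν.abs.const_mul B).add (hν.abs.mul_const B)
  · refine Eventually.of_forall fun y => ?_
    have h2 : ∀ x, (∫ t in (x - y)..x, F t) - y * F x = ∫ t in (0 : ℝ)..y, (F (x - t) - F x) := by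
      intro x
      rw [intervalIntegral.integral_sub (Continuous.intervalIntegrable (by fun_prop) _ _)
        intervalIntegrable_const, intervalIntegral.integral_comp_sub_left]
      simp
    simp only [h2]
    suffices h3 : Tendsto (fun x => ∫ t in (0 : ℝ)..y, (F (x - t) - F x)) l
        (𝓝 (∫ _ in (0 : ℝ)..y, (0 : ℝ))) by simpa using h3
    refine intervalIntegral.tendsto_integral_filter_of_dominated_convergence (fun _ => B + B)
      ?_ ?_ ?_ ?_
    · exact Eventually.of_forall fun x => Continuous.aestronglyMeasurable (by fun_prop)
    · exact Eventually.of_forall fun x => Eventually.of_forall fun t _ =>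
        (abs_sub _ _).trans (add_le_add (hB _) (hB _))
    · exact intervalIntegrable_const
    · exact Eventually.of_forall fun t _ => hl t

/-- A Lipschitz function that is square integrable on the line vanishes at `+∞`. -/
lemma tendsto_zero_of_sq_integrable {f : ℝ → ℝ} {L : NNReal} (hf : LipschitzWith L f)
    (hint : Integrable (fun x => f x ^ 2)) : Tendsto f atTop (𝓝 0) := by
  rw [Metric.tendsto_atTop]
  intro ε hε
  have hlim := intervalIntegral_tendsto_integral_Ioi (0 : ℝ) hint.integrableOn tendsto_id
  obtain ⟨η, hη, hηL⟩ : ∃ η : ℝ, 0 < η ∧ L * η ≤ ε / 2 := by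
    refine ⟨ε / 2 / (L + 1), by positivity, ?_⟩
    rw [mul_div_assoc', div_le_iff₀ (by positivity)]
    nlinarith [L.coe_nonneg]
  have hd : Tendsto (fun x => ∫ t in x..(x + η), f t ^ 2) atTop (𝓝 0) := by
    have := (hlim.comp (tendsto_atTop_add_const_right atTop η tendsto_id)).sub hlim
    rw [sub_self] at this
    refine this.congr fun x => ?_
    simp only [Function.comp, id]
    exact intervalIntegral.integral_interval_sub_left hint.intervalIntegrable
      hint.intervalIntegrable
  have hpos : 0 < η * (ε / 2) ^ 2 := by positivity
  obtain ⟨N, hN⟩ := eventually_atTop.1 (hd.eventually (gt_mem_nhds hpos))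
  refine ⟨N, fun x hx => ?_⟩
  by_contra hcon
  rw [Real.dist_0_eq_abs, not_lt] at hcon
  -- on `[x, x + η]` the function stays above `ε / 2` in absolute value
  have hlow : ∀ t ∈ Set.Icc x (x + η), (ε / 2) ^ 2 ≤ f t ^ 2 := by
    intro t ht
    have h1 : |f t - f x| ≤ L * |t - x| := by
      simpa [Real.dist_eq] using hf.dist_le_mul t x
    have h2 : |t - x| ≤ η := by rw [abs_le]; constructor <;> linarith [ht.1, ht.2]
    have h3 : |f t - f x| ≤ ε / 2 :=
      h1.trans ((mul_le_mul_of_nonneg_left h2 L.coe_nonneg).trans hηL)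
    have h4 : |f x| ≤ |f t| + |f t - f x| := by
      have := abs_sub (f t) (f t - f x)
      simpa using this
    rw [← sq_abs (f t)]
    exact pow_le_pow_left₀ (by positivity) (by linarith) 2
  have := intervalIntegral.integral_mono_on (a := x) (b := x + η) (by linarith)
    (intervalIntegrable_const (c := (ε / 2) ^ 2)) hint.intervalIntegrable hlow
  simp only [intervalIntegral.integral_const, add_sub_cancel_left, smul_eq_mul] at this
  linarith [hN x hx]

/-! ### A renewal theorem from an energy estimate -/

lemma continuous_conv {ν : Measure ℝ} [IsFiniteMeasure ν] {F : ℝ → ℝ}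
    (hF : Continuous F) {B : ℝ} (hB : ∀ x, |F x| ≤ B) : Continuous fun x => ∫ y, F (x - y) ∂ν := by
  refine continuous_of_dominated (bound := fun _ => B) (fun x => by fun_prop)
    (fun x => Eventually.of_forall fun y => hB _) (integrable_const _)
    (Eventually.of_forall fun y => by fun_prop)

/-- Energy estimate. If `V` is bounded and `V - V * ν = φ` is integrable, then
`∫∫ (V x - V (x - y))² ν(dy) dx` is finite: its inner integral equals
`2 V φ - (V² - V² * ν)`, and the conservation law bounds the integral of the second term. -/
lemma integrable_energy {ν : Measure ℝ} [IsProbabilityMeasure ν] (hν : Integrable (fun y => y) ν)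
    {V φ : ℝ → ℝ} (hV : Continuous V) {B : ℝ} (hB : ∀ x, |V x| ≤ B) (hφc : Continuous φ)
    (hφi : Integrable φ) (heq : ∀ x, V x = φ x + ∫ y, V (x - y) ∂ν) :
    Integrable (fun p : ℝ × ℝ => (V p.1 - V (p.1 - p.2)) ^ 2) (volume.prod ν) := by
  have hB0 : 0 ≤ B := (abs_nonneg _).trans (hB 0)
  have hV2 : Continuous fun x => V x ^ 2 := hV.pow 2
  have hB2 : ∀ x, |V x ^ 2| ≤ B ^ 2 := fun x => by
    rw [abs_pow]; exact pow_le_pow_left₀ (abs_nonneg _) (hB x) 2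
  have hD : ∀ x, ∫ y, (V x - V (x - y)) ^ 2 ∂ν =
      2 * (V x * φ x) - (V x ^ 2 - ∫ y, V (x - y) ^ 2 ∂ν) := by
    intro x
    have i1 := integrable_comp_sub (ν := ν) hV hB x
    have i2 := integrable_comp_sub (ν := ν) hV2 hB2 x
    have e : ∀ y, (V x - V (x - y)) ^ 2 = V x ^ 2 - 2 * V x * V (x - y) + V (x - y) ^ 2 :=
      fun y => by ring
    simp only [e]
    have i3 : Integrable (fun y => V x ^ 2 - 2 * V x * V (x - y)) ν :=
      (integrable_const _).sub (i1.const_mul _)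
    rw [integral_add i3 i2, integral_sub (integrable_const _) (i1.const_mul _), integral_const_mul]
    have := heq x
    have h' : ∫ y, V (x - y) ∂ν = V x - φ x := by linarith
    rw [h']
    simp
    ring
  have hDc : Continuous fun x => ∫ y, (V x - V (x - y)) ^ 2 ∂ν := by
    simp only [hD]
    have := continuous_conv (ν := ν) hV2 hB2
    fun_prop
  have hDi : Integrable fun x => ∫ y, (V x - V (x - y)) ^ 2 ∂ν := by
    refine (aecover_Ioc (μ := volume) (a := fun n : ℕ => -(n : ℝ)) (b := fun n : ℕ => (n : ℝ))
      (l := atTop)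
      (tendsto_neg_atTop_atBot.comp tendsto_natCast_atTop_atTop)
      tendsto_natCast_atTop_atTop).integrable_of_integral_bounded_of_nonneg_ae
      (2 * (B * ∫ x, |φ x|) + 2 * (B ^ 2 * ∫ y, |y| ∂ν)) ?_ ?_ ?_
    · exact fun n => hDc.integrableOn_Ioc
    · exact Eventually.of_forall fun x => integral_nonneg fun y => sq_nonneg _
    · refine Eventually.of_forall fun n => ?_
      have hn : -(n : ℝ) ≤ n := by linarith [n.cast_nonneg (α := ℝ)]
      rw [← intervalIntegral.integral_of_le hn]
      simp only [hD]
      rw [intervalIntegral.integral_sub, integral_sub_conv hν hV2 hB2,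
        intervalIntegral.integral_const_mul]
      · have f1 := abs_le.1 (abs_flux_le hν hB2 (n : ℝ))
        have f2 := abs_le.1 (abs_flux_le hν hB2 (-(n : ℝ)))
        have f3 : ∫ x in (-(n : ℝ))..n, V x * φ x ≤ B * ∫ x, |φ x| := by
          rw [← integral_const_mul, intervalIntegral.integral_of_le hn]
          refine (setIntegral_mono_on (hV.mul hφc).integrableOn_Ioc
            (hφi.abs.const_mul B).integrableOn measurableSet_Ioc (fun x _ => ?_)).trans
            (setIntegral_le_integral (hφi.abs.const_mul B)
              (Eventually.of_forall fun x => mul_nonneg hB0 (abs_nonneg _)))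
          refine (le_abs_self _).trans ?_
          rw [Pi.mul_apply, abs_mul]
          exact mul_le_mul_of_nonneg_right (hB x) (abs_nonneg _)
        linarith [f1.1, f2.2]
      · exact Continuous.intervalIntegrable (by fun_prop) _ _
      · have := continuous_conv (ν := ν) hV2 hB2
        exact Continuous.intervalIntegrable (by fun_prop) _ _
  rw [integrable_prod_iff (Continuous.aestronglyMeasurable (by fun_prop))]
  constructor
  · refine Eventually.of_forall fun x => Integrable.of_bound
      (Continuous.aestronglyMeasurable (by fun_prop)) ((B + B) ^ 2)
      (Eventually.of_forall fun y => ?_)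
    simp only [norm_pow]
    exact pow_le_pow_left₀ (norm_nonneg _) ((abs_sub _ _).trans (add_le_add (hB _) (hB _))) 2
  · simpa using hDi

/-- Finite energy forces the increments `V (x - y) - V x` to vanish at `+∞` for `ν`-almost every
`y`. The `y` for which they vanish form a group, which by non-arithmeticity is dense; the Lipschitz
property then covers every `y`. -/
lemma tendsto_increment {ν : Measure ℝ} [IsProbabilityMeasure ν] (hν : Integrable (fun y => y) ν)
    (hna : ∀ a : ℝ, ¬ ∀ᵐ y ∂ν, ∃ n : ℤ, y = n * a)
    {V φ : ℝ → ℝ} {L : NNReal} (hV : LipschitzWith L V) {B : ℝ} (hB : ∀ x, |V x| ≤ B)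
    (hφc : Continuous φ)
    (hφi : Integrable φ) (heq : ∀ x, V x = φ x + ∫ y, V (x - y) ∂ν) (y : ℝ) :
    Tendsto (fun x => V (x - y) - V x) atTop (𝓝 0) := by
  let H : AddSubgroup ℝ :=
    { carrier := {y | Tendsto (fun x => V (x - y) - V x) atTop (𝓝 0)}
      zero_mem' := by simp
      add_mem' := by
        intro a b ha hb
        have h1 := (ha.comp (tendsto_atTop_add_const_right atTop (-b) tendsto_id)).add hb
        rw [add_zero] at h1
        refine h1.congr fun x => ?_
        simp only [Function.comp, id]
        rw [show x + -b - a = x - (a + b) by ring, show x + -b = x - b by ring]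
        ring
      neg_mem' := by
        intro a ha
        have h1 := (ha.comp (tendsto_atTop_add_const_right atTop a tendsto_id)).neg
        rw [neg_zero] at h1
        refine h1.congr fun x => ?_
        simp only [Function.comp, id]
        rw [show x + a - a = x by ring, show x - -a = x + a by ring]
        ring }
  have hmem : ∀ z, z ∈ H ↔ Tendsto (fun x => V (x - z) - V x) atTop (𝓝 0) := fun z => Iff.rfl
  have hae : ∀ᵐ y ∂ν, y ∈ H := by
    filter_upwards [(integrable_energy hν hV.continuous hB hφc hφi heq).prod_left_ae] with y hy
    rw [hmem]
    have hLip : LipschitzWith (L + L) fun x => V x - V (x - y) := by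
      have h2 : LipschitzWith L fun x => V (x - y) := by
        refine LipschitzWith.of_dist_le_mul fun a b => ?_
        simpa [Real.dist_eq] using hV.dist_le_mul (a - y) (b - y)
      exact hV.sub h2
    have := (tendsto_zero_of_sq_integrable hLip hy).neg
    simpa using this
  have hdense : Dense (H : Set ℝ) := by
    refine (AddSubgroup.dense_or_cyclic H).resolve_right ?_
    rintro ⟨a, ha⟩
    refine hna a ?_
    filter_upwards [hae] with y hy
    rw [ha, AddSubgroup.mem_closure_singleton] at hy
    obtain ⟨n, hn⟩ := hy
    exact ⟨n, by rw [← hn]; simp⟩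
  rw [Metric.tendsto_atTop]
  intro ε hε
  obtain ⟨z, hz, hzH⟩ := Metric.dense_iff.1 hdense y (ε / 2 / (L + 1)) (by positivity)
  obtain ⟨N, hN⟩ := Metric.tendsto_atTop.1 ((hmem z).1 hzH) (ε / 2) (by positivity)
  refine ⟨N, fun x hx => ?_⟩
  have h1 := hN x hx
  have h2 := hV.dist_le_mul (x - y) (x - z)
  rw [Metric.mem_ball, lt_div_iff₀ (by positivity)] at hz
  have h3 : dist (x - y) (x - z) = dist z y := by
    rw [Real.dist_eq, Real.dist_eq]
    congr 1
    ring
  rw [h3] at h2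
  rw [Real.dist_eq] at h1 h2 hz ⊢
  have h4 : |V (x - y) - V x - 0| ≤ |V (x - y) - V (x - z)| + |V (x - z) - V x - 0| := by
    have := abs_add_le (V (x - y) - V (x - z)) (V (x - z) - V x - 0)
    simpa using this
  rw [Real.dist_eq] at h2
  nlinarith [abs_nonneg (z - y)]

/-- The key renewal theorem for a single bounded Lipschitz solution of the renewal equation
`V = φ + V * ν` vanishing at `-∞`. -/
lemma tendsto_renewal {ν : Measure ℝ} [IsProbabilityMeasure ν] (hν : Integrable (fun y => y) ν)
    (hna : ∀ a : ℝ, ¬ ∀ᵐ y ∂ν, ∃ n : ℤ, y = n * a)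
    {V φ : ℝ → ℝ} {L : NNReal} (hV : LipschitzWith L V) {B : ℝ} (hB : ∀ x, |V x| ≤ B)
    (hφc : Continuous φ)
    (hφi : Integrable φ) (heq : ∀ x, V x = φ x + ∫ y, V (x - y) ∂ν)
    (hbot : Tendsto V atBot (𝓝 0)) :
    Tendsto (fun x => (∫ y, y ∂ν) * V x) atTop (𝓝 (∫ x, φ x)) := by
  have hflux : ∀ a b, flux ν V b - flux ν V a = ∫ x in a..b, φ x := by
    intro a b
    rw [← integral_sub_conv hν hV.continuous hB]
    refine intervalIntegral.integral_congr fun x _ => ?_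
    linarith [heq x]
  have hinc := tendsto_increment hν hna hV hB hφc hφi heq
  have htop := tendsto_flux hν hV.continuous hB hinc
  have hbot' : Tendsto (flux ν V) atBot (𝓝 0) := by
    have h1 := tendsto_flux hν hV.continuous hB (l := atBot) (fun y => by
      have := (hbot.comp (tendsto_atBot_add_const_right atBot (-y) tendsto_id)).sub hbot
      simpa [Function.comp_def, sub_eq_add_neg] using this)
    have h2 := h1.add (hbot.const_mul (∫ y, y ∂ν))
    simpa using h2
  have hcross : Tendsto (flux ν V) atTop (𝓝 (∫ x, φ x)) := by
    have h1 : Tendsto (fun n : ℝ => ∫ x in (-n)..n, φ x) atTop (𝓝 (∫ x, φ x)) :=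
      intervalIntegral_tendsto_integral hφi tendsto_neg_atTop_atBot tendsto_id
    have h2 := h1.add (hbot'.comp tendsto_neg_atTop_atBot)
    rw [add_zero] at h2
    refine h2.congr fun x => ?_
    rw [← hflux]
    simp
  have := hcross.sub htop
  simpa using this

/-! ### Potential of the tent function -/

/-- The tent function supported on `[0, δ]`, used as a smoothing kernel. -/
noncomputable def tent (δ x : ℝ) : ℝ := max 0 (min x (δ - x))

lemma tent_nonneg (δ x : ℝ) : 0 ≤ tent δ x := le_max_left _ _

lemma continuous_tent (δ : ℝ) : Continuous (tent δ) := by unfold tent; fun_prop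

lemma tent_eq_zero {δ x : ℝ} (h : x ∉ Set.Icc 0 δ) : tent δ x = 0 := by
  rw [Set.mem_Icc, not_and_or, not_le, not_le] at h
  refine max_eq_left ?_
  rcases h with h | h
  · exact (min_le_left _ _).trans h.le
  · exact (min_le_right _ _).trans (by linarith)

lemma tent_le {δ : ℝ} (hδ : 0 < δ) (x : ℝ) : tent δ x ≤ δ := by
  by_cases h : x ∈ Set.Icc 0 δ
  · exact max_le hδ.le ((min_le_left _ _).trans h.2)
  · rw [tent_eq_zero h]; exact hδ.le

lemma tent_add_le (δ x u : ℝ) : tent δ (x + u) ≤ tent δ x + |u| := by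
  unfold tent
  have h1 := le_abs_self u
  have h2 := neg_abs_le u
  refine max_le (add_nonneg (le_max_left _ _) (abs_nonneg u)) ?_
  refine le_trans ?_ (add_le_add_left (le_max_right _ _) _)
  rw [← min_add_add_right]
  exact min_le_min (by linarith) (by linarith)

lemma integrable_tent (δ : ℝ) : Integrable (tent δ) :=
  (continuous_tent δ).integrable_of_hasCompactSupport
    (HasCompactSupport.intro isCompact_Icc fun _ hx => tent_eq_zero hx)

lemma integral_tent_pos {δ : ℝ} (hδ : 0 < δ) : 0 < ∫ x, tent δ x :=
  (continuous_tent δ).integral_pos_of_hasCompactSupport_nonneg_nonzero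
    (HasCompactSupport.intro isCompact_Icc fun _ hx => tent_eq_zero hx)
    (tent_nonneg δ) (x := δ / 2) (by
      unfold tent
      rw [show δ - δ / 2 = δ / 2 by ring, min_self]
      exact (lt_max_of_lt_right (by linarith)).ne')

lemma measurable_tent (δ : ℝ) : Measurable fun x => ENNReal.ofReal (tent δ x) :=
  (continuous_tent δ).measurable.ennreal_ofReal

/-- The potential of the tent function is bounded and continuous, and the mean of `ν` times the
potential tends at `+∞` to the integral of the tent. The Laplace transform of `ν` being less than one at `s` makes the walk
drift to `+∞` exponentially fast, whence finiteness and decay at `-∞`. -/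
lemma potential_tent {ν : Measure ℝ} [IsProbabilityMeasure ν] (hν : Integrable (fun y => y) ν)
    (hna : ∀ a : ℝ, ¬ ∀ᵐ y ∂ν, ∃ n : ℤ, y = n * a) {s : ℝ} (hs : 0 < s)
    (hρ1 : ∫⁻ y, ENNReal.ofReal (Real.exp (-(s * y))) ∂ν < 1) {δ : ℝ} (hδ : 0 < δ) :
    ∃ B : ℝ≥0∞, B ≠ ∞ ∧ (∀ x, potential ν (fun x => ENNReal.ofReal (tent δ x)) x ≤ B) ∧
      Continuous (fun x => (potential ν (fun x => ENNReal.ofReal (tent δ x)) x).toReal) ∧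
      Tendsto (fun x => (∫ y, y ∂ν) * (potential ν (fun x => ENNReal.ofReal (tent δ x)) x).toReal)
        atTop (𝓝 (∫ x, tent δ x)) := by
  set φ : ℝ → ℝ≥0∞ := fun x => ENNReal.ofReal (tent δ x) with hφ
  set ρ := ∫⁻ y, ENNReal.ofReal (Real.exp (-(s * y))) ∂ν with hρ
  have hφm : Measurable φ := measurable_tent δ
  have hexp : ∀ x, φ x ≤ ENNReal.ofReal δ * ENNReal.ofReal (Real.exp (s * x)) := by
    intro x
    by_cases hx : x ∈ Set.Icc 0 δ
    · rw [← ENNReal.ofReal_mul hδ.le]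
      refine ENNReal.ofReal_le_ofReal ((tent_le hδ x).trans ?_)
      exact le_mul_of_one_le_right hδ.le (Real.one_le_exp (mul_nonneg hs.le hx.1))
    · simp [hφ, tent_eq_zero hx]
  have hpe := potential_le_exp hρ.symm hρ1 hexp
  set A := ENNReal.ofReal δ * (1 - ρ)⁻¹ with hA
  have hAtop : A ≠ ∞ := by
    refine ENNReal.mul_ne_top ENNReal.ofReal_ne_top ?_
    simpa [tsub_eq_zero_iff_le] using hρ1
  set B := A * ENNReal.ofReal (Real.exp (s * δ)) with hBdef
  have hBtop : B ≠ ∞ := ENNReal.mul_ne_top hAtop ENNReal.ofReal_ne_top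
  have hB : ∀ x, potential ν φ x ≤ B := by
    refine potential_le_of_le_on hφm (K := Set.Icc 0 δ) (fun x hx => by
      simp [hφ, tent_eq_zero hx]) fun x hx => (hpe x).trans ?_
    rw [hBdef]
    gcongr
    exact hx.2
  have hfin : ∀ x, potential ν φ x ≠ ∞ := fun x => ne_top_of_le_ne_top hBtop (hB x)
  set V : ℝ → ℝ := fun x => (potential ν φ x).toReal with hV
  have hVB : ∀ x, V x ≤ B.toReal := fun x => ENNReal.toReal_mono hBtop (hB x)
  have hV0 : ∀ x, 0 ≤ V x := fun x => ENNReal.toReal_nonneg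
  have hVabs : ∀ x, |V x| ≤ B.toReal := fun x => by rw [abs_of_nonneg (hV0 x)]; exact hVB x
  obtain ⟨B', hB'top, hB'⟩ := exists_potential_le hs hρ.symm hρ1 (-1) (δ + 1)
  -- small increments are controlled by the potential of a slightly larger interval,
  -- large ones by the supremum of `V`
  have hstep : ∀ x u, V (x + u) ≤ V x + (B.toReal + B'.toReal) * |u| := by
    intro x u
    rcases le_or_gt |u| 1 with hu | hu
    · have h1 : potential ν φ (x + u) ≤ potential ν φ x + ENNReal.ofReal |u| *
          potential ν ((Set.Icc (-1) (δ + 1)).indicator 1) x := by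
        refine potential_add_le hφm (measurable_one.indicator measurableSet_Icc) (fun x => ?_) x
        by_cases hx : x ∈ Set.Icc (-1) (δ + 1)
        · rw [Set.indicator_of_mem hx, Pi.one_apply, mul_one,
            ← ENNReal.ofReal_add (tent_nonneg _ _) (abs_nonneg _)]
          exact ENNReal.ofReal_le_ofReal (tent_add_le δ x u)
        · have : x + u ∉ Set.Icc 0 δ := by
            intro h
            rw [abs_le] at hu
            exact hx ⟨by linarith [h.1, hu.2], by linarith [h.2, hu.1]⟩
          simp [hφ, tent_eq_zero this]
      have h2 : potential ν φ (x + u) ≤ potential ν φ x + ENNReal.ofReal |u| * B' :=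
        h1.trans (by gcongr; exact hB' x)
      have h3 := ENNReal.toReal_mono (ENNReal.add_ne_top.2 ⟨hfin x,
        ENNReal.mul_ne_top ENNReal.ofReal_ne_top hB'top⟩) h2
      rw [ENNReal.toReal_add (hfin x) (ENNReal.mul_ne_top ENNReal.ofReal_ne_top hB'top),
        ENNReal.toReal_mul, ENNReal.toReal_ofReal (abs_nonneg _)] at h3
      have : 0 ≤ B.toReal * |u| := by positivity
      change V (x + u) ≤ V x + _ at h3
      linarith
    · have h1 := hVB (x + u)
      have h2 := hV0 x
      have h3 : 0 ≤ B'.toReal * |u| := by positivity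
      nlinarith [ENNReal.toReal_nonneg (a := B)]
  have hLip : LipschitzWith (B.toNNReal + B'.toNNReal) V := by
    refine LipschitzWith.of_le_add_mul _ fun x y => ?_
    have := hstep y (x - y)
    rw [add_sub_cancel] at this
    rw [Real.dist_eq]
    exact this
  have heq : ∀ x, V x = tent δ x + ∫ y, V (x - y) ∂ν := by
    intro x
    have h1 := potential_eq (ν := ν) hφm x
    have h2 : renewalOp ν (potential ν φ) x ≠ ∞ := by
      intro h
      rw [h, add_top] at h1
      exact hfin x h1
    change (potential ν φ x).toReal = _
    rw [h1, ENNReal.toReal_add ENNReal.ofReal_ne_top h2, ENNReal.toReal_ofReal (tent_nonneg _ _)]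
    congr 1
    have hm := measurable_potential (ν := ν) hφm
    exact (integral_toReal (Measurable.aemeasurable (by fun_prop))
      (Eventually.of_forall fun y => (hfin _).lt_top)).symm
  have hbot : Tendsto V atBot (𝓝 0) := by
    have h1 : Tendsto (fun x => A.toReal * Real.exp (s * x)) atBot (𝓝 0) := by
      have := (Real.tendsto_exp_atBot.comp (tendsto_id.const_mul_atBot hs)).const_mul A.toReal
      simpa [Function.comp_def] using this
    refine squeeze_zero hV0 (fun x => ?_) h1
    have := ENNReal.toReal_mono (ENNReal.mul_ne_top hAtop ENNReal.ofReal_ne_top) (hpe x)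
    rwa [ENNReal.toReal_mul, ENNReal.toReal_ofReal (Real.exp_pos _).le] at this
  exact ⟨B, hBtop, hB, hLip.continuous, tendsto_renewal hν hna hLip hVabs (continuous_tent δ)
    (integrable_tent δ) heq hbot⟩

/-! ### The additive implicit renewal theorem -/

lemma lintegral_exp_mul_tent_ne_top {c : ℝ} (hc : 0 < c) {δ : ℝ} (hδ : 0 < δ) (x : ℝ) :
    ∫⁻ u, ENNReal.ofReal (Real.exp (c * u)) * ENNReal.ofReal (tent δ (x - u)) ≠ ∞ := by
  have hle : ∀ u, ENNReal.ofReal (Real.exp (c * u)) * ENNReal.ofReal (tent δ (x - u)) ≤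
      (Set.Icc (x - δ) x).indicator
        (fun _ => ENNReal.ofReal (Real.exp (c * x)) * ENNReal.ofReal δ) u := by
    intro u
    by_cases hu : u ∈ Set.Icc (x - δ) x
    · rw [Set.indicator_of_mem hu]
      gcongr
      · exact hu.2
      · exact tent_le hδ _
    · have : x - u ∉ Set.Icc 0 δ := fun h => hu ⟨by linarith [h.2], by linarith [h.1]⟩
      simp [tent_eq_zero this]
  refine ne_top_of_le_ne_top ?_ (lintegral_mono hle)
  rw [lintegral_indicator measurableSet_Icc, setLIntegral_const, Real.volume_Icc]
  finiteness

/-- If `r` is dominated by `exp (q x)`, with arbitrarily small constant up to a term of smaller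
exponential rate, then the smoothed iterates `(Tⁿ r) * tent` tend to zero. -/
lemma tendsto_iterate_zero {ν : Measure ℝ} [IsProbabilityMeasure ν] {s q : ℝ} (hs : 0 < s)
    (hq0 : 0 < q) (hρ1 : ∫⁻ y, ENNReal.ofReal (Real.exp (-(s * y))) ∂ν < 1)
    (hq : ∫⁻ y, ENNReal.ofReal (Real.exp (-(q * y))) ∂ν ≤ 1) {r : ℝ → ℝ≥0∞} (hr : Measurable r)
    (hsmall : ∀ ε : ℝ≥0∞, 0 < ε → ∃ A : ℝ≥0∞, A ≠ ∞ ∧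
      ∀ x, r x ≤ A * ENNReal.ofReal (Real.exp (s * x)) + ε * ENNReal.ofReal (Real.exp (q * x)))
    {δ : ℝ} (hδ : 0 < δ) (x : ℝ) :
    Tendsto (fun n => ∫⁻ u, r u *
      (renewalOp ν)^[n] (fun x => ENNReal.ofReal (tent δ x)) (x - u)) atTop (𝓝 0) := by
  set ρ := ∫⁻ y, ENNReal.ofReal (Real.exp (-(s * y))) ∂ν with hρ
  have hφm := measurable_tent δ
  rw [ENNReal.tendsto_nhds_zero]
  intro η hη
  have hη2 : η / 2 ≠ 0 := by simpa using hη.ne'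
  obtain ⟨ε, hε, hεη⟩ := ENNReal.exists_pos_mul_lt (lintegral_exp_mul_tent_ne_top hq0 hδ x) hη2
  obtain ⟨A, hA, hAr⟩ := hsmall ε hε
  set E := ∫⁻ u, ENNReal.ofReal (Real.exp (s * u)) * ENNReal.ofReal (tent δ (x - u)) with hE
  have hEtop : E ≠ ∞ := lintegral_exp_mul_tent_ne_top hs hδ x
  have hlim : Tendsto (fun n : ℕ => A * E * ρ ^ n) atTop (𝓝 0) := by
    have := ENNReal.Tendsto.const_mul (a := A * E)
      (ENNReal.tendsto_pow_atTop_nhds_zero_of_lt_one hρ1)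
      (Or.inr (ENNReal.mul_ne_top hA hEtop))
    simpa using this
  filter_upwards [hlim.eventually (gt_mem_nhds (pos_iff_ne_zero.2 hη2))] with n hn
  rw [← lintegral_iterate_mul hr hφm]
  have hb := iterate_le_exp hρ.symm hq hAr n
  calc ∫⁻ u, (renewalOp ν)^[n] r u * ENNReal.ofReal (tent δ (x - u))
      ≤ ∫⁻ u, (A * ρ ^ n * (ENNReal.ofReal (Real.exp (s * u)) * ENNReal.ofReal (tent δ (x - u))) +
          ε * (ENNReal.ofReal (Real.exp (q * u)) * ENNReal.ofReal (tent δ (x - u)))) := by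
        refine lintegral_mono fun u => ?_
        rw [← mul_assoc, ← mul_assoc, ← add_mul]
        gcongr
        exact hb u
    _ = A * ρ ^ n * E + ε *
          ∫⁻ u, ENNReal.ofReal (Real.exp (q * u)) * ENNReal.ofReal (tent δ (x - u)) := by
        have hm : Measurable fun u => ENNReal.ofReal (tent δ (x - u)) :=
          hφm.comp (measurable_const.sub measurable_id)
        rw [lintegral_add_left (by fun_prop), lintegral_const_mul _ (by fun_prop),
          lintegral_const_mul _ (by fun_prop)]
    _ ≤ η / 2 + η / 2 := by
        refine add_le_add ?_ hεη.le
        rw [mul_right_comm]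
        exact hn.le
    _ = η := ENNReal.add_halves η

/-- Representation of the smoothed solution: if `g = r - T r` is integrable, then
`r * tent = g * (potential of tent)`. -/
lemma integral_mul_potential {ν : Measure ℝ} [IsProbabilityMeasure ν] {s q : ℝ} (hs : 0 < s)
    (hq0 : 0 < q) (hρ1 : ∫⁻ y, ENNReal.ofReal (Real.exp (-(s * y))) ∂ν < 1)
    (hq : ∫⁻ y, ENNReal.ofReal (Real.exp (-(q * y))) ∂ν ≤ 1) {r : ℝ → ℝ≥0∞} (hr : Measurable r)
    (hrq : ∀ x, r x ≤ ENNReal.ofReal (Real.exp (q * x)))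
    (hsmall : ∀ ε : ℝ≥0∞, 0 < ε → ∃ A : ℝ≥0∞, A ≠ ∞ ∧
      ∀ x, r x ≤ A * ENNReal.ofReal (Real.exp (s * x)) + ε * ENNReal.ofReal (Real.exp (q * x)))
    (hg : Integrable fun x => (r x).toReal - (renewalOp ν r x).toReal)
    {δ : ℝ} (hδ : 0 < δ) {B : ℝ≥0∞} (hBtop : B ≠ ∞)
    (hB : ∀ x, potential ν (fun x => ENNReal.ofReal (tent δ x)) x ≤ B) (x : ℝ) :
    ∫ u, ((r u).toReal - (renewalOp ν r u).toReal) *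
      (potential ν (fun x => ENNReal.ofReal (tent δ x)) (x - u)).toReal =
    (∫⁻ u, r u * ENNReal.ofReal (tent δ (x - u))).toReal := by
  have hφm := measurable_tent δ
  have hI0 := tendsto_iterate_zero hs hq0 hρ1 hq hr hsmall hδ x
  set φ : ℝ → ℝ≥0∞ := fun x => ENNReal.ofReal (tent δ x) with hφ
  set I : ℕ → ℝ≥0∞ := fun n => ∫⁻ u, r u * (renewalOp ν)^[n] φ (x - u) with hI
  have hwm : ∀ k, Measurable fun u => (renewalOp ν)^[k] φ (x - u) := fun k =>
    (measurable_iterate hφm k).comp (measurable_const.sub measurable_id)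
  have hTr : Measurable (renewalOp ν r) := measurable_renewalOp hr
  have hIfin : ∀ k, I k ≠ ∞ := by
    intro k
    have h1 : I k = ∫⁻ u, (renewalOp ν)^[k] r u * φ (x - u) :=
      (lintegral_iterate_mul hr hφm k x).symm
    rw [h1]
    refine ne_top_of_le_ne_top (lintegral_exp_mul_tent_ne_top hq0 hδ x)
      (lintegral_mono fun u => ?_)
    gcongr
    simpa using iterate_le_exp (s := s) (A := 0) (B := 1) rfl hq (by simpa using hrq) k u
  have hIsucc : ∀ k, ∫⁻ u, renewalOp ν r u * (renewalOp ν)^[k] φ (x - u) = I (k + 1) := by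
    intro k
    rw [lintegral_renewalOp_mul hr (measurable_iterate hφm k)]
    simp only [hI, Function.iterate_succ_apply']
  have hpart : ∀ k, ∫ u, ((r u).toReal - (renewalOp ν r u).toReal) *
      ((renewalOp ν)^[k] φ (x - u)).toReal = (I k).toReal - (I (k + 1)).toReal ∧
      Integrable fun u => ((r u).toReal - (renewalOp ν r u).toReal) *
        ((renewalOp ν)^[k] φ (x - u)).toReal := by
    intro k
    have m1 : AEMeasurable (fun u => r u * (renewalOp ν)^[k] φ (x - u)) volume :=
      (hr.mul (hwm k)).aemeasurable
    have m2 : AEMeasurable (fun u => renewalOp ν r u * (renewalOp ν)^[k] φ (x - u)) volume :=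
      (hTr.mul (hwm k)).aemeasurable
    have f1 : ∫⁻ u, r u * (renewalOp ν)^[k] φ (x - u) ≠ ∞ := hIfin k
    have f2 : ∫⁻ u, renewalOp ν r u * (renewalOp ν)^[k] φ (x - u) ≠ ∞ := by
      rw [hIsucc]; exact hIfin _
    have e : (fun u => ((r u).toReal - (renewalOp ν r u).toReal) *
        ((renewalOp ν)^[k] φ (x - u)).toReal) = fun u =>
        (r u * (renewalOp ν)^[k] φ (x - u)).toReal -
        (renewalOp ν r u * (renewalOp ν)^[k] φ (x - u)).toReal := by
      funext u
      rw [ENNReal.toReal_mul, ENNReal.toReal_mul, sub_mul]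
    have i1 := integrable_toReal_of_lintegral_ne_top m1 f1
    have i2 := integrable_toReal_of_lintegral_ne_top m2 f2
    rw [e]
    refine ⟨?_, i1.sub i2⟩
    rw [integral_sub i1 i2, integral_toReal m1 (ae_lt_top' m1 f1),
      integral_toReal m2 (ae_lt_top' m2 f2), hIsucc]
  have hsum : ∀ n, ∫ u, ((r u).toReal - (renewalOp ν r u).toReal) *
      ∑ k ∈ Finset.range n, ((renewalOp ν)^[k] φ (x - u)).toReal =
      (I 0).toReal - (I n).toReal := by
    intro n
    simp only [Finset.mul_sum]
    rw [integral_finsetSum _ fun k _ => (hpart k).2]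
    rw [Finset.sum_congr rfl fun k _ => (hpart k).1]
    exact Finset.sum_range_sub' (fun k => (I k).toReal) n
  have hfin : ∀ y, ∑' k, (renewalOp ν)^[k] φ y ≠ ∞ := fun y => ne_top_of_le_ne_top hBtop (hB y)
  have hlim1 : Tendsto (fun n => ∫ u, ((r u).toReal - (renewalOp ν r u).toReal) *
      ∑ k ∈ Finset.range n, ((renewalOp ν)^[k] φ (x - u)).toReal) atTop
      (𝓝 (∫ u, ((r u).toReal - (renewalOp ν r u).toReal) * (potential ν φ (x - u)).toReal)) := by
    refine tendsto_integral_of_dominated_convergence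
      (fun u => |(r u).toReal - (renewalOp ν r u).toReal| * B.toReal) ?_ (hg.abs.mul_const _) ?_ ?_
    · intro n
      simp only [Finset.mul_sum]
      exact (integrable_finsetSum _ fun k _ => (hpart k).2).aestronglyMeasurable
    · intro n
      refine Eventually.of_forall fun u => ?_
      rw [norm_mul, Real.norm_eq_abs]
      gcongr
      rw [Real.norm_of_nonneg (Finset.sum_nonneg fun _ _ => ENNReal.toReal_nonneg),
        ← ENNReal.toReal_sum fun k _ => ENNReal.ne_top_of_tsum_ne_top (hfin _) k]
      exact ENNReal.toReal_mono hBtop ((ENNReal.sum_le_tsum _).trans (hB _))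
    · refine Eventually.of_forall fun u => ?_
      have h := (ENNReal.hasSum_toReal (hfin (x - u))).tendsto_sum_nat
      rw [← ENNReal.tsum_toReal_eq fun k => ENNReal.ne_top_of_tsum_ne_top (hfin (x - u)) k] at h
      exact h.const_mul _
  have hlim2 : Tendsto (fun n => (I 0).toReal - (I n).toReal) atTop (𝓝 ((I 0).toReal - 0)) := by
    refine tendsto_const_nhds.sub ?_
    simpa [Function.comp_def] using (ENNReal.tendsto_toReal ENNReal.zero_ne_top).comp hI0
  simp only [hsum] at hlim1
  have := tendsto_nhds_unique hlim1 hlim2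
  rw [this, sub_zero]
  rfl

/-- Unsmoothing: if `exp (-q x) r x` is nonincreasing, then `r` is squeezed between multiples of its
average against the tent function, up to factors `exp (± q δ)`. -/
lemma tent_sandwich {q : ℝ} (hq0 : 0 < q) {r : ℝ → ℝ≥0∞}
    (hmono : ∀ x y, 0 ≤ y → r x ≤ ENNReal.ofReal (Real.exp (q * y)) * r (x - y))
    {δ : ℝ} (x : ℝ) :
    r x * ENNReal.ofReal (∫ t, tent δ t) ≤ ENNReal.ofReal (Real.exp (q * δ)) *
        ∫⁻ u, r u * ENNReal.ofReal (tent δ (x - u)) ∧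
      ∫⁻ u, r u * ENNReal.ofReal (tent δ (x + δ - u)) ≤
        ENNReal.ofReal (Real.exp (q * δ)) * (r x * ENNReal.ofReal (∫ t, tent δ t)) := by
  have hφm := measurable_tent δ
  have hc : ∀ x, ∫⁻ u, ENNReal.ofReal (tent δ (x - u)) = ENNReal.ofReal (∫ t, tent δ t) := by
    intro x
    rw [lintegral_sub_left_eq_self (fun t => ENNReal.ofReal (tent δ t)) x,
      ofReal_integral_eq_lintegral_ofReal (integrable_tent δ)
        (Eventually.of_forall (tent_nonneg δ))]
  have hm : ∀ x, Measurable fun u => ENNReal.ofReal (tent δ (x - u)) := fun x =>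
    hφm.comp (measurable_const.sub measurable_id)
  constructor
  · rw [← hc x, ← lintegral_const_mul _ (hm x), ← lintegral_const_mul' _ _ ENNReal.ofReal_ne_top]
    refine lintegral_mono fun u => ?_
    by_cases hu : x - u ∈ Set.Icc 0 δ
    · rw [← mul_assoc]
      gcongr
      refine (hmono x (x - u) hu.1).trans ?_
      rw [sub_sub_cancel]
      gcongr
      exact hu.2
    · simp [tent_eq_zero hu]
  · rw [← hc (x + δ), ← lintegral_const_mul _ (hm _),
      ← lintegral_const_mul' _ _ ENNReal.ofReal_ne_top]
    refine lintegral_mono fun u => ?_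
    by_cases hu : x + δ - u ∈ Set.Icc 0 δ
    · rw [← mul_assoc]
      gcongr
      refine (hmono u (u - x) (by linarith [hu.2])).trans ?_
      rw [sub_sub_cancel]
      gcongr
      linarith [hu.1]
    · simp [tent_eq_zero hu]

/-- The implicit renewal theorem in additive form: a solution `r` of `r = g + r * ν` with `g`
integrable converges to `∫ g` divided by the mean of `ν`. The bound `hsmall` excludes a homogeneous
part growing like `exp (q x)`, and `hmono` replaces direct Riemann integrability of `g`. -/
lemma tendsto_implicit_renewal {ν : Measure ℝ} [IsProbabilityMeasure ν]
    (hν : Integrable (fun y => y) ν) (hm : 0 < ∫ y, y ∂ν)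
    (hna : ∀ a : ℝ, ¬ ∀ᵐ y ∂ν, ∃ n : ℤ, y = n * a) {s q : ℝ} (hs : 0 < s)
    (hq0 : 0 < q) (hρ1 : ∫⁻ y, ENNReal.ofReal (Real.exp (-(s * y))) ∂ν < 1)
    (hq : ∫⁻ y, ENNReal.ofReal (Real.exp (-(q * y))) ∂ν ≤ 1) {r : ℝ → ℝ≥0∞} (hr : Measurable r)
    (hrq : ∀ x, r x ≤ ENNReal.ofReal (Real.exp (q * x)))
    (hsmall : ∀ ε : ℝ≥0∞, 0 < ε → ∃ A : ℝ≥0∞, A ≠ ∞ ∧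
      ∀ x, r x ≤ A * ENNReal.ofReal (Real.exp (s * x)) + ε * ENNReal.ofReal (Real.exp (q * x)))
    (hmono : ∀ x y, 0 ≤ y → r x ≤ ENNReal.ofReal (Real.exp (q * y)) * r (x - y))
    (hg : Integrable fun x => (r x).toReal - (renewalOp ν r x).toReal) :
    Tendsto (fun x => (r x).toReal) atTop
      (𝓝 ((∫ x, ((r x).toReal - (renewalOp ν r x).toReal)) / ∫ y, y ∂ν)) := by
  set g : ℝ → ℝ := fun x => (r x).toReal - (renewalOp ν r x).toReal with hgdef
  set m := ∫ y, y ∂ν with hmdef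
  set C := (∫ x, g x) / m with hC
  have hrfin : ∀ x, r x ≠ ∞ := fun x => ne_top_of_le_ne_top ENNReal.ofReal_ne_top (hrq x)
  -- the smoothed solution converges, for each width of the smoothing kernel
  have hsmooth : ∀ δ : ℝ, 0 < δ → Tendsto (fun x =>
      (∫⁻ u, r u * ENNReal.ofReal (tent δ (x - u))).toReal / ∫ t, tent δ t) atTop (𝓝 C) := by
    intro δ hδ
    obtain ⟨B, hBtop, hB, hcont, hlim⟩ := potential_tent hν hna hs hρ1 hδ
    have hc := integral_tent_pos hδ
    have hrep := integral_mul_potential hs hq0 hρ1 hq hr hrq hsmall hg hδ hBtop hB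
    set V : ℝ → ℝ := fun x =>
      (potential ν (fun x => ENNReal.ofReal (tent δ x)) x).toReal with hV
    have hVlim : Tendsto V atTop (𝓝 ((∫ t, tent δ t) / m)) := by
      refine (hlim.div_const m).congr fun x => ?_
      field_simp
      rfl
    have h1 : Tendsto (fun x => ∫ u, g u * V (x - u)) atTop
        (𝓝 (∫ u, g u * ((∫ t, tent δ t) / m))) := by
      refine tendsto_integral_filter_of_dominated_convergence (fun u => |g u| * B.toReal)
        (Eventually.of_forall fun x => ?_) (Eventually.of_forall fun x => Eventually.of_forall
        fun u => ?_) (hg.abs.mul_const _) (Eventually.of_forall fun u => ?_)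
      · exact hg.aestronglyMeasurable.mul
          (hcont.comp (continuous_const.sub continuous_id)).aestronglyMeasurable
      · rw [norm_mul, Real.norm_eq_abs]
        gcongr
        rw [Real.norm_of_nonneg ENNReal.toReal_nonneg]
        exact ENNReal.toReal_mono hBtop (hB _)
      · exact (hVlim.comp (tendsto_atTop_add_const_right atTop (-u) tendsto_id)).const_mul _
    have h2 := h1.div_const (∫ t, tent δ t)
    rw [integral_mul_const] at h2
    have h3 : (∫ u, g u) * ((∫ t, tent δ t) / m) / (∫ t, tent δ t) = C := by
      rw [hC]; field_simp
    rw [h3] at h2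
    exact h2.congr fun x => by rw [← hrep x]
  have hbounds : ∀ δ : ℝ, 0 < δ → ∀ᶠ x in atTop,
      Real.exp (-(q * δ)) * (C - δ) ≤ (r x).toReal ∧
      (r x).toReal ≤ Real.exp (q * δ) * (C + δ) := by
    intro δ hδ
    have hc := integral_tent_pos hδ
    have e1 := (hsmooth δ hδ).eventually (gt_mem_nhds (show C < C + δ by linarith))
    have e2 := ((hsmooth δ hδ).comp (tendsto_atTop_add_const_right atTop δ tendsto_id)).eventually
      (lt_mem_nhds (show C - δ < C by linarith))
    filter_upwards [e1, e2] with x hx1 hx2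
    simp only [Function.comp, id] at hx2
    obtain ⟨s1, s2⟩ := tent_sandwich hq0 hmono (δ := δ) x
    have hfin : ∫⁻ u, r u * ENNReal.ofReal (tent δ (x - u)) ≠ ∞ := by
      refine ne_top_of_le_ne_top (lintegral_exp_mul_tent_ne_top hq0 hδ x)
        (lintegral_mono fun u => ?_)
      gcongr
      exact hrq u
    have t1 := ENNReal.toReal_mono (ENNReal.mul_ne_top ENNReal.ofReal_ne_top hfin) s1
    have t2 := ENNReal.toReal_mono (ENNReal.mul_ne_top ENNReal.ofReal_ne_top
      (ENNReal.mul_ne_top (hrfin x) ENNReal.ofReal_ne_top)) s2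
    simp only [ENNReal.toReal_mul, ENNReal.toReal_ofReal (Real.exp_pos _).le,
      ENNReal.toReal_ofReal hc.le] at t1 t2
    rw [div_lt_iff₀ hc] at hx1
    rw [lt_div_iff₀ hc] at hx2
    have hE := Real.exp_pos (q * δ)
    constructor
    · rw [Real.exp_neg, inv_mul_le_iff₀ hE]
      refine le_of_mul_le_mul_right ?_ hc
      linarith
    · refine le_of_mul_le_mul_right ?_ hc
      nlinarith
  have l1 : Tendsto (fun δ : ℝ => Real.exp (-(q * δ)) * (C - δ)) (𝓝[>] 0) (𝓝 C) := by
    have : Continuous fun δ : ℝ => Real.exp (-(q * δ)) * (C - δ) := by fun_prop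
    simpa using (this.tendsto 0).mono_left nhdsWithin_le_nhds
  have l2 : Tendsto (fun δ : ℝ => Real.exp (q * δ) * (C + δ)) (𝓝[>] 0) (𝓝 C) := by
    have : Continuous fun δ : ℝ => Real.exp (q * δ) * (C + δ) := by fun_prop
    simpa using (this.tendsto 0).mono_left nhdsWithin_le_nhds
  rw [tendsto_order]
  constructor
  · intro a ha
    obtain ⟨δ, h1, h2⟩ := ((l1.eventually (lt_mem_nhds ha)).and self_mem_nhdsWithin).exists
    filter_upwards [hbounds δ h2] with x hx
    exact h1.trans_le hx.1
  · intro a ha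
    obtain ⟨δ, h1, h2⟩ := ((l2.eventually (gt_mem_nhds ha)).and self_mem_nhdsWithin).exists
    filter_upwards [hbounds δ h2] with x hx
    exact hx.2.trans_lt h1

/-! ### The exponential tilt -/

lemma sub_one_le_mul_log {y : ℝ} (hy : 0 ≤ y) : y - 1 ≤ y * Real.log y := by
  rcases hy.eq_or_lt with rfl | hy
  · simp
  · have h := mul_le_mul_of_nonneg_left (Real.one_sub_inv_le_log_of_pos hy) hy.le
    rw [mul_sub, mul_inv_cancel₀ hy.ne'] at h
    linarith

lemma eq_one_of_mul_log_eq {y : ℝ} (hy : 0 ≤ y) (h : y * Real.log y = y - 1) : y = 1 := by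
  by_contra hne
  rcases hy.eq_or_lt with rfl | hy
  · simp at h
  · have h1 := Real.log_lt_sub_one_of_pos (inv_pos.2 hy) (by simpa using hne)
    rw [Real.log_inv] at h1
    have h2 := mul_lt_mul_of_pos_left h1 hy
    rw [mul_sub, mul_inv_cancel₀ hy.ne'] at h2
    linarith

section
variable {Ω : Type*} [MeasureSpace Ω]

lemma rpow_mul_exp_log {m : ℝ} (hm : 0 < m) (q c x : ℝ) :
    m ^ q * Real.exp (c * (x - Real.log m)) = m ^ (q - c) * Real.exp (c * x) := by
  rw [Real.rpow_def_of_pos hm, Real.rpow_def_of_pos hm, ← Real.exp_add, ← Real.exp_add]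
  ring_nf

lemma integrable_rpow {M : Ω → ℝ} (hM : Measurable M) (hMnn : ∀ ω, 0 ≤ M ω) {q : ℝ}
    (h1 : ∫⁻ ω, ENNReal.ofReal (M ω ^ q) = 1) :
    Integrable (fun ω => M ω ^ q) ∧ ∫ ω, M ω ^ q = 1 := by
  have hi : Integrable (fun ω => M ω ^ q) := by
    refine ⟨(hM.pow_const q).aestronglyMeasurable, ?_⟩
    rw [hasFiniteIntegral_iff_ofReal (Eventually.of_forall fun ω => Real.rpow_nonneg (hMnn ω) q),
      h1]
    exact ENNReal.one_lt_top
  refine ⟨hi, ?_⟩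
  rw [integral_eq_lintegral_of_nonneg_ae
    (Eventually.of_forall fun ω => Real.rpow_nonneg (hMnn ω) q) hi.aestronglyMeasurable, h1]
  simp

lemma mul_log_rpow {m : ℝ} (hm : 0 ≤ m) {q : ℝ} (hq : 0 < q) :
    m ^ q * Real.log (m ^ q) = q * (m ^ q * Real.log m) := by
  rcases hm.eq_or_lt with rfl | hm
  · simp [Real.zero_rpow hq.ne']
  · rw [Real.log_rpow hm]; ring

lemma not_ae_rpow_eq_one {M : Ω → ℝ} (hMnn : ∀ ω, 0 ≤ M ω) {q : ℝ} (hq : 0 < q)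
    (h3 : ¬ ∃ h > (0:ℝ), ∀ᵐ ω, 0 < M ω → ∃ n : ℤ, Real.log (M ω) = n * h) :
    ¬ ∀ᵐ ω, M ω ^ q = 1 := by
  intro h
  refine h3 ⟨1, one_pos, ?_⟩
  filter_upwards [h] with ω hω _
  refine ⟨0, ?_⟩
  have hl : q * (M ω ^ q * Real.log (M ω)) = 0 := by
    rw [← mul_log_rpow (hMnn ω) hq, hω, Real.log_one, mul_zero]
  rw [hω, one_mul] at hl
  simpa using (mul_eq_zero.1 hl).resolve_left hq.ne'

lemma integrable_rpow_mul_log [IsProbabilityMeasure (ℙ : Measure Ω)]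
    {M : Ω → ℝ} (hM : Measurable M) (hMnn : ∀ ω, 0 ≤ M ω) {q : ℝ}
    (hq : 0 < q) (h2 : ∫⁻ ω, ENNReal.ofReal (M ω ^ q * Real.log (M ω)) < ⊤) :
    Integrable (fun ω => M ω ^ q * Real.log (M ω)) := by
  have hm : Measurable fun ω => M ω ^ q * Real.log (M ω) :=
    (hM.pow_const q).mul (Real.measurable_log.comp hM)
  refine Integrable.mono'
    (g := fun ω => (ENNReal.ofReal (M ω ^ q * Real.log (M ω))).toReal + 1 / q)
    ((integrable_toReal_of_lintegral_ne_top hm.ennreal_ofReal.aemeasurable h2.ne).add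
      (integrable_const _)) hm.aestronglyMeasurable (Eventually.of_forall fun ω => ?_)
  have h := sub_one_le_mul_log (Real.rpow_nonneg (hMnn ω) q)
  rw [mul_log_rpow (hMnn ω) hq] at h
  have h' := Real.rpow_nonneg (hMnn ω) q
  have hlow : -(1 / q) ≤ M ω ^ q * Real.log (M ω) := by
    rw [neg_le, div_eq_mul_inv, one_mul, ← one_div, le_div_iff₀ hq]
    linarith
  have hq' : 0 < 1 / q := by positivity
  rw [ENNReal.toReal_ofReal', Real.norm_eq_abs, abs_le]
  constructor
  · linarith [le_max_right (M ω ^ q * Real.log (M ω)) 0]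
  · linarith [le_max_left (M ω ^ q * Real.log (M ω)) 0]

/-- The drift is positive: this is strict Jensen for `y log y`, in the form
`y log y ≥ y - 1` applied to `y = M ^ q`, which has mean one. -/
lemma integral_rpow_mul_log_pos [IsProbabilityMeasure (ℙ : Measure Ω)]
    {M : Ω → ℝ} (hM : Measurable M) (hMnn : ∀ ω, 0 ≤ M ω) {q : ℝ}
    (hq : 0 < q) (h1 : ∫⁻ ω, ENNReal.ofReal (M ω ^ q) = 1)
    (hint : Integrable (fun ω => M ω ^ q * Real.log (M ω)))
    (hne : ¬ ∀ᵐ ω, M ω ^ q = 1) : 0 < ∫ ω, M ω ^ q * Real.log (M ω) := by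
  obtain ⟨hi, he⟩ := integrable_rpow hM hMnn h1
  by_contra hcon
  have hD0 : ∀ ω, 0 ≤ q * (M ω ^ q * Real.log (M ω)) - (M ω ^ q - 1) := fun ω => by
    have := sub_one_le_mul_log (Real.rpow_nonneg (hMnn ω) q)
    rw [mul_log_rpow (hMnn ω) hq] at this
    linarith
  have hDi : Integrable fun ω => q * (M ω ^ q * Real.log (M ω)) - (M ω ^ q - 1) :=
    (hint.const_mul q).sub (hi.sub (integrable_const 1))
  have hDe : ∫ ω, (q * (M ω ^ q * Real.log (M ω)) - (M ω ^ q - 1)) =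
      q * ∫ ω, M ω ^ q * Real.log (M ω) := by
    have i1 : Integrable fun ω => M ω ^ q - 1 := hi.sub (integrable_const 1)
    rw [integral_sub (hint.const_mul q) i1, integral_const_mul,
      integral_sub hi (integrable_const 1), he]
    simp
  have hz : ∫ ω, (q * (M ω ^ q * Real.log (M ω)) - (M ω ^ q - 1)) = 0 := by
    refine le_antisymm ?_ (integral_nonneg hD0)
    rw [hDe]
    exact mul_nonpos_of_nonneg_of_nonpos hq.le (not_lt.1 hcon)
  rw [integral_eq_zero_iff_of_nonneg hD0 hDi] at hz
  refine hne ?_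
  filter_upwards [hz] with ω hω
  refine eq_one_of_mul_log_eq (Real.rpow_nonneg (hMnn ω) q) ?_
  rw [mul_log_rpow (hMnn ω) hq]
  simp only [Pi.zero_apply] at hω
  linarith

/-- The moment of order `q / 2` is less than one, because `(M ^ (q / 2) - 1) ^ 2` has positive
mean. -/
lemma lintegral_rpow_half_lt [IsProbabilityMeasure (ℙ : Measure Ω)]
    {M : Ω → ℝ} (hM : Measurable M) (hMnn : ∀ ω, 0 ≤ M ω) {q : ℝ}
    (h1 : ∫⁻ ω, ENNReal.ofReal (M ω ^ q) = 1)
    (hne : ¬ ∀ᵐ ω, M ω ^ (q / 2) = 1) : ∫⁻ ω, ENNReal.ofReal (M ω ^ (q / 2)) < 1 := by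
  obtain ⟨hi, he⟩ := integrable_rpow hM hMnn h1
  have hsq : ∀ ω, (M ω ^ (q / 2)) ^ 2 = M ω ^ q := fun ω => by
    rw [← Real.rpow_natCast, ← Real.rpow_mul (hMnn ω)]
    congr 1
    push_cast
    ring
  have hZ0 : ∀ ω, 0 ≤ M ω ^ (q / 2) := fun ω => Real.rpow_nonneg (hMnn ω) _
  have hZi : Integrable fun ω => M ω ^ (q / 2) := by
    refine Integrable.mono' (hi.add (integrable_const 1))
      (hM.pow_const _).aestronglyMeasurable (Eventually.of_forall fun ω => ?_)
    rw [Real.norm_of_nonneg (hZ0 ω), Pi.add_apply, ← hsq]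
    nlinarith [sq_nonneg (M ω ^ (q / 2) - 1)]
  rw [← ofReal_integral_eq_lintegral_ofReal hZi (Eventually.of_forall hZ0),
    ENNReal.ofReal_lt_one]
  by_contra hcon
  have e : ∀ ω, (M ω ^ (q / 2) - 1) ^ 2 = M ω ^ q - 2 * M ω ^ (q / 2) + 1 := fun ω => by
    rw [← hsq]; ring
  have i1 : Integrable fun ω => M ω ^ q - 2 * M ω ^ (q / 2) := hi.sub (hZi.const_mul 2)
  have hSi : Integrable fun ω => (M ω ^ (q / 2) - 1) ^ 2 := by
    simp only [e]
    exact i1.add (integrable_const 1)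
  have hz : ∫ ω, (M ω ^ (q / 2) - 1) ^ 2 = 0 := by
    refine le_antisymm ?_ (integral_nonneg fun ω => sq_nonneg _)
    simp only [e]
    rw [integral_add i1 (integrable_const 1), integral_sub hi (hZi.const_mul 2),
      integral_const_mul, he]
    simp
    linarith
  rw [integral_eq_zero_iff_of_nonneg (fun ω => sq_nonneg _) hSi] at hz
  refine hne ?_
  filter_upwards [hz] with ω hω
  have := pow_eq_zero_iff (two_ne_zero) |>.1 hω
  linarith

/-- The law of `log M` under the probability `M ^ q dℙ`. The event `M = 0`, where `Real.log`
takes its conventional value `0`, has no mass under this probability. -/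
noncomputable def tiltedLaw (M : Ω → ℝ) (q : ℝ) : Measure ℝ :=
  ((ℙ : Measure Ω).withDensity fun ω => ENNReal.ofReal (M ω ^ q)).map fun ω => Real.log (M ω)

lemma lintegral_tiltedLaw {M : Ω → ℝ} (hM : Measurable M) (q : ℝ) {f : ℝ → ℝ≥0∞}
    (hf : Measurable f) :
    ∫⁻ y, f y ∂(tiltedLaw M q) = ∫⁻ ω, ENNReal.ofReal (M ω ^ q) * f (Real.log (M ω)) := by
  unfold tiltedLaw
  have hl : Measurable fun ω => Real.log (M ω) := Real.measurable_log.comp hM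
  rw [lintegral_map hf hl, lintegral_withDensity_eq_lintegral_mul _
    (hM.pow_const q).ennreal_ofReal (g := fun ω => f (Real.log (M ω))) (hf.comp hl)]
  rfl

lemma isProbabilityMeasure_tiltedLaw {M : Ω → ℝ} (hM : Measurable M) {q : ℝ}
    (h1 : ∫⁻ ω, ENNReal.ofReal (M ω ^ q) = 1) : IsProbabilityMeasure (tiltedLaw M q) := by
  constructor
  have := lintegral_tiltedLaw hM q (f := 1) measurable_one
  simpa [h1] using this

lemma tiltedLaw_mean {M : Ω → ℝ} (hM : Measurable M) (hMnn : ∀ ω, 0 ≤ M ω) {q : ℝ}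
    (hint : Integrable (fun ω => M ω ^ q * Real.log (M ω))) :
    Integrable (fun y => y) (tiltedLaw M q) ∧
      ∫ y, y ∂(tiltedLaw M q) = ∫ ω, M ω ^ q * Real.log (M ω) := by
  have hl : Measurable fun ω => Real.log (M ω) := Real.measurable_log.comp hM
  have hd : Measurable fun ω => ENNReal.ofReal (M ω ^ q) := (hM.pow_const q).ennreal_ofReal
  have hfin : ∀ᵐ ω, ENNReal.ofReal (M ω ^ q) < ⊤ :=
    Eventually.of_forall fun ω => ENNReal.ofReal_lt_top
  unfold tiltedLaw
  constructor
  · rw [integrable_map_measure (g := fun y => y) measurable_id'.aestronglyMeasurable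
      hl.aemeasurable,
      integrable_withDensity_iff_integrable_smul' hd hfin]
    refine hint.congr (Eventually.of_forall fun ω => ?_)
    simp [ENNReal.toReal_ofReal (Real.rpow_nonneg (hMnn ω) q)]
  · rw [integral_map (f := fun y => y) hl.aemeasurable measurable_id'.aestronglyMeasurable,
      integral_withDensity_eq_integral_toReal_smul hd hfin]
    refine integral_congr_ae (Eventually.of_forall fun ω => ?_)
    simp [ENNReal.toReal_ofReal (Real.rpow_nonneg (hMnn ω) q)]

lemma tiltedLaw_nonarithmetic {M : Ω → ℝ} (hM : Measurable M) {q : ℝ}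
    (h3 : ¬ ∃ h > (0:ℝ), ∀ᵐ ω, 0 < M ω → ∃ n : ℤ, Real.log (M ω) = n * h) (a : ℝ) :
    ¬ ∀ᵐ y ∂(tiltedLaw M q), ∃ n : ℤ, y = n * a := by
  intro h
  have hl : Measurable fun ω => Real.log (M ω) := Real.measurable_log.comp hM
  have h' := ae_of_ae_map hl.aemeasurable h
  rw [ae_withDensity_iff (hM.pow_const q).ennreal_ofReal] at h'
  have harith : ∀ᵐ ω, 0 < M ω → ∃ n : ℤ, Real.log (M ω) = n * a := by
    filter_upwards [h'] with ω hω hpos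
    exact hω (by simpa using Real.rpow_pos_of_pos hpos q)
  refine h3 ?_
  rcases lt_trichotomy a 0 with ha | rfl | ha
  · refine ⟨-a, by linarith, ?_⟩
    filter_upwards [harith] with ω hω hpos
    obtain ⟨n, hn⟩ := hω hpos
    exact ⟨-n, by rw [hn]; push_cast; ring⟩
  · refine ⟨1, one_pos, ?_⟩
    filter_upwards [harith] with ω hω hpos
    obtain ⟨n, hn⟩ := hω hpos
    exact ⟨0, by rw [hn]; simp⟩
  · exact ⟨a, ha, harith⟩

/-- Under the tilt the Laplace transform at `q / 2` is again a moment of order `q / 2`. -/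
lemma tiltedLaw_laplace_half {M : Ω → ℝ} (hM : Measurable M) (hMnn : ∀ ω, 0 ≤ M ω) {q : ℝ}
    (hq : 0 < q) : ∫⁻ y, ENNReal.ofReal (Real.exp (-(q / 2 * y))) ∂(tiltedLaw M q) =
      ∫⁻ ω, ENNReal.ofReal (M ω ^ (q / 2)) := by
  rw [lintegral_tiltedLaw hM q (by fun_prop)]
  refine lintegral_congr fun ω => ?_
  rw [← ENNReal.ofReal_mul (Real.rpow_nonneg (hMnn ω) q)]
  congr 1
  rcases (hMnn ω).eq_or_lt with h | h
  · rw [← h, Real.zero_rpow hq.ne', Real.zero_rpow (by positivity), zero_mul]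
  · have := rpow_mul_exp_log h q (q / 2) 0
    simp only [zero_sub, mul_neg, mul_zero, Real.exp_zero, mul_one] at this
    rw [this]
    congr 1
    ring

/-- The Laplace transform at `q` is `ℙ(M > 0)`. -/
lemma tiltedLaw_laplace [IsProbabilityMeasure (ℙ : Measure Ω)]
    {M : Ω → ℝ} (hM : Measurable M) (hMnn : ∀ ω, 0 ≤ M ω) {q : ℝ}
    (hq : 0 < q) : ∫⁻ y, ENNReal.ofReal (Real.exp (-(q * y))) ∂(tiltedLaw M q) ≤ 1 := by
  rw [lintegral_tiltedLaw hM q (by fun_prop)]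
  have : ∫⁻ _ : Ω, (1 : ℝ≥0∞) = 1 := by simp
  rw [← this]
  refine lintegral_mono fun ω => ?_
  rw [← ENNReal.ofReal_mul (Real.rpow_nonneg (hMnn ω) q)]
  refine ENNReal.ofReal_le_one.2 ?_
  rcases (hMnn ω).eq_or_lt with h | h
  · rw [← h, Real.zero_rpow hq.ne', zero_mul]; exact zero_le_one
  · have := rpow_mul_exp_log h q q 0
    simp only [zero_sub, mul_neg, mul_zero, Real.exp_zero, mul_one, sub_self,
      Real.rpow_zero] at this
    exact this.le

lemma antitone_tail (X : Ω → ℝ) : Antitone fun t : ℝ => (ℙ {ω | X ω > t} : ℝ≥0∞) :=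
  fun _ _ hab => measure_mono fun _ hω => lt_of_le_of_lt hab hω

/-- The rescaled tail `exp (q x) ℙ(R > exp x)`, in logarithmic scale. -/
noncomputable def scaledTail (R : Ω → ℝ) (q x : ℝ) : ℝ≥0∞ :=
  ENNReal.ofReal (Real.exp (q * x)) * ℙ {ω | R ω > Real.exp x}

lemma measurable_scaledTail (R : Ω → ℝ) (q : ℝ) : Measurable (scaledTail R q) := by
  have : Measurable fun x => (ℙ {ω | R ω > Real.exp x} : ℝ≥0∞) :=
    (antitone_tail R).measurable.comp Real.measurable_exp
  unfold scaledTail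
  fun_prop

lemma scaledTail_le [IsProbabilityMeasure (ℙ : Measure Ω)] (R : Ω → ℝ) (q x : ℝ) :
    scaledTail R q x ≤ ENNReal.ofReal (Real.exp (q * x)) :=
  mul_le_of_le_one_right' prob_le_one

lemma scaledTail_mono (R : Ω → ℝ) (q x y : ℝ) (hy : 0 ≤ y) :
    scaledTail R q x ≤ ENNReal.ofReal (Real.exp (q * y)) * scaledTail R q (x - y) := by
  unfold scaledTail
  rw [← mul_assoc, ← ENNReal.ofReal_mul (Real.exp_pos _).le, ← Real.exp_add,
    show q * y + q * (x - y) = q * x by ring]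
  gcongr
  linarith

/-- Beyond a large `n` the tail is at most `ε`, which gives the rate `q` with constant `ε`; before
`n` the rate `q / 2` suffices at the cost of a large constant. -/
lemma scaledTail_small [IsProbabilityMeasure (ℙ : Measure Ω)]
    {R : Ω → ℝ} (hR : Measurable R) {q : ℝ} (hq : 0 < q) (ε : ℝ≥0∞)
    (hε : 0 < ε) : ∃ A : ℝ≥0∞, A ≠ ∞ ∧ ∀ x, scaledTail R q x ≤
      A * ENNReal.ofReal (Real.exp (q / 2 * x)) + ε * ENNReal.ofReal (Real.exp (q * x)) := by
  have hlim : Tendsto (fun n : ℕ => (ℙ {ω | R ω > Real.exp n} : ℝ≥0∞)) atTop (𝓝 0) := by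
    have h := tendsto_measure_iInter_atTop (μ := (ℙ : Measure Ω))
      (s := fun n : ℕ => {ω | R ω > Real.exp n})
      (fun n => (measurableSet_lt measurable_const hR).nullMeasurableSet)
      (fun a b hab ω hω => lt_of_le_of_lt (Real.exp_le_exp.2 (Nat.cast_le.2 hab)) hω)
      ⟨0, measure_ne_top _ _⟩
    have he : ⋂ n : ℕ, {ω | R ω > Real.exp n} = ∅ := by
      refine Set.eq_empty_of_forall_notMem fun ω hω => ?_
      obtain ⟨n, hn⟩ := exists_nat_gt (R ω)
      have := Set.mem_iInter.1 hω n
      simp only [Set.mem_ofPred_eq] at this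
      linarith [Real.add_one_le_exp (n : ℝ)]
    rwa [he, measure_empty] at h
  obtain ⟨n, hn⟩ := (hlim.eventually (gt_mem_nhds hε)).exists
  refine ⟨ENNReal.ofReal (Real.exp (q / 2 * n)), ENNReal.ofReal_ne_top, fun x => ?_⟩
  rcases le_total (n : ℝ) x with hx | hx
  · refine le_add_left ?_
    unfold scaledTail
    rw [mul_comm]
    gcongr
    exact (antitone_tail R (Real.exp_le_exp.2 hx)).trans hn.le
  · refine le_add_right ((scaledTail_le R q x).trans ?_)
    rw [← ENNReal.ofReal_mul (Real.exp_pos _).le, ← Real.exp_add]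
    gcongr
    nlinarith

/-- Convolving the rescaled tail of `R` with the tilted law gives the rescaled tail of `M * R`. -/
lemma renewalOp_scaledTail [IsProbabilityMeasure (ℙ : Measure Ω)]
    {M R : Ω → ℝ} (hM : Measurable M) (hR : Measurable R)
    (hMnn : ∀ ω, 0 ≤ M ω) (hInd : IndepFun M R) {q : ℝ} (hq : 0 < q) (x : ℝ) :
    renewalOp (tiltedLaw M q) (scaledTail R q) x =
      ENNReal.ofReal (Real.exp (q * x)) * ℙ {ω | M ω * R ω > Real.exp x} := by
  unfold renewalOp
  rw [lintegral_tiltedLaw hM q (f := fun y => scaledTail R q (x - y))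
    ((measurable_scaledTail R q).comp (measurable_const.sub measurable_id))]
  have hpt : ∀ ω, ENNReal.ofReal (M ω ^ q) * scaledTail R q (x - Real.log (M ω)) =
      ENNReal.ofReal (Real.exp (q * x)) * ℙ {ω' | M ω * R ω' > Real.exp x} := by
    intro ω
    rcases (hMnn ω).eq_or_lt with h | h
    · have he : {ω' : Ω | M ω * R ω' > Real.exp x} = ∅ := by
        refine Set.eq_empty_of_forall_notMem fun ω' hω' => ?_
        simp only [Set.mem_ofPred_eq, ← h, zero_mul] at hω'
        exact lt_asymm hω' (Real.exp_pos x)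
      rw [he, ← h, Real.zero_rpow hq.ne']
      simp
    · unfold scaledTail
      rw [← mul_assoc, ← ENNReal.ofReal_mul (Real.rpow_nonneg h.le q), rpow_mul_exp_log h, sub_self,
        Real.rpow_zero, one_mul]
      congr 3
      ext ω'
      simp only [gt_iff_lt]
      rw [Real.exp_sub, Real.exp_log h, div_lt_iff₀' h]
  simp only [hpt]
  set S : Set (ℝ × ℝ) := {p | p.1 * p.2 > Real.exp x} with hS
  have hSm : MeasurableSet S :=
    measurableSet_lt measurable_const (measurable_fst.mul measurable_snd)
  have hind := (indepFun_iff_map_prod_eq_prod_map_map hM.aemeasurable hR.aemeasurable).1 hInd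
  have h1 : ℙ {ω | M ω * R ω > Real.exp x} = Measure.map (fun ω => (M ω, R ω)) ℙ S := by
    rw [Measure.map_apply (hM.prodMk hR) hSm]
    rfl
  rw [lintegral_const_mul' _ _ ENNReal.ofReal_ne_top, h1, hind, Measure.prod_apply hSm,
    lintegral_map (measurable_measure_prodMk_left hSm) hM]
  congr 1
  refine lintegral_congr fun ω => ?_
  rw [Measure.map_apply hR (measurable_prodMk_left hSm)]
  rfl

end

/-- The change of variables `t = exp x` on the half-line. -/
lemma integral_comp_exp (q : ℝ) (d : ℝ → ℝ)
    (hd : IntegrableOn (fun t => d t * t ^ (q - 1)) (Set.Ioi 0)) :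
    Integrable (fun x => Real.exp (q * x) * d (Real.exp x)) ∧
      ∫ x, Real.exp (q * x) * d (Real.exp x) = ∫ t in Set.Ioi 0, d t * t ^ (q - 1) := by
  have himg : Real.exp '' Set.univ = Set.Ioi 0 := by rw [Set.image_univ, Real.range_exp]
  have hder : ∀ x ∈ Set.univ, HasDerivWithinAt Real.exp (Real.exp x) Set.univ x := fun x _ =>
    (Real.hasDerivAt_exp x).hasDerivWithinAt
  have hpt : ∀ x, |Real.exp x| • (d (Real.exp x) * Real.exp x ^ (q - 1)) =
      Real.exp (q * x) * d (Real.exp x) := by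
    intro x
    rw [abs_of_pos (Real.exp_pos x), smul_eq_mul, ← Real.exp_mul, mul_left_comm, ← Real.exp_add,
      mul_comm]
    ring_nf
  constructor
  · rw [← himg, integrableOn_image_iff_integrableOn_abs_deriv_smul MeasurableSet.univ hder
      Real.exp_injective.injOn] at hd
    simpa only [hpt, integrableOn_univ] using hd
  · rw [← himg, integral_image_eq_integral_abs_deriv_smul MeasurableSet.univ hder
      Real.exp_injective.injOn]
    simp only [hpt, setIntegral_univ]

/-! ### The implicit renewal theorem -/

/-- Goldie's implicit renewal theorem: Let `M, R` be independent
nonnegative random variables, `q > 0`, with (i) `E[M^q] = 1`; (ii) the positive part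
of `E[M^q log M]` finite; (iii) the conditional law of `log M` given `{M > 0}`
non-arithmetic; (iv) `∫₀^∞ |P(R > t) − P(MR > t)|·t^{q−1} dt < ∞`. Then
`E[M^q log M] ∈ (0, ∞)` and `t^q·P(R > t) → C` as `t → ∞`, where
`C = (∫₀^∞ (P(R > t) − P(MR > t))·t^{q−1} dt) / E[M^q log M]`. -/
theorem stmt_12 {Ω : Type*} [MeasureSpace Ω] [IsProbabilityMeasure (ℙ : Measure Ω)]
    (M R : Ω → ℝ) (hMmeas : Measurable M) (hRmeas : Measurable R)
    (hMnn : ∀ ω, 0 ≤ M ω) (hRnn : ∀ ω, 0 ≤ R ω)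
    (hInd : IndepFun M R)
    (q : ℝ) (hq : 0 < q)
    (h1 : ∫⁻ ω, ENNReal.ofReal (M ω ^ q) = 1)
    (h2 : ∫⁻ ω, ENNReal.ofReal (M ω ^ q * Real.log (M ω)) < ⊤)
    (h3 : ¬ ∃ h > (0:ℝ), ∀ᵐ ω, 0 < M ω → ∃ n : ℤ, Real.log (M ω) = n * h)
    (h4 : ∫⁻ t in Set.Ioi (0:ℝ),
        ENNReal.ofReal
          (|(ℙ {ω | R ω > t}).toReal - (ℙ {ω | M ω * R ω > t}).toReal| * t ^ (q - 1))
        < ⊤) :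
    Integrable (fun ω => M ω ^ q * Real.log (M ω)) ∧
    0 < ∫ ω, M ω ^ q * Real.log (M ω) ∧
    Tendsto (fun t : ℝ => t ^ q * (ℙ {ω | R ω > t}).toReal) atTop
      (nhds
        ((∫ t in Set.Ioi (0:ℝ),
            ((ℙ {ω | R ω > t}).toReal - (ℙ {ω | M ω * R ω > t}).toReal) * t ^ (q - 1)) /
          ∫ ω, M ω ^ q * Real.log (M ω))) := by
  have hint := integrable_rpow_mul_log hMmeas hMnn hq h2
  have hmpos := integral_rpow_mul_log_pos hMmeas hMnn hq h1 hint
    (not_ae_rpow_eq_one hMnn hq h3)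
  refine ⟨hint, hmpos, ?_⟩
  have hprob := isProbabilityMeasure_tiltedLaw hMmeas h1
  obtain ⟨hνi, hνe⟩ := tiltedLaw_mean hMmeas hMnn hint
  set d : ℝ → ℝ := fun t => (ℙ {ω | R ω > t}).toReal - (ℙ {ω | M ω * R ω > t}).toReal with hd
  have hdm : Measurable d :=
    (antitone_tail R).measurable.ennreal_toReal.sub
      (antitone_tail fun ω => M ω * R ω).measurable.ennreal_toReal
  have hdi : IntegrableOn (fun t => d t * t ^ (q - 1)) (Set.Ioi 0) := by
    refine ⟨(hdm.mul (measurable_id.pow_const _)).aestronglyMeasurable, ?_⟩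
    rw [hasFiniteIntegral_iff_norm]
    refine lt_of_eq_of_lt (setLIntegral_congr_fun measurableSet_Ioi fun t ht => ?_) h4
    rw [Real.norm_eq_abs, abs_mul, abs_of_nonneg (Real.rpow_nonneg (le_of_lt ht) _)]
  obtain ⟨hgi, hge⟩ := integral_comp_exp q d hdi
  have hg : ∀ x, (scaledTail R q x).toReal -
      (renewalOp (tiltedLaw M q) (scaledTail R q) x).toReal =
      Real.exp (q * x) * d (Real.exp x) := by
    intro x
    rw [renewalOp_scaledTail hMmeas hRmeas hMnn hInd hq, scaledTail, ENNReal.toReal_mul,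
      ENNReal.toReal_mul, ENNReal.toReal_ofReal (Real.exp_pos _).le, hd]
    ring
  have hmain := tendsto_implicit_renewal hνi (hνe ▸ hmpos)
    (tiltedLaw_nonarithmetic hMmeas h3) (s := q / 2) (by positivity) hq
    (by
      rw [tiltedLaw_laplace_half hMmeas hMnn hq]
      exact lintegral_rpow_half_lt hMmeas hMnn h1
        (not_ae_rpow_eq_one hMnn (by positivity) h3))
    (tiltedLaw_laplace hMmeas hMnn hq) (measurable_scaledTail R q) (scaledTail_le R q)
    (scaledTail_small hRmeas hq) (scaledTail_mono R q) (by simpa only [hg] using hgi)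
  simp only [hg] at hmain
  rw [hge, hνe] at hmain
  refine (hmain.comp Real.tendsto_log_atTop).congr' ?_
  filter_upwards [eventually_gt_atTop 0] with t ht
  rw [Function.comp, scaledTail, ENNReal.toReal_mul, ENNReal.toReal_ofReal (Real.exp_pos _).le,
    Real.exp_log ht, Real.rpow_def_of_pos ht, mul_comm q]
end
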